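/- For each r ∈ ℕ there is a constant R = R(r, K, C) such that if M_N ≥ R ln V_N for all N, then S_N obeys the Edgeworth expansion of order r in a conditionally stable way. In particular, if lim_{N→∞} M_N / ln V_N = ∞, then S_N obeys Edgeworth expansions of all orders. -/

import Mathlib

open MeasureTheory ProbabilityTheory Filter Finset
open scoped ENNReal Topology

noncomputable section

namespace EdgeworthMC

variable {Ω E : Type*} [MeasurableSpace Ω] [MeasurableSpace E]

/-- The standard Gaussian density `𝔤(u) = (2π)^{-1/2} e^{-u²/2}`. -/
def gaussDensity (u : ℝ) : ℝ := (Real.sqrt (2 * Real.pi))⁻¹ * Real.exp (-u ^ 2 / 2)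

/-- `UEChain μ X κ C` : the process `X` is a Markov chain (with respect to the probability
measure `μ`) with transition kernels `κ n` from the state at time `n` to the state at time
`n+1`, and the chain is uniformly elliptic with ellipticity constant `C`:
`C⁻¹ ℙ(X_{n+1} ∈ A) ≤ ℙ(X_{n+1} ∈ A | X_n = x) ≤ C ℙ(X_{n+1} ∈ A)` for a.e. `x`. -/
def UEChain (μ : Measure Ω) (X : ℕ → Ω → E) (κ : ℕ → Kernel E E) (C : ℝ) : Prop :=
  IsProbabilityMeasure μ ∧
  (∀ n, Measurable (X n)) ∧
  (∀ n, IsMarkovKernel (κ n)) ∧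
  (∀ n (A : Set E), MeasurableSet A →
      (μ[fun ω => A.indicator (fun _ => (1 : ℝ)) (X (n + 1) ω) |
          ⨆ i : Fin (n + 1), MeasurableSpace.comap (X i) (inferInstance : MeasurableSpace E)]
        =ᵐ[μ] fun ω => (κ n (X n ω) A).toReal)) ∧
  (∀ n (A : Set E), MeasurableSet A → ∀ᵐ ω ∂μ,
      κ n (X n ω) A ≤ ENNReal.ofReal C * Measure.map (X (n + 1)) μ A ∧
      Measure.map (X (n + 1)) μ A ≤ ENNReal.ofReal C * κ n (X n ω) A)

/-- Partial sums `S_N = ∑_{n=1}^N f_n(X_n)`. -/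
def S (X : ℕ → Ω → E) (f : ℕ → E → ℤ) (N : ℕ) (ω : Ω) : ℤ :=
  ∑ n ∈ Finset.Icc 1 N, f n (X n ω)

/-- `V_N = Var(S_N)`. -/
def VN (μ : Measure Ω) (X : ℕ → Ω → E) (f : ℕ → E → ℤ) (N : ℕ) : ℝ :=
  variance (fun ω => ((S X f N ω : ℝ))) μ

/-- `σ_N = √V_N`. -/
def sigN (μ : Measure Ω) (X : ℕ → Ω → E) (f : ℕ → E → ℤ) (N : ℕ) : ℝ :=
  Real.sqrt (VN μ X f N)

/-- `a_N = 𝔼(S_N)`. -/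
def meanS (μ : Measure Ω) (X : ℕ → Ω → E) (f : ℕ → E → ℤ) (N : ℕ) : ℝ :=
  ∫ ω, ((S X f N ω : ℝ)) ∂μ

/-- The second largest value among the (finitely many) values of `p`, counted with
multiplicity: it equals `min_j max_{j' ≠ j} p j'`. -/
def secondLargest {ι : Type*} (p : ι → ℝ) : ℝ := ⨅ j, sSup (p '' {j}ᶜ)

/-- `q_n(m)` : the second largest value among `ℙ(Y_n ≡ j mod m)`, `j = 0,…,m-1`. -/
def qres (μ : Measure Ω) (X : ℕ → Ω → E) (f : ℕ → E → ℤ) (n m : ℕ) : ℝ :=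
  secondLargest (fun j : ZMod m => (μ {ω | ((f n (X n ω) : ZMod m)) = j}).toReal)

/-- `M_N = min_{2 ≤ m ≤ 2K} ∑_{n=1}^N q_n(m)`. -/
def MN (μ : Measure Ω) (X : ℕ → Ω → E) (f : ℕ → E → ℤ) (K N : ℕ) : ℝ :=
  sInf ((fun m => ∑ n ∈ Finset.Icc 1 N, qres μ X f n m) '' (Set.Icc 2 (2 * K)))

/-- `S_N` obeys the Edgeworth expansion of order `r` : there are polynomials `P_{b,N}`,
with coefficients uniformly bounded in `N` and degrees not depending on `N`, such that
uniformly in `k ∈ ℤ`,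
`ℙ(S_N = k) = ∑_{b=1}^r σ_N^{-b} P_{b,N}(k_N) 𝔤(k_N) + o(σ_N^{-r})`
where `k_N = (k - 𝔼 S_N)/σ_N`. -/
def Edgeworth (μ : Measure Ω) (X : ℕ → Ω → E) (f : ℕ → E → ℤ) (r : ℕ) : Prop :=
  ∃ (D : ℕ) (Cb : ℝ) (P : ℕ → ℕ → Polynomial ℝ),
    (∀ b N, (P b N).natDegree ≤ D) ∧
    (∀ b N i, |(P b N).coeff i| ≤ Cb) ∧
    ∀ ε > 0, ∃ N₀, ∀ N ≥ N₀, ∀ k : ℤ,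
      |(μ {ω | S X f N ω = k}).toReal -
          ∑ b ∈ Finset.Icc 1 r, (sigN μ X f N)⁻¹ ^ b *
            (P b N).eval (((k : ℝ) - meanS μ X f N) / sigN μ X f N) *
            gaussDensity (((k : ℝ) - meanS μ X f N) / sigN μ X f N)|
        ≤ ε * (sigN μ X f N)⁻¹ ^ r

/-- The σ-algebra generated by `X_{j 1}, …, X_{j ℓ}`. -/
def sigmaOf (X : ℕ → Ω → E) {ℓ : ℕ} (j : Fin ℓ → ℕ) : MeasurableSpace Ω :=
  ⨆ i : Fin ℓ, MeasurableSpace.comap (X (j i)) (inferInstance : MeasurableSpace E)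

/-- Conditional probability of the event `s` given the σ-algebra `m`. -/
def condProb (μ : Measure Ω) (m : MeasurableSpace Ω) (s : Set Ω) : Ω → ℝ :=
  μ[s.indicator (fun _ => (1 : ℝ)) | m]

/-- `S_N` obeys the Edgeworth expansion of order `r` in a conditionally stable way:
for every `ℓ`, the order `r` Edgeworth expansion holds for the conditional law of `S_N`
given `X_{j_1},…,X_{j_ℓ}`, with error term `o_ℓ(σ_N^{-r})` and polynomial coefficient
bounds depending only on `ℓ` (and `r`), uniformly over all choices of indices
`1 ≤ j_1,…,j_ℓ ≤ N`. -/
def CondStableEdgeworth (μ : Measure Ω) (X : ℕ → Ω → E) (f : ℕ → E → ℤ) (r : ℕ) : Prop :=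
  ∀ ℓ : ℕ, ∃ (D : ℕ) (Cb : ℝ), ∀ ε > 0, ∃ N₀, ∀ N ≥ N₀,
    ∀ j : Fin ℓ → ℕ, (∀ i, j i ∈ Finset.Icc 1 N) →
      ∃ P : ℕ → Ω → Polynomial ℝ,
        (∀ b ω, (P b ω).natDegree ≤ D) ∧
        (∀ b ω i, |(P b ω).coeff i| ≤ Cb) ∧
        ∀ᵐ ω ∂μ, ∀ k : ℤ,
          |condProb μ (sigmaOf X j) {ω' | S X f N ω' = k} ω -
              ∑ b ∈ Finset.Icc 1 r, (sigN μ X f N)⁻¹ ^ b *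
                (P b ω).eval (((k : ℝ) -
                    (μ[fun ω' => ((S X f N ω' : ℝ)) | sigmaOf X j]) ω) / sigN μ X f N) *
                gaussDensity (((k : ℝ) -
                    (μ[fun ω' => ((S X f N ω' : ℝ)) | sigmaOf X j]) ω) / sigN μ X f N)|
            ≤ ε * (sigN μ X f N)⁻¹ ^ r

/-- `t` is a resonant point: `t = 2πl/m` with `0 < m ≤ 2K`, `0 ≤ l < m`. -/
def IsResonant (K : ℕ) (t : ℝ) : Prop :=
  ∃ l m : ℕ, 0 < m ∧ m ≤ 2 * K ∧ l < m ∧ t = 2 * Real.pi * l / m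

/-- The conditional characteristic function `𝔼[e^{itS_N} | X_{j_1},…,X_{j_ℓ}]`. -/
def condChar (μ : Measure Ω) (X : ℕ → Ω → E) (f : ℕ → E → ℤ) (t : ℝ) (N : ℕ)
    {ℓ : ℕ} (j : Fin ℓ → ℕ) : Ω → ℂ :=
  μ[fun ω => Complex.exp (Complex.I * (t : ℂ) * ((S X f N ω : ℤ) : ℂ)) | sigmaOf X j]

end EdgeworthMC

/-!
The law of `S_N`, and likewise its conditional law given finitely many states, is the law of an
additive functional under a Gibbs measure built from the transition densities; conditioning
replaces the reference measure at finitely many sites by Dirac masses. Ellipticity makes the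
transfer operators twisted by `exp (z Y_n)` contract in the sense of Doeblin, for `z` in a fixed
complex disc. Hence the normalised Laplace transform of the law has a holomorphic logarithm on
that disc, of size `O(V_N)`, and freezing `ℓ` sites changes this logarithm only by `O(ℓ)`.
Expanding it at the origin gives the Edgeworth polynomials through Fourier inversion, with
Hermite polynomials as the transforms of monomials times Gaussians. At frequencies in `[η, π]`
the expansion is replaced by a bound: every such frequency is controlled by some modulus
`m ≤ 2K`, in that the characteristic function is at most `exp (-c ∑ q_n(m))` up to a factor
depending on `ℓ`. The hypothesis `M_N ≥ R ln V_N` turns this into a power of `σ_N` beyond the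
order of the expansion.
-/

namespace EdgeworthMC

/-! ### Taylor coefficients of bounded holomorphic functions -/

section Taylor

variable {G : Type*} [NormedAddCommGroup G] [NormedSpace ℂ G]

/-- The `q`-th Taylor coefficient of `F` at `c`. -/
def taylorCoeff (F : ℂ → G) (c : ℂ) (q : ℕ) : G :=
  (q.factorial : ℂ)⁻¹ • iteratedDeriv q F c

variable [CompleteSpace G] {F : ℂ → G} {c : ℂ} {δ M : ℝ}

theorem norm_taylorCoeff_le (hδ : 0 < δ) (hF : DifferentiableOn ℂ F (Metric.ball c δ))
    (hM : ∀ z ∈ Metric.ball c δ, ‖F z‖ ≤ M) (q : ℕ) :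
    ‖taylorCoeff F c q‖ ≤ M / (δ / 2) ^ q := by
  have hcl : Metric.closedBall c (δ / 2) ⊆ Metric.ball c δ :=
    Metric.closedBall_subset_ball (by linarith)
  have hq : (0 : ℝ) < q.factorial := by exact_mod_cast q.factorial_pos
  rw [taylorCoeff, norm_smul, norm_inv, Complex.norm_natCast, inv_mul_le_iff₀ hq, ← mul_div_assoc]
  exact Complex.norm_iteratedDeriv_le_of_forall_mem_sphere_norm_le q (by linarith)
    (hF.diffContOnCl_ball hcl) fun z hz => hM z (hcl (Metric.sphere_subset_closedBall hz))

theorem hasSum_taylorCoeff (hF : DifferentiableOn ℂ F (Metric.ball c δ)) {z : ℂ}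
    (hz : z ∈ Metric.ball c δ) :
    HasSum (fun q => (z - c) ^ q • taylorCoeff F c q) (F z) := by
  have h := Complex.hasSum_taylorSeries_on_ball hF hz
  simp_rw [smul_comm ((_ : ℂ)⁻¹)] at h
  exact h

theorem norm_sub_sum_taylorCoeff_le (hδ : 0 < δ) (hF : DifferentiableOn ℂ F (Metric.ball c δ))
    (hM : ∀ z ∈ Metric.ball c δ, ‖F z‖ ≤ M) (n : ℕ) {z : ℂ} (hz : ‖z - c‖ ≤ δ / 4) :
    ‖F z - ∑ q ∈ range n, (z - c) ^ q • taylorCoeff F c q‖ ≤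
      2 * M * (‖z - c‖ / (δ / 2)) ^ n := by
  have hM0 : 0 ≤ M := (norm_nonneg _).trans (hM c (Metric.mem_ball_self hδ))
  set x := ‖z - c‖ / (δ / 2) with hx
  have hx0 : 0 ≤ x := by positivity
  have hx2 : x ≤ 1 / 2 := by rw [hx, div_le_iff₀ (by linarith)]; linarith
  have hterm (q : ℕ) : ‖(z - c) ^ q • taylorCoeff F c q‖ ≤ M * x ^ q := by
    rw [norm_smul, norm_pow]
    calc ‖z - c‖ ^ q * ‖taylorCoeff F c q‖ ≤ ‖z - c‖ ^ q * (M / (δ / 2) ^ q) := by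
          gcongr; exact norm_taylorCoeff_le hδ hF hM q
      _ = M * x ^ q := by rw [hx, div_pow ‖z - c‖]; ring
  have htail := (hasSum_nat_add_iff' n).2 (hasSum_taylorCoeff hF (z := z)
    (mem_ball_iff_norm.2 (by linarith)))
  have hgeom : HasSum (fun q : ℕ => M * x ^ n * x ^ q) (M * x ^ n * (1 - x)⁻¹) :=
    (hasSum_geometric_of_lt_one hx0 (by linarith)).mul_left _
  calc _ ≤ M * x ^ n * (1 - x)⁻¹ := by
        rw [← htail.tsum_eq]
        exact tsum_of_norm_bounded hgeom fun q => (hterm (q + n)).trans_eq (by ring)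
    _ ≤ M * x ^ n * 2 := by
        gcongr
        rw [inv_le_comm₀ (by linarith) two_pos]; linarith
    _ = _ := by ring

end Taylor

/-! ### Hermite polynomials and Gaussian Fourier integrals -/

section Hermite

theorem integrable_abs_pow_mul_exp_neg_mul_sq {c : ℝ} (hc : 0 < c) (n : ℕ) :
    Integrable (fun s : ℝ => |s| ^ n * Real.exp (-(c * s ^ 2))) := by
  have hn : (-1 : ℝ) < n := neg_one_lt_zero.trans_le n.cast_nonneg
  refine (integrable_rpow_mul_exp_neg_mul_sq hc hn).norm.congr (ae_of_all _ fun s => ?_)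
  simp [Real.rpow_natCast]

/-- The probabilists' Hermite polynomial `He_q`, with real coefficients. -/
def realHermite (q : ℕ) : Polynomial ℝ := (Polynomial.hermite q).map (Int.castRingHom ℝ)

theorem realHermite_zero : realHermite 0 = 1 := by simp [realHermite]

theorem realHermite_succ (q : ℕ) : realHermite (q + 1) =
    Polynomial.X * realHermite q - Polynomial.derivative (realHermite q) := by
  simp [realHermite, Polynomial.derivative_map]

theorem natDegree_realHermite_le (q : ℕ) : (realHermite q).natDegree ≤ q :=
  Polynomial.natDegree_map_le.trans Polynomial.natDegree_hermite.le

/-- The integrand `(is)^q e^{-isx} e^{-s²/2}` of the Fourier integral that produces `He_q(x)`. -/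
def gaussMonomial (q : ℕ) (x s : ℝ) : ℂ :=
  (Complex.I * s) ^ q * (Complex.exp (-(Complex.I * s * x)) * Complex.exp (-((s : ℂ) ^ 2 / 2)))

theorem norm_exp_neg_I_mul (s x : ℝ) : ‖Complex.exp (-(Complex.I * s * x))‖ = 1 := by
  rw [Complex.norm_exp]; simp

theorem norm_exp_neg_sq_div_two (s : ℝ) :
    ‖Complex.exp (-((s : ℂ) ^ 2 / 2))‖ = Real.exp (-(1 / 2 * s ^ 2)) := by
  rw [Complex.norm_exp]
  norm_cast
  ring_nf

theorem norm_gaussMonomial (q : ℕ) (x s : ℝ) :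
    ‖gaussMonomial q x s‖ = |s| ^ q * Real.exp (-(1 / 2 * s ^ 2)) := by
  simp [gaussMonomial, norm_exp_neg_I_mul, norm_exp_neg_sq_div_two]

theorem continuous_gaussMonomial (q : ℕ) (x : ℝ) : Continuous (gaussMonomial q x) := by
  unfold gaussMonomial; fun_prop

theorem integrable_gaussMonomial (q : ℕ) (x : ℝ) : Integrable (gaussMonomial q x) :=
  (integrable_abs_pow_mul_exp_neg_mul_sq one_half_pos q).mono'
    (continuous_gaussMonomial q x).aestronglyMeasurable
    (ae_of_all _ fun s => (norm_gaussMonomial q x s).le)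

theorem hasDerivAt_gaussMonomial (q : ℕ) (x s : ℝ) :
    HasDerivAt (fun y => gaussMonomial q y s) (-gaussMonomial (q + 1) x s) x := by
  have h : HasDerivAt (fun y : ℝ => -(Complex.I * s * (y : ℂ))) (-(Complex.I * s)) x := by
    simpa using ((hasDerivAt_id x).ofReal_comp.const_mul (Complex.I * (s : ℂ))).fun_neg
  refine ((h.cexp.mul_const (Complex.exp (-((s : ℂ) ^ 2 / 2)))).const_mul
    ((Complex.I * (s : ℂ)) ^ q)).congr_deriv ?_
  rw [gaussMonomial]; ring

theorem hasDerivAt_integral_gaussMonomial (q : ℕ) (x : ℝ) :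
    HasDerivAt (fun y => ∫ s, gaussMonomial q y s) (-∫ s, gaussMonomial (q + 1) x s) x := by
  rw [← integral_neg]
  exact (hasDerivAt_integral_of_dominated_loc_of_deriv_le (μ := volume) Filter.univ_mem
    (Eventually.of_forall fun y => (continuous_gaussMonomial q y).aestronglyMeasurable)
    (integrable_gaussMonomial q x) (continuous_gaussMonomial (q + 1) x).neg.aestronglyMeasurable
    (ae_of_all _ fun s y _ => by rw [norm_neg, norm_gaussMonomial])
    (integrable_abs_pow_mul_exp_neg_mul_sq one_half_pos (q + 1))
    (ae_of_all _ fun s y _ => hasDerivAt_gaussMonomial q y s)).2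

theorem hasDerivAt_gaussDensity (x : ℝ) : HasDerivAt gaussDensity (-x * gaussDensity x) x := by
  have h : HasDerivAt (fun x : ℝ => -x ^ 2 / 2) (-x) x :=
    (((hasDerivAt_pow 2 x).neg).div_const 2).congr_deriv (by push_cast; ring)
  exact (h.exp.const_mul _).congr_deriv (by rw [gaussDensity]; ring)

theorem integral_gaussMonomial_zero (x : ℝ) :
    ∫ s, gaussMonomial 0 x s = ((2 * Real.pi * gaussDensity x : ℝ) : ℂ) := by
  have hint (s : ℝ) : gaussMonomial 0 x s =
      Complex.exp (Complex.I * (-x) * s) * Complex.exp (-(1 / 2) * (s : ℂ) ^ 2) := by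
    rw [gaussMonomial, pow_zero, one_mul]
    ring_nf
  have hsqrt : ((Real.pi : ℂ) / (1 / 2)) ^ (1 / 2 : ℂ) = (Real.sqrt (2 * Real.pi) : ℂ) := by
    rw [Real.sqrt_eq_rpow, Complex.ofReal_cpow (by positivity)]
    push_cast
    ring_nf
  have hexp : Complex.exp (-(-(x : ℂ)) ^ 2 / (4 * (1 / 2))) = (Real.exp (-x ^ 2 / 2) : ℂ) := by
    push_cast
    ring_nf
  have hpi : Real.sqrt (2 * Real.pi) = 2 * Real.pi * (Real.sqrt (2 * Real.pi))⁻¹ :=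
    (eq_mul_inv_iff_mul_eq₀ (by positivity)).2 (Real.mul_self_sqrt (by positivity))
  simp_rw [hint, fourierIntegral_gaussian (b := 1 / 2) (by norm_num) (-x : ℂ), hsqrt, hexp]
  rw [← Complex.ofReal_mul, gaussDensity, ← mul_assoc, ← hpi]

theorem integral_gaussMonomial (q : ℕ) (x : ℝ) :
    ∫ s, gaussMonomial q x s =
      ((2 * Real.pi * ((realHermite q).eval x * gaussDensity x) : ℝ) : ℂ) := by
  induction q generalizing x with
  | zero => simp [integral_gaussMonomial_zero, realHermite_zero]
  | succ q ih =>
    have hderiv : HasDerivAt (fun y => ∫ s, gaussMonomial q y s) _ x :=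
      (((((realHermite q).hasDerivAt x).mul (hasDerivAt_gaussDensity x)).const_mul
        (2 * Real.pi)).ofReal_comp).congr_of_eventuallyEq (Eventually.of_forall ih)
    rw [← neg_eq_iff_eq_neg.2 ((hasDerivAt_integral_gaussMonomial q x).unique hderiv).symm,
      ← Complex.ofReal_neg, realHermite_succ, Polynomial.eval_sub, Polynomial.eval_mul,
      Polynomial.eval_X]
    congr 1
    ring

theorem integral_gaussMonomial_comp_mul_left (q : ℕ) {σ : ℝ} (hσ : 0 < σ) (x : ℝ) :
    ∫ t : ℝ, gaussMonomial q x (σ * t) =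
      ((2 * Real.pi * (σ⁻¹ * ((realHermite q).eval x * gaussDensity x)) : ℝ) : ℂ) := by
  rw [Measure.integral_comp_mul_left, integral_gaussMonomial, abs_of_pos (inv_pos.2 hσ),
    Complex.real_smul, ← Complex.ofReal_mul, mul_left_comm]

end Hermite

/-! ### Finitely supported laws on the integers -/

section LatticeLaw

variable {A : Finset ℤ} {P : ℤ → ℝ}

/-- The Laplace transform `z ↦ ∑ P(k) e^{zk}` of the weights `P` on `A`; its value at `it` is the
characteristic function. -/
def laplace (A : Finset ℤ) (P : ℤ → ℝ) (z : ℂ) : ℂ := ∑ k ∈ A, (P k : ℂ) * Complex.exp (z * k)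

/-- The mean of the law `P` supported on `A`. -/
def latticeMean (A : Finset ℤ) (P : ℤ → ℝ) : ℝ := ∑ k ∈ A, P k * k

/-- The variance of the law `P` supported on `A`. -/
def latticeVar (A : Finset ℤ) (P : ℤ → ℝ) : ℝ := ∑ k ∈ A, P k * ((k : ℝ) - latticeMean A P) ^ 2

theorem integral_exp_I_mul_int (n : ℤ) :
    ∫ t in (-Real.pi)..Real.pi, Complex.exp (Complex.I * n * t) =
      if n = 0 then (2 * Real.pi : ℂ) else 0 := by
  split_ifs with hn
  · subst hn
    simp only [Int.cast_zero, mul_zero, zero_mul, Complex.exp_zero, intervalIntegral.integral_const,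
      Complex.real_smul]
    push_cast
    ring
  · have hperiod : Complex.exp (Complex.I * n * (Real.pi : ℝ)) =
        Complex.exp (Complex.I * n * ((-Real.pi : ℝ) : ℂ)) :=
      Complex.exp_eq_exp_iff_exists_int.2 ⟨n, by push_cast; ring⟩
    rw [integral_exp_mul_complex (mul_ne_zero Complex.I_ne_zero (Int.cast_ne_zero.2 hn)), hperiod,
      sub_self, zero_div]

theorem integral_exp_mul_laplace (hP : ∀ k ∉ A, P k = 0) (k : ℤ) :
    ∫ t in Set.Icc (-Real.pi) Real.pi, Complex.exp (-(Complex.I * t * k)) *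
      laplace A P (Complex.I * t) = 2 * Real.pi * P k := by
  have hshift (t : ℝ) : Complex.exp (-(Complex.I * t * k)) * laplace A P (Complex.I * t) =
      ∑ l ∈ A, (P l : ℂ) * Complex.exp (Complex.I * (l - k : ℤ) * t) := by
    rw [laplace, Finset.mul_sum]
    refine Finset.sum_congr rfl fun l _ => ?_
    rw [mul_left_comm, ← Complex.exp_add]
    push_cast
    ring_nf
  rw [integral_Icc_eq_integral_Ioc, ← intervalIntegral.integral_of_le (by linarith [Real.pi_pos])]
  simp_rw [hshift]
  rw [intervalIntegral.integral_finsetSum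
    fun l _ => Continuous.intervalIntegrable (by fun_prop) _ _]
  simp_rw [intervalIntegral.integral_const_mul, integral_exp_I_mul_int, sub_eq_zero, mul_ite,
    mul_zero]
  rw [Finset.sum_ite_eq' A k]
  split_ifs with h
  · ring
  · simp [hP k h]

theorem hasDerivAt_sum_mul_exp (A : Finset ℤ) (Q : ℤ → ℂ) (z : ℂ) :
    HasDerivAt (fun z : ℂ => ∑ k ∈ A, Q k * Complex.exp (z * k))
      (∑ k ∈ A, Q k * k * Complex.exp (z * k)) z := by
  refine HasDerivAt.fun_sum fun k _ => ?_
  have h : HasDerivAt (fun z : ℂ => z * (k : ℂ)) (k : ℂ) z := by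
    simpa using (hasDerivAt_id z).mul_const (k : ℂ)
  exact (h.cexp.const_mul (Q k)).congr_deriv (by ring)

theorem deriv_laplace (A : Finset ℤ) (P : ℤ → ℝ) (z : ℂ) :
    deriv (laplace A P) z = ∑ k ∈ A, (P k : ℂ) * k * Complex.exp (z * k) :=
  (hasDerivAt_sum_mul_exp A (fun k => (P k : ℂ)) z).deriv

theorem deriv_laplace_zero (A : Finset ℤ) (P : ℤ → ℝ) :
    deriv (laplace A P) 0 = latticeMean A P := by
  simp [deriv_laplace, latticeMean]

theorem iteratedDeriv_two_laplace_zero (A : Finset ℤ) (P : ℤ → ℝ) :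
    iteratedDeriv 2 (laplace A P) 0 = ((∑ k ∈ A, P k * k ^ 2 : ℝ) : ℂ) := by
  have h := (hasDerivAt_sum_mul_exp A (fun k => (P k : ℂ) * k) 0).deriv
  rw [iteratedDeriv_succ, iteratedDeriv_one, funext (deriv_laplace A P), h]
  simp [pow_two, mul_assoc]

theorem latticeVar_eq_sub (hP : ∑ k ∈ A, P k = 1) :
    latticeVar A P = ∑ k ∈ A, P k * k ^ 2 - latticeMean A P ^ 2 := by
  have hsq (k : ℤ) : P k * ((k : ℝ) - latticeMean A P) ^ 2 =
      P k * k ^ 2 - 2 * latticeMean A P * (P k * k) + latticeMean A P ^ 2 * P k := by ring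
  simp_rw [latticeVar, hsq]
  rw [Finset.sum_add_distrib, Finset.sum_sub_distrib, ← Finset.mul_sum, ← Finset.mul_sum, hP,
    ← latticeMean]
  ring

variable {G : ℂ → ℂ}

theorem deriv_log_laplace (hG : AnalyticAt ℂ G 0) (hG0 : G 0 = 0)
    (h : laplace A P =ᶠ[𝓝 0] fun z => Complex.exp (G z)) : deriv G 0 = latticeMean A P := by
  have hexp := hG.differentiableAt.hasDerivAt.cexp.deriv
  rw [← h.deriv_eq, deriv_laplace_zero, hG0, Complex.exp_zero, one_mul] at hexp
  exact hexp.symm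

theorem iteratedDeriv_two_log_laplace (hP : ∑ k ∈ A, P k = 1) (hG : AnalyticAt ℂ G 0)
    (hG0 : G 0 = 0) (h : laplace A P =ᶠ[𝓝 0] fun z => Complex.exp (G z)) :
    iteratedDeriv 2 G 0 = latticeVar A P := by
  have hderiv : deriv (laplace A P) =ᶠ[𝓝 0] fun z => Complex.exp (G z) * deriv G z := by
    filter_upwards [h.eventuallyEq_nhds, hG.eventually_analyticAt] with z hz hd
    rw [hz.deriv_eq]
    exact hd.differentiableAt.hasDerivAt.cexp.deriv
  have hG2 : HasDerivAt (deriv G) (iteratedDeriv 2 G 0) 0 := by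
    rw [iteratedDeriv_succ, iteratedDeriv_one]
    exact hG.deriv.differentiableAt.hasDerivAt
  have hmoment : iteratedDeriv 2 (laplace A P) 0 =
      Complex.exp (G 0) * deriv G 0 * deriv G 0 + Complex.exp (G 0) * iteratedDeriv 2 G 0 := by
    rw [iteratedDeriv_succ, iteratedDeriv_one, hderiv.deriv_eq]
    exact (hG.differentiableAt.hasDerivAt.cexp.mul hG2).deriv
  rw [iteratedDeriv_two_laplace_zero, hG0, Complex.exp_zero, one_mul, one_mul,
    deriv_log_laplace hG hG0 h] at hmoment
  rw [latticeVar_eq_sub hP, Complex.ofReal_sub, hmoment]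
  push_cast
  ring

theorem one_sub_le_norm_laplace (hP0 : ∀ k, 0 ≤ P k) (hP : ∑ k ∈ A, P k = 1) (t : ℝ) :
    1 - t ^ 2 / 2 * latticeVar A P ≤ ‖laplace A P (Complex.I * t)‖ := by
  set a := latticeMean A P with ha
  have hcenter : ∑ k ∈ A, (P k : ℂ) * Complex.exp (((t * (k - a) : ℝ) : ℂ) * Complex.I) =
      Complex.exp (((-(t * a) : ℝ) : ℂ) * Complex.I) * laplace A P (Complex.I * t) := by
    rw [laplace, Finset.mul_sum]
    refine Finset.sum_congr rfl fun k _ => ?_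
    rw [mul_left_comm, ← Complex.exp_add]
    push_cast
    ring_nf
  calc 1 - t ^ 2 / 2 * latticeVar A P
      = ∑ k ∈ A, P k * (1 - (t * (k - a)) ^ 2 / 2) := by
        simp_rw [mul_sub, mul_one, Finset.sum_sub_distrib, hP, latticeVar, ← ha, Finset.mul_sum]
        congr 1
        exact Finset.sum_congr rfl fun k _ => by ring
    _ ≤ (∑ k ∈ A, (P k : ℂ) * Complex.exp (((t * (k - a) : ℝ) : ℂ) * Complex.I)).re := by
        rw [Complex.re_sum]
        refine Finset.sum_le_sum fun k _ => ?_
        rw [Complex.re_ofReal_mul, Complex.exp_ofReal_mul_I_re]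
        exact mul_le_mul_of_nonneg_left Real.one_sub_sq_div_two_le_cos (hP0 k)
    _ ≤ ‖laplace A P (Complex.I * t)‖ := by
        refine (Complex.re_le_norm _).trans_eq ?_
        rw [hcenter, norm_mul, Complex.norm_exp_ofReal_mul_I, one_mul]

end LatticeLaw

/-! ### From characteristic functions to Edgeworth polynomials -/

section Edgeworth

/-- The Edgeworth polynomial `∑_{q < n} h_q σ^{-q} He_q`, where `h_q` is the real part of the `q`-th
Taylor coefficient at `0` of the correction factor `H` to the Gaussian characteristic function. -/
def edgeworthPoly (H : ℂ → ℂ) (σ : ℝ) (n : ℕ) : Polynomial ℝ :=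
  ∑ q ∈ range n, Polynomial.C ((taylorCoeff H 0 q).re * σ⁻¹ ^ q) * realHermite q

/-- The function of `t` whose integral is the Edgeworth approximation at the point `x`. -/
def edgeworthIntegrand (H : ℂ → ℂ) (σ : ℝ) (n : ℕ) (x t : ℝ) : ℂ :=
  ∑ q ∈ range n, taylorCoeff H 0 q * ((σ⁻¹ ^ q : ℝ) : ℂ) * gaussMonomial q x (σ * t)

variable {H : ℂ → ℂ} {σ : ℝ} {n : ℕ}

theorem natDegree_edgeworthPoly_le : (edgeworthPoly H σ n).natDegree ≤ n :=
  Polynomial.natDegree_sum_le_of_forall_le _ _ fun q hq =>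
    (Polynomial.natDegree_C_mul_le _ _).trans
      ((natDegree_realHermite_le q).trans (Finset.mem_range.1 hq).le)

theorem abs_coeff_realHermite_le {q : ℕ} (hq : q < n) (i : ℕ) :
    |(realHermite q).coeff i| ≤ ∑ j ∈ range n, |(realHermite q).coeff j| := by
  by_cases hi : i < n
  · exact Finset.single_le_sum (f := fun j => |(realHermite q).coeff j|)
      (fun _ _ => abs_nonneg _) (Finset.mem_range.2 hi)
  · rw [Polynomial.coeff_eq_zero_of_natDegree_lt ((natDegree_realHermite_le q).trans_lt (by lia)),
      abs_zero]
    exact Finset.sum_nonneg fun _ _ => abs_nonneg _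

theorem abs_coeff_edgeworthPoly_le (hσ : 0 ≤ σ) {b : ℝ}
    (hb : ∀ q < n, ‖taylorCoeff H 0 q‖ * σ⁻¹ ^ q ≤ b) (i : ℕ) :
    |(edgeworthPoly H σ n).coeff i| ≤
      b * ∑ q ∈ range n, ∑ j ∈ range n, |(realHermite q).coeff j| := by
  rw [edgeworthPoly, Polynomial.finsetSum_coeff, Finset.mul_sum]
  refine Finset.abs_sum_le_sum_abs _ _ |>.trans (Finset.sum_le_sum fun q hq => ?_)
  have hqn := Finset.mem_range.1 hq
  have hσq : 0 ≤ σ⁻¹ ^ q := pow_nonneg (inv_nonneg.2 hσ) q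
  have hb0 : 0 ≤ b := (mul_nonneg (norm_nonneg _) hσq).trans (hb q hqn)
  rw [Polynomial.coeff_C_mul, abs_mul, abs_mul, abs_of_nonneg hσq]
  refine mul_le_mul (le_trans ?_ (hb q hqn)) (abs_coeff_realHermite_le hqn i) (abs_nonneg _) hb0
  gcongr
  exact Complex.abs_re_le_norm _

theorem edgeworthIntegrand_eq (hσ : σ ≠ 0) (x t : ℝ) :
    edgeworthIntegrand H σ n x t =
      Complex.exp (-(Complex.I * t * (σ * x : ℝ))) * Complex.exp (-(((σ * t : ℝ) : ℂ) ^ 2 / 2)) *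
        ∑ q ∈ range n, (Complex.I * t) ^ q • taylorCoeff H 0 q := by
  rw [edgeworthIntegrand, Finset.mul_sum]
  refine Finset.sum_congr rfl fun q _ => ?_
  have hσq : ((σ⁻¹ ^ q : ℝ) : ℂ) * (Complex.I * (σ * t : ℝ)) ^ q = (Complex.I * t) ^ q := by
    have hσ' : (σ : ℂ) ≠ 0 := Complex.ofReal_ne_zero.2 hσ
    rw [Complex.ofReal_pow, ← mul_pow, Complex.ofReal_inv, Complex.ofReal_mul]
    field_simp
  have hphase : Complex.I * ((σ * t : ℝ) : ℂ) * x = Complex.I * t * (σ * x : ℝ) := by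
    push_cast; ring
  rw [gaussMonomial, hphase, smul_eq_mul, ← hσq]
  ring

theorem integrable_gaussMonomial_comp_mul_left (q : ℕ) (hσ : σ ≠ 0) (x : ℝ) :
    Integrable (fun t => gaussMonomial q x (σ * t)) :=
  (integrable_gaussMonomial q x).comp_mul_left' hσ

theorem integrable_edgeworthIntegrand (hσ : σ ≠ 0) (x : ℝ) :
    Integrable (edgeworthIntegrand H σ n x) :=
  integrable_finsetSum _ fun q _ => (integrable_gaussMonomial_comp_mul_left q hσ x).const_mul _

theorem re_integral_edgeworthIntegrand (hσ : 0 < σ) (x : ℝ) :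
    (∫ t, edgeworthIntegrand H σ n x t).re =
      2 * Real.pi * (σ⁻¹ * (edgeworthPoly H σ n).eval x * gaussDensity x) := by
  simp_rw [edgeworthIntegrand]
  rw [integral_finsetSum _ fun q _ =>
    (integrable_gaussMonomial_comp_mul_left q hσ.ne' x).const_mul _]
  simp_rw [integral_const_mul, integral_gaussMonomial_comp_mul_left _ hσ]
  rw [edgeworthPoly, Polynomial.eval_finsetSum, Complex.re_sum, Finset.mul_sum, Finset.sum_mul,
    Finset.mul_sum]
  refine Finset.sum_congr rfl fun q _ => ?_
  rw [Complex.re_mul_ofReal, Complex.re_mul_ofReal, Polynomial.eval_mul, Polynomial.eval_C]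
  ring

/-- Control of the characteristic function of the weights `P` on `A`, with centre `a` and scale `σ`:
on `|t| < ρ` it is the Gaussian one times `H(it)`, with `H` holomorphic and bounded by `M` on the
disc of radius `ρ`; on `|t| ≤ η` it has Gaussian decay; on `η ≤ |t| ≤ π` it is at most `ε`. -/
structure CharControl (A : Finset ℤ) (P : ℤ → ℝ) (H : ℂ → ℂ) (a σ ρ M η c B ε : ℝ) : Prop where
  scale_pos : 0 < σ
  radius_pos : 0 < ρ
  radius_le : ρ ≤ η
  le_pi : η ≤ Real.pi
  rate_pos : 0 < c
  rate_le : c ≤ 1 / 2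
  eq_zero : ∀ k ∉ A, P k = 0
  differentiableOn : DifferentiableOn ℂ H (Metric.ball 0 ρ)
  norm_le : ∀ z ∈ Metric.ball (0 : ℂ) ρ, ‖H z‖ ≤ M
  laplace_eq : ∀ t : ℝ, |t| < ρ → laplace A P (Complex.I * t) =
    Complex.exp (Complex.I * t * a) * Complex.exp (-(((σ * t : ℝ) : ℂ) ^ 2 / 2)) *
      H (Complex.I * t)
  norm_laplace_le_gauss : ∀ t : ℝ, |t| ≤ η →
    ‖laplace A P (Complex.I * t)‖ ≤ B * Real.exp (-(c * (σ * t) ^ 2))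
  norm_laplace_le : ∀ t : ℝ, η ≤ |t| → |t| ≤ Real.pi → ‖laplace A P (Complex.I * t)‖ ≤ ε

namespace CharControl

variable {A : Finset ℤ} {P : ℤ → ℝ} {a ρ M η c B ε : ℝ}

theorem eta_pos (h : CharControl A P H a σ ρ M η c B ε) : 0 < η := h.radius_pos.trans_le h.radius_le

theorem M_nonneg (h : CharControl A P H a σ ρ M η c B ε) : 0 ≤ M :=
  (norm_nonneg _).trans (h.norm_le 0 (Metric.mem_ball_self h.radius_pos))

theorem B_nonneg (h : CharControl A P H a σ ρ M η c B ε) : 0 ≤ B := by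
  have h0 := (norm_nonneg _).trans (h.norm_laplace_le_gauss 0 (by simpa using h.eta_pos.le))
  simpa using h0

theorem eps_nonneg (h : CharControl A P H a σ ρ M η c B ε) : 0 ≤ ε :=
  (norm_nonneg _).trans (h.norm_laplace_le Real.pi
    (by rw [abs_of_pos Real.pi_pos]; exact h.le_pi) (abs_of_pos Real.pi_pos).le)

theorem norm_gauss_le (h : CharControl A P H a σ ρ M η c B ε) (t : ℝ) :
    ‖Complex.exp (-(((σ * t : ℝ) : ℂ) ^ 2 / 2))‖ ≤ Real.exp (-(c * (σ * t) ^ 2)) := by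
  rw [norm_exp_neg_sq_div_two]
  gcongr
  exact h.rate_le

theorem norm_taylorCoeff_mul_le (h : CharControl A P H a σ ρ M η c B ε) (q : ℕ) {u : ℝ}
    (hu : 0 ≤ u) : ‖taylorCoeff H 0 q‖ * u ^ q ≤ M * (2 * u / ρ) ^ q := by
  have hρ := h.radius_pos
  calc ‖taylorCoeff H 0 q‖ * u ^ q ≤ M / (ρ / 2) ^ q * u ^ q := by
        gcongr
        exact norm_taylorCoeff_le hρ h.differentiableOn h.norm_le q
    _ = M * (2 * u / ρ) ^ q := by
        rw [div_pow, div_pow, mul_pow]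
        field_simp

theorem norm_edgeworthIntegrand_le (h : CharControl A P H a σ ρ M η c B ε) (x : ℝ) {t : ℝ}
    (ht : ρ / 4 ≤ |t|) : ‖edgeworthIntegrand H σ n x t‖ ≤
      n * M * (4 * |t| / ρ) ^ n * Real.exp (-(c * (σ * t) ^ 2)) := by
  have hρ := h.radius_pos
  have hM := h.M_nonneg
  have h1 : 1 ≤ 4 * |t| / ρ := by rw [le_div_iff₀ hρ]; linarith
  have hsum : ‖∑ q ∈ range n, (Complex.I * t) ^ q • taylorCoeff H 0 q‖ ≤
      n * M * (4 * |t| / ρ) ^ n := by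
    calc _ ≤ ∑ q ∈ range n, M * (4 * |t| / ρ) ^ n := by
          refine norm_sum_le_of_le _ fun q hq => ?_
          rw [norm_smul, norm_pow, norm_mul, Complex.norm_I, one_mul, Complex.norm_real,
            Real.norm_eq_abs, mul_comm]
          calc ‖taylorCoeff H 0 q‖ * |t| ^ q ≤ M * (2 * |t| / ρ) ^ q :=
                h.norm_taylorCoeff_mul_le q (abs_nonneg t)
            _ ≤ M * (4 * |t| / ρ) ^ q := by gcongr; norm_num
            _ ≤ M * (4 * |t| / ρ) ^ n := by
                have := (Finset.mem_range.1 hq).le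
                gcongr
      _ = n * M * (4 * |t| / ρ) ^ n := by
          rw [Finset.sum_const, card_range, nsmul_eq_mul, mul_assoc]
  rw [edgeworthIntegrand_eq h.scale_pos.ne', norm_mul, norm_mul, norm_exp_neg_I_mul, one_mul,
    mul_comm]
  gcongr
  exact h.norm_gauss_le t

theorem norm_laplace_sub_edgeworthIntegrand_le (h : CharControl A P H a σ ρ M η c B ε) (k : ℤ)
    {t : ℝ} (ht : |t| ≤ ρ / 4) :
    ‖Complex.exp (-(Complex.I * t * k)) * laplace A P (Complex.I * t) -
        edgeworthIntegrand H σ n ((k - a) / σ) t‖ ≤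
      2 * M * (4 * |t| / ρ) ^ n * Real.exp (-(c * (σ * t) ^ 2)) := by
  have hρ := h.radius_pos
  have hM := h.M_nonneg
  have hphase : Complex.exp (-(Complex.I * t * k)) * Complex.exp (Complex.I * t * a) =
      Complex.exp (-(Complex.I * t * ((k - a : ℝ) : ℂ))) := by
    rw [← Complex.exp_add]
    push_cast
    ring_nf
  have hnorm : ‖Complex.I * (t : ℂ)‖ = |t| := by simp
  have htaylor := norm_sub_sum_taylorCoeff_le hρ h.differentiableOn h.norm_le n
    (z := Complex.I * t) (by rwa [sub_zero, hnorm])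
  rw [sub_zero, hnorm] at htaylor
  rw [edgeworthIntegrand_eq h.scale_pos.ne', mul_div_cancel₀ _ h.scale_pos.ne',
    h.laplace_eq t (by linarith), ← mul_assoc, ← mul_assoc, hphase, ← mul_sub, norm_mul, norm_mul,
    norm_exp_neg_I_mul, one_mul, mul_comm]
  gcongr
  · refine htaylor.trans ?_
    gcongr 2 * M * ?_ ^ n
    rw [div_div_eq_mul_div, mul_comm]
    gcongr
    norm_num
  · exact h.norm_gauss_le t

theorem norm_indicator_sub_edgeworthIntegrand_le (h : CharControl A P H a σ ρ M η c B ε) (k : ℤ)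
    (t : ℝ) :
    ‖(Set.Icc (-Real.pi) Real.pi).indicator
        (fun t : ℝ => Complex.exp (-(Complex.I * t * k)) * laplace A P (Complex.I * t)) t -
        edgeworthIntegrand H σ n ((k - a) / σ) t‖ ≤
      (2 * M + n * M + B) * (4 * |t| / ρ) ^ n * Real.exp (-(c * (σ * t) ^ 2)) +
        (Set.Icc (-Real.pi) Real.pi).indicator (fun _ => ε) t := by
  have hρ := h.radius_pos
  have hM := h.M_nonneg
  have hB := h.B_nonneg
  have hε : 0 ≤ (Set.Icc (-Real.pi) Real.pi).indicator (fun _ => ε) t :=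
    Set.indicator_nonneg (fun _ _ => h.eps_nonneg) _
  set E := Real.exp (-(c * (σ * t) ^ 2))
  have hE0 : 0 < E := Real.exp_pos _
  rcases le_total |t| (ρ / 4) with ht | ht
  · have htpi : |t| ≤ Real.pi := by linarith [h.radius_le, h.le_pi]
    rw [Set.indicator_of_mem (show t ∈ Set.Icc (-Real.pi) Real.pi from abs_le.1 htpi)]
    calc _ ≤ 2 * M * (4 * |t| / ρ) ^ n * E := h.norm_laplace_sub_edgeworthIntegrand_le k ht
      _ ≤ (2 * M + n * M + B) * (4 * |t| / ρ) ^ n * E := by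
          gcongr
          linarith [mul_nonneg n.cast_nonneg hM]
      _ ≤ _ := le_add_of_nonneg_right hε
  · have h1 : 1 ≤ (4 * |t| / ρ) ^ n := one_le_pow₀ (by rw [le_div_iff₀ hρ]; linarith)
    have hlaplace : ‖(Set.Icc (-Real.pi) Real.pi).indicator
        (fun t : ℝ => Complex.exp (-(Complex.I * t * k)) * laplace A P (Complex.I * t)) t‖ ≤
        B * E + (Set.Icc (-Real.pi) Real.pi).indicator (fun _ => ε) t := by
      by_cases htm : t ∈ Set.Icc (-Real.pi) Real.pi
      · have hk := norm_exp_neg_I_mul t k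
        rw [Complex.ofReal_intCast] at hk
        simp only [Set.indicator_of_mem htm, norm_mul, hk, one_mul]
        rcases le_total |t| η with htη | htη
        · exact le_add_of_le_of_nonneg (h.norm_laplace_le_gauss t htη) h.eps_nonneg
        · exact le_add_of_nonneg_of_le (by positivity) (h.norm_laplace_le t htη (abs_le.2 htm))
      · rw [Set.indicator_of_notMem htm, norm_zero]
        positivity
    calc _ ≤ _ := norm_sub_le _ _
      _ ≤ _ := add_le_add hlaplace (h.norm_edgeworthIntegrand_le _ ht)
      _ ≤ _ := by
          nlinarith [mul_le_mul_of_nonneg_left h1 (mul_nonneg hB hE0.le),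
            mul_nonneg (mul_nonneg hM (zero_le_one.trans h1)) hE0.le]

theorem abs_sub_edgeworthPoly_le (h : CharControl A P H a σ ρ M η c B ε) (n : ℕ) (k : ℤ) :
    |P k - σ⁻¹ * (edgeworthPoly H σ n).eval ((k - a) / σ) * gaussDensity ((k - a) / σ)| ≤
      (2 * Real.pi)⁻¹ * ((2 * M + n * M + B) * (4 / (ρ * σ)) ^ n * σ⁻¹ *
        ∫ s : ℝ, |s| ^ n * Real.exp (-(c * s ^ 2))) + ε := by
  have hσ := h.scale_pos
  have hpi := Real.pi_pos
  set D := Set.Icc (-Real.pi) Real.pi with hD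
  set L := (2 * M + n * M + B) * (4 / (ρ * σ)) ^ n with hL
  have hΦ : Integrable (D.indicator fun t : ℝ =>
      Complex.exp (-(Complex.I * t * k)) * laplace A P (Complex.I * t)) := by
    refine (integrable_indicator_iff measurableSet_Icc).2 (Continuous.integrableOn_Icc ?_)
    unfold laplace
    fun_prop
  have hE := integrable_edgeworthIntegrand (H := H) (n := n) hσ.ne' ((k - a) / σ)
  have hmoment : Integrable fun t => L * (|σ * t| ^ n * Real.exp (-(c * (σ * t) ^ 2))) :=
    ((integrable_abs_pow_mul_exp_neg_mul_sq h.rate_pos n).comp_mul_left' hσ.ne').const_mul _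
  have hε : Integrable (D.indicator fun _ : ℝ => ε) :=
    (integrable_indicator_iff measurableSet_Icc).2 continuous_const.integrableOn_Icc
  have hbound (t : ℝ) : (2 * M + n * M + B) * (4 * |t| / ρ) ^ n * Real.exp (-(c * (σ * t) ^ 2)) =
      L * (|σ * t| ^ n * Real.exp (-(c * (σ * t) ^ 2))) := by
    rw [hL, mul_assoc _ (_ ^ n), mul_assoc _ (_ ^ n), ← mul_assoc (_ ^ n) (_ ^ n), ← mul_pow,
      abs_mul, abs_of_pos hσ]
    field_simp [h.radius_pos.ne']
  have hdiff : 2 * Real.pi * (P k -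
      σ⁻¹ * (edgeworthPoly H σ n).eval ((k - a) / σ) * gaussDensity ((k - a) / σ)) =
      (∫ t, (D.indicator (fun t : ℝ =>
        Complex.exp (-(Complex.I * t * k)) * laplace A P (Complex.I * t)) t -
          edgeworthIntegrand H σ n ((k - a) / σ) t)).re := by
    rw [integral_sub hΦ hE, Complex.sub_re, re_integral_edgeworthIntegrand hσ,
      integral_indicator measurableSet_Icc, integral_exp_mul_laplace h.eq_zero, mul_sub]
    simp
  have hvol : volume.real D = 2 * Real.pi := by
    rw [hD, Real.volume_real_Icc_of_le (by linarith)]; ring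
  have hmain : 2 * Real.pi * |P k -
      σ⁻¹ * (edgeworthPoly H σ n).eval ((k - a) / σ) * gaussDensity ((k - a) / σ)| ≤
      L * (σ⁻¹ * ∫ s : ℝ, |s| ^ n * Real.exp (-(c * s ^ 2))) + 2 * Real.pi * ε := by
    rw [← abs_of_pos (show 0 < 2 * Real.pi by positivity), ← abs_mul,
      abs_of_pos (show 0 < 2 * Real.pi by positivity), hdiff]
    refine (Complex.abs_re_le_norm _).trans ((norm_integral_le_of_norm_le (hmoment.add hε)
      (ae_of_all _ fun t => ?_)).trans_eq ?_)
    · exact (h.norm_indicator_sub_edgeworthIntegrand_le k t).trans_eq (by rw [hbound]; rfl)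
    · rw [integral_add' hmoment hε, integral_const_mul,
        Measure.integral_comp_mul_left (fun s => |s| ^ n * Real.exp (-(c * s ^ 2))),
        integral_indicator measurableSet_Icc, setIntegral_const, hvol, abs_of_pos (inv_pos.2 hσ),
        smul_eq_mul, smul_eq_mul]
  rw [← mul_le_mul_iff_right₀ (show 0 < 2 * Real.pi by positivity)]
  refine hmain.trans_eq ?_
  rw [mul_add, mul_inv_cancel_left₀ (by positivity), mul_assoc L]

theorem abs_coeff_le (h : CharControl A P H a σ ρ M η c B ε) (hρσ : 1 ≤ ρ * σ) (n i : ℕ) :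
    |(edgeworthPoly H σ n).coeff i| ≤
      M * 2 ^ n * ∑ q ∈ range n, ∑ j ∈ range n, |(realHermite q).coeff j| := by
  refine abs_coeff_edgeworthPoly_le h.scale_pos.le (fun q hq => ?_) i
  have hρ := h.radius_pos
  have hσ := h.scale_pos
  have hM := h.M_nonneg
  calc ‖taylorCoeff H 0 q‖ * σ⁻¹ ^ q ≤ M * (2 * σ⁻¹ / ρ) ^ q :=
        h.norm_taylorCoeff_mul_le q (inv_nonneg.2 hσ.le)
    _ ≤ M * 2 ^ q := by
        gcongr
        rw [div_le_iff₀ hρ, mul_inv_le_iff₀ hσ, mul_assoc]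
        linarith
    _ ≤ M * 2 ^ n := by gcongr; norm_num

/-- With `n = 3r` Taylor terms and `ρ = σ^{-2/3}`, the truncation error is of order `σ^{-r-1}`. -/
theorem abs_sub_edgeworthPoly_le_of_radius {r : ℕ} {C : ℝ}
    (h : CharControl A P H a σ ρ M η c B (C * σ⁻¹ ^ (r + 1))) (hρ : ρ ^ 3 * σ ^ 2 = 1) (k : ℤ) :
    |P k - σ⁻¹ * (edgeworthPoly H σ (3 * r)).eval ((k - a) / σ) * gaussDensity ((k - a) / σ)| ≤
      ((2 * Real.pi)⁻¹ * ((2 * M + (3 * r : ℕ) * M + B) * 64 ^ r *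
        ∫ s : ℝ, |s| ^ (3 * r) * Real.exp (-(c * s ^ 2))) + C) * σ⁻¹ ^ (r + 1) := by
  have hscale : (4 / (ρ * σ)) ^ (3 * r) = 64 ^ r * σ⁻¹ ^ r := by
    rw [pow_mul, ← mul_pow, div_pow, mul_pow, show ρ ^ 3 * σ ^ 3 = σ by linear_combination σ * hρ,
      div_eq_mul_inv]
    norm_num
  refine (h.abs_sub_edgeworthPoly_le (3 * r) k).trans_eq ?_
  rw [hscale, pow_succ]
  ring

end CharControl

end Edgeworth

/-! ### Doeblin contraction for perturbed transfer operators -/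

section Transfer

variable {E : Type*} [MeasurableSpace E] {𝕜 : Type*} [RCLike 𝕜]

/-- Bounded measurable functions, on which all transfer operators act. -/
def BddMeasurable (G : E → 𝕜) : Prop := Measurable G ∧ ∃ M : ℝ, ∀ x, ‖G x‖ ≤ M

namespace BddMeasurable

theorem const (a : 𝕜) : BddMeasurable (fun _ : E => a) := ⟨measurable_const, ‖a‖, fun _ => le_rfl⟩

theorem mul {F G : E → 𝕜} (hF : BddMeasurable F) (hG : BddMeasurable G) :
    BddMeasurable (fun x => F x * G x) := by
  obtain ⟨hFm, M, hM⟩ := hF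
  obtain ⟨hGm, M', hM'⟩ := hG
  refine ⟨hFm.mul hGm, M * M', fun x => ?_⟩
  rw [norm_mul]
  exact mul_le_mul (hM x) (hM' x) (norm_nonneg _) ((norm_nonneg _).trans (hM x))

theorem sub {F G : E → 𝕜} (hF : BddMeasurable F) (hG : BddMeasurable G) :
    BddMeasurable (fun x => F x - G x) := by
  obtain ⟨hFm, M, hM⟩ := hF
  obtain ⟨hGm, M', hM'⟩ := hG
  exact ⟨hFm.sub hGm, M + M', fun x => (norm_sub_le _ _).trans (add_le_add (hM x) (hM' x))⟩

theorem norm {F : E → 𝕜} (hF : BddMeasurable F) : BddMeasurable (fun x => ‖F x‖) := by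
  obtain ⟨hFm, M, hM⟩ := hF
  exact ⟨hFm.norm, M, fun x => by simpa using hM x⟩

theorem ofReal {F : E → ℝ} (hF : BddMeasurable F) : BddMeasurable (fun x => (F x : 𝕜)) := by
  obtain ⟨hFm, M, hM⟩ := hF
  exact ⟨RCLike.measurable_ofReal.comp hFm, M, fun x => by simpa using hM x⟩

theorem integrable {G : E → 𝕜} (hG : BddMeasurable G) (ν : Measure E) [IsFiniteMeasure ν] :
    Integrable G ν := by
  obtain ⟨hm, M, hM⟩ := hG
  exact Integrable.of_bound hm.aestronglyMeasurable M (ae_of_all _ hM)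

theorem integral_pos {g : E → ℝ} (hg : BddMeasurable g) (hpos : ∀ x, 0 < g x) (ν : Measure E)
    [IsProbabilityMeasure ν] : 0 < ∫ x, g x ∂ν := by
  rw [integral_pos_iff_support_of_nonneg (fun x => (hpos x).le) (hg.integrable ν),
    Function.support_eq_univ fun x => (hpos x).ne']
  simp

end BddMeasurable

/-- A measurable transition density with values in `[C⁻¹, C]`. -/
structure EllipticDensity (C : ℝ) (k : E → E → ℝ) : Prop where
  one_le : 1 ≤ C
  measurable : Measurable (Function.uncurry k)
  inv_le : ∀ x y, C⁻¹ ≤ k x y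
  le : ∀ x y, k x y ≤ C

/-- The (dual) transfer operator of the density `k` with respect to the reference measure `ν`. -/
def transfer (ν : Measure E) (k : E → E → ℝ) (G : E → 𝕜) (y : E) : 𝕜 := ∫ x, k x y • G x ∂ν

namespace EllipticDensity

variable {C : ℝ} {k : E → E → ℝ}

theorem const_pos (hk : EllipticDensity C k) : 0 < C := one_pos.trans_le hk.one_le

theorem flip (hk : EllipticDensity C k) : EllipticDensity C (fun x y => k y x) :=
  ⟨hk.one_le, hk.measurable.comp measurable_swap, fun x y => hk.inv_le y x, fun x y => hk.le y x⟩

theorem pos (hk : EllipticDensity C k) (x y : E) : 0 < k x y :=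
  (inv_pos.2 hk.const_pos).trans_le (hk.inv_le x y)

theorem norm_le (hk : EllipticDensity C k) (x y : E) : ‖k x y‖ ≤ C := by
  rw [Real.norm_of_nonneg (hk.pos x y).le]; exact hk.le x y

theorem bddMeasurable_left (hk : EllipticDensity C k) (y : E) : BddMeasurable (fun x => k x y) :=
  ⟨hk.measurable.comp (measurable_id.prodMk measurable_const), C, fun x => hk.norm_le x y⟩

theorem bddMeasurable_smul (hk : EllipticDensity C k) {G : E → 𝕜} (hG : BddMeasurable G) (y : E) :
    BddMeasurable (fun x => k x y • G x) := by
  simp_rw [RCLike.real_smul_eq_coe_mul]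
  exact (hk.bddMeasurable_left y).ofReal.mul hG

theorem bddMeasurable_transfer (hk : EllipticDensity C k) {G : E → 𝕜} (hG : BddMeasurable G)
    (ν : Measure E) [IsProbabilityMeasure ν] : BddMeasurable (transfer ν k G) := by
  obtain ⟨hm, M, hM⟩ := hG
  refine ⟨StronglyMeasurable.measurable ?_, C * M, fun y => ?_⟩
  · exact StronglyMeasurable.integral_prod_right (f := fun y x => k x y • G x)
      ((hk.measurable.comp measurable_swap).smul (hm.comp measurable_snd)).stronglyMeasurable
  · refine (norm_integral_le_of_norm_le_const (C := C * M) (ae_of_all _ fun x => ?_)).trans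
      (by simp)
    rw [norm_smul]
    exact mul_le_mul (hk.norm_le x y) (hM x) (norm_nonneg _) hk.const_pos.le

theorem integral_mul_transfer (hk : EllipticDensity C k) {F G : E → 𝕜} (hF : BddMeasurable F)
    (hG : BddMeasurable G) (ν₁ ν₂ : Measure E) [IsProbabilityMeasure ν₁]
    [IsProbabilityMeasure ν₂] :
    ∫ u, F u * transfer ν₁ k G u ∂ν₂ = ∫ x, transfer ν₂ (fun x y => k y x) F x * G x ∂ν₁ := by
  simp_rw [transfer, ← integral_const_mul, ← integral_mul_const]
  rw [integral_integral_swap]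
  · congr 1; ext x; congr 1; ext u; simp only [RCLike.real_smul_eq_coe_mul]; ring
  · obtain ⟨hFm, M, hM⟩ := hF
    obtain ⟨hGm, M', hM'⟩ := hG
    refine Integrable.of_bound (C := M * (C * M')) ?_ (ae_of_all _ fun z => ?_)
    · exact ((hFm.comp measurable_fst).mul ((hk.measurable.comp measurable_swap).smul
        (hGm.comp measurable_snd))).aestronglyMeasurable
    · simp only [Function.uncurry, norm_mul, norm_smul]
      have hkC := hk.norm_le z.2 z.1
      gcongr
      · exact (norm_nonneg _).trans (hM z.1)
      · exact hM _
      · exact hk.const_pos.le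
      · exact hM' _

theorem inv_mul_integral_le_transfer (hk : EllipticDensity C k) {g : E → ℝ} (hg : BddMeasurable g)
    (hg0 : ∀ x, 0 ≤ g x) (ν : Measure E) [IsProbabilityMeasure ν] (y : E) :
    C⁻¹ * ∫ x, g x ∂ν ≤ transfer ν k g y := by
  rw [← integral_const_mul]
  exact integral_mono ((hg.integrable ν).const_mul _) ((hk.bddMeasurable_smul hg y).integrable ν)
    fun x => mul_le_mul_of_nonneg_right (hk.inv_le x y) (hg0 x)

theorem transfer_le_mul_integral (hk : EllipticDensity C k) {g : E → ℝ} (hg : BddMeasurable g)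
    (hg0 : ∀ x, 0 ≤ g x) (ν : Measure E) [IsProbabilityMeasure ν] (y : E) :
    transfer ν k g y ≤ C * ∫ x, g x ∂ν := by
  rw [← integral_const_mul]
  exact integral_mono ((hk.bddMeasurable_smul hg y).integrable ν) ((hg.integrable ν).const_mul _)
    fun x => mul_le_mul_of_nonneg_right (hk.le x y) (hg0 x)

theorem transfer_pos (hk : EllipticDensity C k) {g : E → ℝ} (hg : BddMeasurable g)
    (hpos : ∀ x, 0 < g x) (ν : Measure E) [IsProbabilityMeasure ν] (y : E) :
    0 < transfer ν k g y :=
  (mul_pos (inv_pos.2 hk.const_pos) (hg.integral_pos hpos ν)).trans_le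
    (hk.inv_mul_integral_le_transfer hg (fun x => (hpos x).le) ν y)

theorem transfer_le_sq_mul_transfer (hk : EllipticDensity C k) {g : E → ℝ} (hg : BddMeasurable g)
    (hg0 : ∀ x, 0 ≤ g x) (ν : Measure E) [IsProbabilityMeasure ν] (y y' : E) :
    transfer ν k g y ≤ C ^ 2 * transfer ν k g y' := by
  have hC := hk.const_pos
  calc transfer ν k g y ≤ C * ∫ x, g x ∂ν := hk.transfer_le_mul_integral hg hg0 ν y
    _ = C ^ 2 * (C⁻¹ * ∫ x, g x ∂ν) := by field_simp
    _ ≤ C ^ 2 * transfer ν k g y' := by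
        gcongr; exact hk.inv_mul_integral_le_transfer hg hg0 ν y'

/-- The part `C⁻² g' / ∫ g` of the density is independent of `x`, and only integrates `B`; what is
left of the density is nonnegative and of relative mass `1 - C⁻²`. -/
theorem norm_transfer_sub_le (hk : EllipticDensity C k) {B : E → ℂ} (hB : BddMeasurable B)
    {g : E → ℝ} (hg : BddMeasurable g) (hpos : ∀ x, 0 < g x) {b : ℝ} (hb : ∀ x, ‖B x‖ ≤ b * g x)
    (ν : Measure E) [IsProbabilityMeasure ν] (y : E) :
    ‖transfer ν k B y - (C ^ 2)⁻¹ * ((∫ x, B x ∂ν) / (∫ x, g x ∂ν : ℝ)) * transfer ν k g y‖ ≤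
      (1 - (C ^ 2)⁻¹) * b * transfer ν k g y := by
  have hC := hk.const_pos
  have hI := hg.integral_pos hpos ν
  set I := ∫ x, g x ∂ν
  set s : ℝ := (C ^ 2)⁻¹ * transfer ν k g y / I with hs
  have hgi := hg.integrable ν
  have hkg := (hk.bddMeasurable_smul hg y).integrable ν
  have hsk (x : E) : s ≤ k x y := by
    refine le_trans ?_ (hk.inv_le x y)
    rw [hs, div_le_iff₀ hI]
    calc (C ^ 2)⁻¹ * transfer ν k g y ≤ (C ^ 2)⁻¹ * (C * I) := by
          gcongr; exact hk.transfer_le_mul_integral hg (fun x => (hpos x).le) ν y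
      _ = C⁻¹ * I := by field_simp
  have hsplit : transfer ν k B y - (C ^ 2)⁻¹ * ((∫ x, B x ∂ν) / (I : ℝ)) * transfer ν k g y =
      ∫ x, (k x y - s) • B x ∂ν := by
    simp_rw [sub_smul]
    rw [integral_sub (g := fun x => s • B x) ((hk.bddMeasurable_smul hB y).integrable ν)
      ((hB.integrable ν).smul s), integral_smul, Complex.real_smul, hs, transfer]
    push_cast
    ring
  rw [hsplit]
  calc ‖∫ x, (k x y - s) • B x ∂ν‖ ≤ ∫ x, b * (k x y • g x - s * g x) ∂ν := by
        refine norm_integral_le_of_norm_le ((hkg.sub (hgi.const_mul s)).const_mul b)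
          (ae_of_all _ fun x => ?_)
        rw [norm_smul, Real.norm_of_nonneg (sub_nonneg.2 (hsk x)), smul_eq_mul, ← sub_mul,
          mul_left_comm]
        exact mul_le_mul_of_nonneg_left (hb x) (sub_nonneg.2 (hsk x))
    _ = b * (transfer ν k g y - s * I) := by
        rw [integral_const_mul, integral_sub hkg (hgi.const_mul s), integral_const_mul, transfer]
    _ = _ := by rw [hs, div_mul_cancel₀ _ hI.ne']; ring

end EllipticDensity

/-- `G` is within relative distance `θ` of the multiple `A • g` of the positive weight `g`, whose
oscillation is at most `D`. -/
structure NearMultiple (θ D : ℝ) (A : ℂ) (G : E → ℂ) (g : E → ℝ) : Prop where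
  bddMeasurable : BddMeasurable G
  bddMeasurable_weight : BddMeasurable g
  pos : ∀ x, 0 < g x
  osc : ∀ x x', g x ≤ D * g x'
  ne_zero : A ≠ 0
  close : ∀ x, ‖G x - A * g x‖ ≤ θ * (‖A‖ * g x)

/-- A site factor close enough to `1` for the contraction of `C`-elliptic densities to absorb it. -/
structure SmallPerturbation (C : ℝ) (e : E → ℂ) : Prop where
  measurable : Measurable e
  norm_sub_one_le : ∀ x, ‖e x - 1‖ ≤ (C ^ 2)⁻¹ / 64

theorem inv_sq_le_one {C : ℝ} (hC : 1 ≤ C) : (C ^ 2)⁻¹ ≤ 1 :=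
  inv_le_one_of_one_le₀ (one_le_pow₀ hC)

namespace SmallPerturbation

variable {C : ℝ} {e : E → ℂ}

theorem one : SmallPerturbation C (1 : E → ℂ) :=
  ⟨measurable_const, fun _ => by simp only [Pi.one_apply, sub_self, norm_zero]; positivity⟩

theorem bddMeasurable (he : SmallPerturbation C e) : BddMeasurable e :=
  ⟨he.measurable, (C ^ 2)⁻¹ / 64 + 1, fun x =>
    (norm_le_norm_sub_add (e x) 1).trans (by simpa using he.norm_sub_one_le x)⟩

end SmallPerturbation

namespace NearMultiple

variable {C θ D : ℝ} {A : ℂ} {G : E → ℂ} {g : E → ℝ}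

theorem norm_mul_weight (h : NearMultiple θ D A G g) (x : E) : ‖A * g x‖ = ‖A‖ * g x := by
  rw [norm_mul, Complex.norm_real, Real.norm_of_nonneg (h.pos x).le]

theorem norm_le (h : NearMultiple θ D A G g) (x : E) : ‖G x‖ ≤ (1 + θ) * (‖A‖ * g x) := by
  have := (norm_le_norm_sub_add (G x) (A * g x)).trans (add_le_add_left (h.close x) _)
  rw [h.norm_mul_weight] at this
  linarith

theorem ofReal (hg : BddMeasurable g) (hpos : ∀ x, 0 < g x) (hosc : ∀ x x', g x ≤ D * g x')
    (hθ : 0 ≤ θ) : NearMultiple θ D 1 (fun x => (g x : ℂ)) g :=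
  ⟨hg.ofReal, hg, hpos, hosc, one_ne_zero, fun x => by
    have := (hpos x).le
    rw [one_mul, sub_self, norm_zero]
    positivity⟩

theorem norm_mul_sub_le (h : NearMultiple θ D A G g) {ε : ℝ} {e : E → ℂ}
    (he : ∀ x, ‖e x - 1‖ ≤ ε) (x : E) :
    ‖e x * G x - A * g x‖ ≤ (θ + ε * (1 + θ)) * ‖A‖ * g x := by
  calc ‖e x * G x - A * g x‖ = ‖(e x - 1) * G x + (G x - A * g x)‖ := by ring_nf
    _ ≤ ε * ((1 + θ) * (‖A‖ * g x)) + θ * (‖A‖ * g x) := by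
        refine (norm_add_le _ _).trans (add_le_add ?_ (h.close x))
        rw [norm_mul]
        exact mul_le_mul (he x) (h.norm_le x) (norm_nonneg _) ((norm_nonneg _).trans (he x))
    _ = _ := by ring

/-- One transfer step: the Doeblin contraction compensates the perturbation by `e`. -/
theorem exists_transfer {k : E → E → ℝ} (hk : EllipticDensity C k)
    (h : NearMultiple (1 / 16) (C ^ 2) A G g) {e : E → ℂ} (he : SmallPerturbation C e)
    (ν : Measure E) [IsProbabilityMeasure ν] :
    ∃ A' : ℂ, NearMultiple (1 / 16) (C ^ 2) A' (transfer ν k fun x => e x * G x)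
      (transfer ν k g) := by
  have hg := h.bddMeasurable_weight
  have hg0 (x : E) : 0 ≤ g x := (h.pos x).le
  have hI := hg.integral_pos h.pos ν
  have hA : 0 < ‖A‖ := norm_pos_iff.2 h.ne_zero
  set c : ℝ := (C ^ 2)⁻¹ with hc
  have hc0 : 0 < c := inv_pos.2 (pow_pos hk.const_pos 2)
  have hc1 : c ≤ 1 := inv_sq_le_one hk.one_le
  set θ' : ℝ := 1 / 16 + c / 64 * (1 + 1 / 16) with hθ'
  set B : E → ℂ := fun x => e x * G x - A * g x with hB
  have hAg : BddMeasurable fun x => A * (g x : ℂ) := (BddMeasurable.const A).mul hg.ofReal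
  have hBm : BddMeasurable B := (he.bddMeasurable.mul h.bddMeasurable).sub hAg
  have hBb (x : E) : ‖B x‖ ≤ θ' * ‖A‖ * g x := h.norm_mul_sub_le he.norm_sub_one_le x
  set q : ℂ := (∫ x, B x ∂ν) / (∫ x, g x ∂ν : ℝ) with hq
  have hq_le : ‖q‖ ≤ θ' * ‖A‖ := by
    rw [hq, norm_div, Complex.norm_real, Real.norm_of_nonneg hI.le, div_le_iff₀ hI,
      ← integral_const_mul]
    exact norm_integral_le_of_norm_le ((hg.integrable ν).const_mul _) (ae_of_all _ hBb)
  have hA' : (1 - c * θ') * ‖A‖ ≤ ‖A + c * q‖ := by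
    have h1 := norm_sub_le_norm_add A (c * q)
    rw [norm_mul, Complex.norm_real, Real.norm_of_nonneg hc0.le] at h1
    nlinarith
  refine ⟨A + c * q, hk.bddMeasurable_transfer (he.bddMeasurable.mul h.bddMeasurable) ν,
    hk.bddMeasurable_transfer hg ν, hk.transfer_pos hg h.pos ν,
    hk.transfer_le_sq_mul_transfer hg hg0 ν, norm_pos_iff.1 (lt_of_lt_of_le ?_ hA'), fun y => ?_⟩
  · exact mul_pos (by nlinarith) hA
  have hsplit : transfer ν k (fun x => e x * G x) y =
      transfer ν k B y + A * transfer ν k g y := by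
    rw [transfer, transfer, transfer, ← integral_complex_ofReal, ← integral_const_mul,
      ← integral_add ((hk.bddMeasurable_smul hBm y).integrable ν)]
    · congr 1; ext x; simp only [hB, Complex.real_smul, smul_eq_mul, Complex.ofReal_mul]; ring
    · exact ((BddMeasurable.const A).mul (hk.bddMeasurable_smul hg y).ofReal).integrable ν
  have hdoeblin := hk.norm_transfer_sub_le hBm hg h.pos hBb ν y
  have hpos := hk.transfer_pos hg h.pos ν y
  have hcontract : (1 - c) * θ' ≤ 1 / 16 * (1 - c * θ') := by nlinarith
  calc ‖transfer ν k (fun x => e x * G x) y - (A + c * q) * transfer ν k g y‖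
      = ‖transfer ν k B y - c * q * transfer ν k g y‖ := by rw [hsplit]; ring_nf
    _ ≤ (1 - c) * θ' * (‖A‖ * transfer ν k g y) := by
        refine Eq.trans_le ?_ (hdoeblin.trans_eq (by ring))
        rw [hq, hc, Complex.ofReal_inv, Complex.ofReal_pow]
    _ ≤ 1 / 16 * ((1 - c * θ') * ‖A‖ * transfer ν k g y) := by
        rw [mul_assoc (1 - c * θ'), ← mul_assoc (1 / 16)]; gcongr
    _ ≤ 1 / 16 * (‖A + c * q‖ * transfer ν k g y) := by gcongr

theorem mul {D₁ D₂ : ℝ} {A₁ A₂ : ℂ} {G₁ G₂ : E → ℂ} {g₁ g₂ : E → ℝ}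
    (h₁ : NearMultiple (1 / 16) D₁ A₁ G₁ g₁) (h₂ : NearMultiple (1 / 16) D₂ A₂ G₂ g₂) :
    NearMultiple (1 / 7) (D₁ * D₂) (A₁ * A₂) (fun x => G₁ x * G₂ x) (fun x => g₁ x * g₂ x) := by
  refine ⟨h₁.bddMeasurable.mul h₂.bddMeasurable,
    h₁.bddMeasurable_weight.mul h₂.bddMeasurable_weight, fun x => mul_pos (h₁.pos x) (h₂.pos x),
    fun x x' => ?_, mul_ne_zero h₁.ne_zero h₂.ne_zero, fun x => ?_⟩
  · exact (mul_le_mul (h₁.osc x x') (h₂.osc x x') (h₂.pos x).le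
      ((h₁.pos x).le.trans (h₁.osc x x'))).trans_eq (by ring)
  · have c₁ := h₁.close x
    have c₂ := h₂.close x
    have n₁ := h₁.norm_mul_weight x
    have n₂ := h₂.norm_mul_weight x
    set a := A₁ * (g₁ x : ℂ)
    set b := A₂ * (g₂ x : ℂ)
    rw [← n₁] at c₁
    rw [← n₂] at c₂
    calc ‖G₁ x * G₂ x - A₁ * A₂ * ((g₁ x * g₂ x : ℝ) : ℂ)‖
        = ‖(G₁ x - a) * (G₂ x - b) + (G₁ x - a) * b + a * (G₂ x - b)‖ := by
          congr 1; push_cast; ring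
      _ ≤ 1 / 16 * ‖a‖ * (1 / 16 * ‖b‖) + 1 / 16 * ‖a‖ * ‖b‖ + ‖a‖ * (1 / 16 * ‖b‖) := by
          refine (norm_add₃_le).trans ?_
          simp only [norm_mul]
          gcongr
      _ ≤ 1 / 7 * (‖a‖ * ‖b‖) := by nlinarith [mul_nonneg (norm_nonneg a) (norm_nonneg b)]
      _ = _ := by rw [n₁, n₂, norm_mul]; ring

theorem norm_integral_div_sub_le (hC : 1 ≤ C) (h : NearMultiple (1 / 7) D A G g) {e : E → ℂ}
    (he : SmallPerturbation C e) (ν : Measure E) [IsProbabilityMeasure ν] :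
    ‖(∫ x, e x * G x ∂ν) / (∫ x, g x ∂ν : ℝ) - A‖ ≤ 1 / 6 * ‖A‖ := by
  have hg := h.bddMeasurable_weight
  have hI := hg.integral_pos h.pos ν
  have he' (x : E) : ‖e x - 1‖ ≤ 1 / 64 :=
    (he.norm_sub_one_le x).trans (by linarith [inv_sq_le_one hC])
  have hAg : BddMeasurable fun x => A * (g x : ℂ) := (BddMeasurable.const A).mul hg.ofReal
  rw [div_sub' (Complex.ofReal_ne_zero.2 hI.ne'), norm_div, Complex.norm_real,
    Real.norm_of_nonneg hI.le, div_le_iff₀ hI, mul_comm _ A, ← integral_complex_ofReal,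
    ← integral_const_mul, ← integral_const_mul,
    ← integral_sub ((he.bddMeasurable.mul h.bddMeasurable).integrable ν) (hAg.integrable ν)]
  refine norm_integral_le_of_norm_le ((hg.integrable ν).const_mul _) (ae_of_all _ fun x => ?_)
  refine (h.norm_mul_sub_le he' x).trans ?_
  have := h.pos x
  gcongr
  norm_num

theorem norm_integral_div_le (h : NearMultiple (1 / 7) D A G g) {u : E → ℂ}
    (hu : BddMeasurable u) (ν : Measure E) [IsProbabilityMeasure ν] :
    ‖(∫ x, u x * G x ∂ν) / (∫ x, g x ∂ν : ℝ)‖ ≤ 8 / 7 * ‖A‖ * D * ∫ x, ‖u x‖ ∂ν := by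
  have hg := h.bddMeasurable_weight
  have hI := hg.integral_pos h.pos ν
  have hgI (x : E) : g x ≤ D * ∫ x', g x' ∂ν := by
    rw [← integral_const_mul]
    simpa using integral_mono (integrable_const (g x)) ((hg.integrable ν).const_mul D) (h.osc x)
  rw [norm_div, Complex.norm_real, Real.norm_of_nonneg hI.le, div_le_iff₀ hI, mul_right_comm,
    ← integral_const_mul]
  refine norm_integral_le_of_norm_le ((hu.norm.integrable ν).const_mul _) (ae_of_all _ fun x => ?_)
  rw [norm_mul, mul_comm]
  gcongr
  refine (h.norm_le x).trans ?_
  calc (1 + 1 / 7) * (‖A‖ * g x) ≤ (1 + 1 / 7) * (‖A‖ * (D * ∫ x', g x' ∂ν)) := by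
        gcongr; exact hgI x
    _ = _ := by ring

end NearMultiple

end Transfer

/-! ### Partition functions and Gibbs averages -/

section PartitionFunction

variable {E : Type*} [MeasurableSpace E] {𝕜 : Type*} [RCLike 𝕜]

/-- The partition function of the chain: the product of the densities `p i (x i) (x (i+1))` and of
the site factors `e i (x i)` is integrated over the sites `i < n`, the site `n` being frozen. -/
def partitionFun (p : ℕ → E → E → ℝ) (ν : ℕ → Measure E) (e : ℕ → E → 𝕜) : ℕ → E → 𝕜
  | 0 => 1
  | n + 1 => transfer (ν n) (p n) fun x => e n x * partitionFun p ν e n x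

/-- Transport of an observable of the site `j + d` to the site `j`, by integrating out the sites
above `j`. -/
def pullBack (p : ℕ → E → E → ℝ) (ν : ℕ → Measure E) (e : ℕ → E → 𝕜) (j : ℕ) :
    ℕ → (E → 𝕜) → E → 𝕜
  | 0, F => F
  | d + 1, F => pullBack p ν e j d
      (transfer (ν (j + d + 1)) (fun x y => p (j + d) y x) fun x => e (j + d + 1) x * F x)

/-- The weight of the state `x` at site `j` in the partition function at time `j + d + 1`, with the
factor of that site left out. -/
def siteWeight (p : ℕ → E → E → ℝ) (ν : ℕ → Measure E) (e : ℕ → E → 𝕜) (j d : ℕ) (y x : E) : 𝕜 :=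
  pullBack p ν e j d (fun x => (p (j + d) x y : 𝕜)) x * partitionFun p ν e j x

/-- The partition function normalised by its mass, that is, the expectation of the product of the
site factors under the Gibbs measure of the chain. -/
def gibbsAverage (p : ℕ → E → E → ℝ) (ν : ℕ → Measure E) (e : ℕ → E → ℂ) (n : ℕ) (y : E) : ℂ :=
  partitionFun p ν e n y / (partitionFun p ν (1 : ℕ → E → ℝ) n y : ℝ)

variable {C : ℝ} {p : ℕ → E → E → ℝ} {ν ν' : ℕ → Measure E}

theorem partitionFun_congr {e e' : ℕ → E → 𝕜} {n : ℕ} (hν : ∀ i < n, ν i = ν' i)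
    (he : ∀ i < n, e i = e' i) : partitionFun p ν e n = partitionFun p ν' e' n := by
  induction n with
  | zero => rfl
  | succ n ih =>
    rw [partitionFun, partitionFun, ih (fun i hi => hν i (by omega)) fun i hi => he i (by omega),
      hν n n.lt_succ_self, he n n.lt_succ_self]

theorem partitionFun_one_succ (n : ℕ) : partitionFun p ν (1 : ℕ → E → 𝕜) (n + 1) =
    transfer (ν n) (p n) (partitionFun p ν (1 : ℕ → E → 𝕜) n) := by
  simp only [partitionFun, Pi.one_apply, one_mul]

theorem partitionFun_one_ofReal (n : ℕ) (y : E) :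
    partitionFun p ν (1 : ℕ → E → ℂ) n y = (partitionFun p ν (1 : ℕ → E → ℝ) n y : ℝ) := by
  induction n generalizing y with
  | zero => simp only [partitionFun, Pi.one_apply, Complex.ofReal_one]
  | succ n ih =>
    rw [partitionFun_one_succ, partitionFun_one_succ, transfer, transfer, ← integral_complex_ofReal]
    congr 1; ext x
    rw [ih, Complex.real_smul, smul_eq_mul, Complex.ofReal_mul]

theorem gibbsAverage_congr {e e' : ℕ → E → ℂ} {n : ℕ} {y : E} (hν : ∀ i < n, ν i = ν' i)
    (he : ∀ i < n, e i = e' i) : gibbsAverage p ν e n y = gibbsAverage p ν' e' n y := by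
  rw [gibbsAverage, gibbsAverage, partitionFun_congr hν he, partitionFun_congr hν fun _ _ => rfl]

theorem pullBack_congr {e e' : ℕ → E → 𝕜} {j d : ℕ} {F : E → 𝕜} (hν : ∀ i, j < i → ν i = ν' i)
    (he : ∀ i, j < i → e i = e' i) : pullBack p ν e j d F = pullBack p ν' e' j d F := by
  induction d generalizing F with
  | zero => rfl
  | succ d ih => rw [pullBack, pullBack, ih, hν _ (by omega), he _ (by omega)]

theorem siteWeight_congr {e e' : ℕ → E → 𝕜} {j d : ℕ} (hν : ∀ i ≠ j, ν i = ν' i)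
    (he : ∀ i ≠ j, e i = e' i) : siteWeight p ν e j d = siteWeight p ν' e' j d := by
  ext y x
  rw [siteWeight, siteWeight, pullBack_congr (fun i hi => hν i hi.ne') fun i hi => he i hi.ne',
    partitionFun_congr (fun i hi => hν i hi.ne) fun i hi => he i hi.ne]

variable [∀ n, IsProbabilityMeasure (ν n)]

theorem bddMeasurable_partitionFun (hp : ∀ n, EllipticDensity C (p n)) {e : ℕ → E → 𝕜}
    (he : ∀ n, BddMeasurable (e n)) (n : ℕ) : BddMeasurable (partitionFun p ν e n) := by
  induction n with
  | zero => exact .const 1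
  | succ n ih => exact (hp n).bddMeasurable_transfer ((he n).mul ih) (ν n)

theorem exists_nearMultiple_partitionFun (hp : ∀ n, EllipticDensity C (p n)) {e : ℕ → E → ℂ}
    (he : ∀ n, SmallPerturbation C (e n)) (n : ℕ) :
    ∃ A : ℂ, NearMultiple (1 / 16) (C ^ 2) A (partitionFun p ν e n)
      (partitionFun p ν (1 : ℕ → E → ℝ) n) := by
  induction n with
  | zero =>
    have h := NearMultiple.ofReal (θ := 1 / 16) (D := C ^ 2) (g := fun _ : E => 1) (.const 1)
      (fun _ => one_pos) (fun _ _ => (one_le_pow₀ (hp 0).one_le).trans_eq (mul_one _).symm)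
      (by norm_num)
    simp only [Complex.ofReal_one] at h
    exact ⟨1, h⟩
  | succ n ih =>
    obtain ⟨A, hA⟩ := ih
    rw [partitionFun_one_succ]
    exact hA.exists_transfer (hp n) (he n) (ν n)

theorem partitionFun_one_pos (hp : ∀ n, EllipticDensity C (p n)) (n : ℕ) (y : E) :
    0 < partitionFun p ν (1 : ℕ → E → ℝ) n y := by
  obtain ⟨A, hA⟩ := exists_nearMultiple_partitionFun (ν := ν) hp (fun _ => .one) n
  exact hA.pos y

theorem exists_nearMultiple_pullBack (hp : ∀ n, EllipticDensity C (p n)) {e : ℕ → E → ℂ}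
    (he : ∀ n, SmallPerturbation C (e n)) (j d : ℕ) {A : ℂ} {F : E → ℂ} {Φ : E → ℝ}
    (h : NearMultiple (1 / 16) (C ^ 2) A F Φ) :
    ∃ A' : ℂ, NearMultiple (1 / 16) (C ^ 2) A' (pullBack p ν e j d F)
      (pullBack p ν (1 : ℕ → E → ℝ) j d Φ) := by
  induction d generalizing A F Φ with
  | zero => exact ⟨A, h⟩
  | succ d ih =>
    obtain ⟨A₁, h₁⟩ := h.exists_transfer (hp (j + d)).flip (he (j + d + 1)) (ν (j + d + 1))
    simpa only [pullBack, Pi.one_apply, one_mul] using ih h₁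

theorem exists_nearMultiple_siteWeight (hp : ∀ n, EllipticDensity C (p n)) {e : ℕ → E → ℂ}
    (he : ∀ n, SmallPerturbation C (e n)) (j d : ℕ) (y : E) :
    ∃ A : ℂ, NearMultiple (1 / 7) (C ^ 4) A (siteWeight p ν e j d y)
      (siteWeight p ν (1 : ℕ → E → ℝ) j d y) := by
  have hk := hp (j + d)
  have hosc (x x' : E) : p (j + d) x y ≤ C ^ 2 * p (j + d) x' y := by
    have hC := hk.const_pos
    calc p (j + d) x y ≤ C := hk.le x y
      _ = C ^ 2 * C⁻¹ := by field_simp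
      _ ≤ _ := by gcongr; exact hk.inv_le x' y
  obtain ⟨A₁, h₁⟩ := exists_nearMultiple_pullBack (ν := ν) hp he j d
    (.ofReal (hk.bddMeasurable_left y) (fun x => hk.pos x y) hosc (by norm_num))
  obtain ⟨A₂, h₂⟩ := exists_nearMultiple_partitionFun (ν := ν) hp he j
  rw [show C ^ 4 = C ^ 2 * C ^ 2 by ring]
  exact ⟨A₁ * A₂, h₁.mul h₂⟩

theorem integral_mul_partitionFun (hp : ∀ n, EllipticDensity C (p n)) {e : ℕ → E → 𝕜}
    (he : ∀ n, BddMeasurable (e n)) (j d : ℕ) {F : E → 𝕜} (hF : BddMeasurable F) :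
    ∫ x, F x * (e (j + d) x * partitionFun p ν e (j + d) x) ∂ν (j + d) =
      ∫ x, pullBack p ν e j d F x * (e j x * partitionFun p ν e j x) ∂ν j := by
  induction d generalizing F with
  | zero => rfl
  | succ d ih =>
    have hZ := bddMeasurable_partitionFun (ν := ν) hp he (j + d)
    rw [pullBack, ← ih ((hp (j + d)).flip.bddMeasurable_transfer ((he _).mul hF) _),
      ← (hp (j + d)).integral_mul_transfer ((he _).mul hF) ((he _).mul hZ)]
    congr 1; ext x
    rw [← add_assoc, partitionFun]
    ring

theorem partitionFun_eq_integral_siteWeight (hp : ∀ n, EllipticDensity C (p n)) {e : ℕ → E → 𝕜}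
    (he : ∀ n, BddMeasurable (e n)) (j d : ℕ) (y : E) :
    partitionFun p ν e (j + d + 1) y = ∫ x, e j x * siteWeight p ν e j d y x ∂ν j := by
  calc partitionFun p ν e (j + d + 1) y
      = ∫ x, (p (j + d) x y : 𝕜) * (e (j + d) x * partitionFun p ν e (j + d) x) ∂ν (j + d) := by
        simp only [partitionFun, transfer, RCLike.real_smul_eq_coe_mul]
    _ = _ := integral_mul_partitionFun hp he j d ((hp (j + d)).bddMeasurable_left y).ofReal
    _ = _ := by simp only [siteWeight, mul_left_comm]

theorem gibbsAverage_one (hp : ∀ n, EllipticDensity C (p n)) (n : ℕ) (y : E) :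
    gibbsAverage p ν 1 n y = 1 := by
  rw [gibbsAverage, partitionFun_one_ofReal,
    div_self (Complex.ofReal_ne_zero.2 (partitionFun_one_pos hp n y).ne')]

theorem gibbsAverage_eq_integral_siteWeight (hp : ∀ n, EllipticDensity C (p n)) {e : ℕ → E → ℂ}
    (he : ∀ n, BddMeasurable (e n)) (j d : ℕ) (y : E) :
    gibbsAverage p ν e (j + d + 1) y = (∫ x, e j x * siteWeight p ν e j d y x ∂ν j) /
      (∫ x, siteWeight p ν (1 : ℕ → E → ℝ) j d y x ∂ν j : ℝ) := by
  rw [gibbsAverage, partitionFun_eq_integral_siteWeight hp he,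
    partitionFun_eq_integral_siteWeight (e := (1 : ℕ → E → ℝ)) hp fun _ => .const 1]
  simp only [Pi.one_apply, one_mul]

end PartitionFunction

section SiteChange

variable {E : Type*} [MeasurableSpace E] {C : ℝ} {p : ℕ → E → E → ℝ} {ν ν' : ℕ → Measure E}
  [∀ n, IsProbabilityMeasure (ν n)] [∀ n, IsProbabilityMeasure (ν' n)] {e e' : ℕ → E → ℂ}
  {j n : ℕ}

theorem mul_norm_le_norm_of_norm_sub_le {A z : ℂ} (h : ‖z - A‖ ≤ 1 / 6 * ‖A‖) :
    5 / 6 * ‖A‖ ≤ ‖z‖ := by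
  have := norm_le_norm_sub_add A z
  rw [norm_sub_rev] at this
  linarith

/-- A change at the single site `j` moves the Gibbs average only within a disc, centered at some
`A ≠ 0`, whose radius is a fraction of `‖A‖`. -/
theorem norm_gibbsAverage_div_sub_one_le_half (hp : ∀ n, EllipticDensity C (p n))
    (he : ∀ n, SmallPerturbation C (e n)) (he' : ∀ n, SmallPerturbation C (e' n)) (hjn : j ≤ n)
    (hν : ∀ i ≠ j, ν i = ν' i) (hee : ∀ i ≠ j, e i = e' i) (y : E) :
    gibbsAverage p ν e (n + 1) y ≠ 0 ∧
      ‖gibbsAverage p ν' e' (n + 1) y / gibbsAverage p ν e (n + 1) y - 1‖ ≤ 1 / 2 := by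
  obtain ⟨d, rfl⟩ := Nat.exists_eq_add_of_le hjn
  obtain ⟨A, hA⟩ := exists_nearMultiple_siteWeight (ν := ν) hp he j d y
  have h₁ := hA.norm_integral_div_sub_le (hp 0).one_le (he j) (ν j)
  have h₂ := hA.norm_integral_div_sub_le (hp 0).one_le (he' j) (ν' j)
  rw [← gibbsAverage_eq_integral_siteWeight hp fun n => (he n).bddMeasurable] at h₁
  rw [siteWeight_congr hν hee, siteWeight_congr hν fun _ _ => rfl,
    ← gibbsAverage_eq_integral_siteWeight hp fun n => (he' n).bddMeasurable] at h₂
  have hA0 := norm_pos_iff.2 hA.ne_zero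
  have hz := mul_norm_le_norm_of_norm_sub_le h₁
  set z₁ := gibbsAverage p ν e (j + d + 1) y
  set z₂ := gibbsAverage p ν' e' (j + d + 1) y
  have hz₁ : z₁ ≠ 0 := norm_pos_iff.1 (by linarith)
  refine ⟨hz₁, ?_⟩
  rw [div_sub_one hz₁, norm_div, div_le_iff₀ (norm_pos_iff.2 hz₁)]
  have := norm_sub_le_norm_sub_add_norm_sub z₂ A z₁
  rw [norm_sub_rev A] at this
  linarith

theorem norm_gibbsAverage_div_sub_one_le_integral (hp : ∀ n, EllipticDensity C (p n))
    (he : ∀ n, SmallPerturbation C (e n)) (he' : ∀ n, SmallPerturbation C (e' n)) (hjn : j ≤ n)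
    (hee : ∀ i ≠ j, e i = e' i) (y : E) :
    ‖gibbsAverage p ν e' (n + 1) y / gibbsAverage p ν e (n + 1) y - 1‖ ≤
      2 * C ^ 4 * ∫ x, ‖e' j x - e j x‖ ∂ν j := by
  have hne := (norm_gibbsAverage_div_sub_one_le_half hp he he' hjn (fun _ _ => rfl) hee y
    (ν := ν) (ν' := ν)).1
  obtain ⟨d, rfl⟩ := Nat.exists_eq_add_of_le hjn
  obtain ⟨A, hA⟩ := exists_nearMultiple_siteWeight (ν := ν) hp he j d y
  have hbe := (he j).bddMeasurable
  have hbe' := (he' j).bddMeasurable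
  have hz := mul_norm_le_norm_of_norm_sub_le
    (hA.norm_integral_div_sub_le (hp 0).one_le (he j) (ν j))
  have hdiff := hA.norm_integral_div_le (hbe'.sub hbe) (ν j)
  simp_rw [sub_mul] at hdiff
  rw [integral_sub ((hbe'.mul hA.bddMeasurable).integrable _)
    ((hbe.mul hA.bddMeasurable).integrable _), sub_div,
    ← gibbsAverage_eq_integral_siteWeight hp fun n => (he n).bddMeasurable,
    siteWeight_congr (fun _ _ => rfl) hee,
    ← gibbsAverage_eq_integral_siteWeight hp fun n => (he' n).bddMeasurable] at hdiff
  rw [← gibbsAverage_eq_integral_siteWeight hp fun n => (he n).bddMeasurable] at hz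
  rw [div_sub_one hne, norm_div, div_le_iff₀ (norm_pos_iff.2 hne)]
  set I := ∫ x, ‖e' j x - e j x‖ ∂ν j
  have hI : 0 ≤ C ^ 4 * I := mul_nonneg (by positivity) (integral_nonneg fun _ => norm_nonneg _)
  nlinarith [mul_nonneg hI (norm_nonneg A), mul_le_mul_of_nonneg_left hz hI]

end SiteChange

/-! ### Generating functions of additive functionals -/

section PathSum

/-- The site factors whose product along a path is the exponential of `z * ∑ i, g i (x i)`. -/
def expSite {E : Type*} (g : ℕ → E → ℤ) (z : ℂ) (n : ℕ) (x : E) : ℂ := Complex.exp (z * g n x)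

theorem expSite_zero {E : Type*} (g : ℕ → E → ℤ) : expSite g 0 = 1 := by
  ext i x
  simp only [expSite, zero_mul, Complex.exp_zero, Pi.one_apply]

variable {E : Type*} [MeasurableSpace E] {C : ℝ} {p : ℕ → E → E → ℝ} {ν : ℕ → Measure E}
  {g : ℕ → E → ℤ} {M : ℕ}

/-- The unnormalised law of `∑ i < n, g i (x i)` under the weights defining `partitionFun`. -/
def pathSumWeight (p : ℕ → E → E → ℝ) (ν : ℕ → Measure E) (g : ℕ → E → ℤ) : ℕ → E → ℤ → ℝ
  | 0, _, a => if a = 0 then 1 else 0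
  | n + 1, y, a => transfer (ν n) (p n) (fun x => pathSumWeight p ν g n x (a - g n x)) y

/-- The law of `∑ i < n, g i (x i)` under the Gibbs measure of the chain. -/
def gibbsLaw (p : ℕ → E → E → ℝ) (ν : ℕ → Measure E) (g : ℕ → E → ℤ) (n : ℕ) (y : E) (a : ℤ) :
    ℝ := pathSumWeight p ν g n y a / partitionFun p ν (1 : ℕ → E → ℝ) n y

/-- A finite set carrying the sums of `n` integers of absolute value at most `M`. -/
def sumRange (M n : ℕ) : Finset ℤ := Finset.Icc (-(n * M : ℤ)) (n * M)

theorem pathSumWeight_eq_zero (hM : ∀ n x, |g n x| ≤ (M : ℤ)) (n : ℕ) (y : E) {a : ℤ}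
    (ha : a ∉ sumRange M n) : pathSumWeight p ν g n y a = 0 := by
  induction n generalizing y a with
  | zero =>
    refine if_neg ?_
    rintro rfl
    simp [sumRange] at ha
  | succ n ih =>
    refine integral_eq_zero_of_ae (ae_of_all _ fun x => ?_)
    refine smul_eq_zero_of_right _ (ih x fun hmem => ha ?_)
    simp only [sumRange, Finset.mem_Icc] at hmem ⊢
    have := abs_le.1 (hM n x)
    push_cast
    constructor <;> linarith

theorem gibbsLaw_eq_zero (hM : ∀ n x, |g n x| ≤ (M : ℤ)) (n : ℕ) (y : E) {a : ℤ}
    (ha : a ∉ sumRange M n) : gibbsLaw p ν g n y a = 0 := by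
  rw [gibbsLaw, pathSumWeight_eq_zero hM n y ha, zero_div]

theorem pathSumWeight_nonneg (hp : ∀ n, EllipticDensity C (p n)) (n : ℕ) (y : E) (a : ℤ) :
    0 ≤ pathSumWeight p ν g n y a := by
  induction n generalizing y a with
  | zero => rw [pathSumWeight]; split_ifs <;> simp
  | succ n ih => exact integral_nonneg fun x => mul_nonneg ((hp n).pos x y).le (ih x _)

theorem sum_sumRange_eq_sum_shift {F : ℤ → ℂ} {n : ℕ} {s : ℤ} (hF : ∀ a ∉ sumRange M n, F a = 0)
    (hs : |s| ≤ M) : ∑ a ∈ sumRange M n, F a = ∑ b ∈ sumRange M (n + 1), F (b - s) := by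
  have h := abs_le.1 hs
  have hshift : ∑ a ∈ sumRange M n, F a =
      ∑ b ∈ Finset.Icc (-(n * M : ℤ) + s) (n * M + s), F (b - s) := by
    simp only [← Finset.map_add_right_Icc, Finset.sum_map, addRightEmbedding_apply,
      add_sub_cancel_right, sumRange]
  rw [hshift]
  refine Finset.sum_subset (Finset.Icc_subset_Icc ?_ ?_) fun b _ hb => hF _ fun hmem => hb ?_
  · push_cast; linarith
  · push_cast; linarith
  · rw [sumRange, Finset.mem_Icc] at hmem
    rw [Finset.mem_Icc]
    constructor <;> linarith

theorem gibbsAverage_expSite_shift (b : ℕ → ℤ) (z : ℂ) (n : ℕ) (y : E) :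
    gibbsAverage p ν (expSite g z) n y = Complex.exp (z * ((∑ i ∈ range n, b i : ℤ) : ℂ)) *
      gibbsAverage p ν (expSite (fun i x => g i x - b i) z) n y := by
  rw [gibbsAverage, gibbsAverage, ← mul_div_assoc]
  congr 1
  induction n generalizing y with
  | zero => simp [partitionFun]
  | succ n ih =>
    rw [partitionFun, partitionFun, transfer, transfer, ← integral_const_mul]
    congr 1; ext x
    rw [ih, expSite, expSite, Finset.sum_range_succ, Complex.real_smul, Complex.real_smul,
      show z * (g n x : ℂ) = z * (b n : ℂ) + z * ((g n x - b n : ℤ) : ℂ) by push_cast; ring,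
      Int.cast_add, mul_add, Complex.exp_add, Complex.exp_add]
    ring

variable [∀ n, IsProbabilityMeasure (ν n)]

theorem bddMeasurable_pathSumWeight_shift (hp : ∀ n, EllipticDensity C (p n))
    (hg : ∀ n, Measurable (g n)) (n : ℕ) {h : E → ℤ} (hh : Measurable h) (a : ℤ) :
    BddMeasurable (fun x => pathSumWeight p ν g n x (a - h x)) := by
  have hbound (y : E) (a : ℤ) : ‖pathSumWeight p ν g n y a‖ ≤ C ^ n := by
    induction n generalizing y a with
    | zero => rw [pathSumWeight]; split_ifs <;> simp
    | succ n ih =>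
      refine (norm_integral_le_of_norm_le_const (C := C ^ (n + 1)) (ae_of_all _ fun x => ?_)).trans
        (by simp)
      rw [norm_smul, pow_succ']
      exact mul_le_mul ((hp n).norm_le x y) (ih _ _) (norm_nonneg _) (hp n).const_pos.le
  have hmeas (a : ℤ) : Measurable (fun x => pathSumWeight p ν g n x a) := by
    cases n with
    | zero => exact measurable_const
    | succ n =>
      exact ((hp n).bddMeasurable_transfer
        (bddMeasurable_pathSumWeight_shift hp hg n (hg n) a) (ν n)).1
  have hprod : Measurable fun z : E × ℤ => pathSumWeight p ν g n z.1 z.2 :=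
    measurable_from_prod_countable_left hmeas
  exact ⟨hprod.comp (measurable_id.prodMk (measurable_const.sub hh)), C ^ n, fun x => hbound x _⟩

theorem partitionFun_expSite (hp : ∀ n, EllipticDensity C (p n)) (hg : ∀ n, Measurable (g n))
    (hM : ∀ n x, |g n x| ≤ (M : ℤ)) (z : ℂ) (n : ℕ) (y : E) :
    partitionFun p ν (expSite g z) n y = laplace (sumRange M n) (pathSumWeight p ν g n y) z := by
  induction n generalizing y with
  | zero => simp [partitionFun, laplace, pathSumWeight, sumRange]
  | succ n ih =>
    have hexpand (x : E) : p n x y • (expSite g z n x * partitionFun p ν (expSite g z) n x) =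
        ∑ b ∈ sumRange M (n + 1),
          ((p n x y • pathSumWeight p ν g n x (b - g n x) : ℝ) : ℂ) * Complex.exp (z * b) := by
      rw [ih x, laplace, sum_sumRange_eq_sum_shift (s := g n x) (fun a ha => by
        rw [pathSumWeight_eq_zero hM n x ha, Complex.ofReal_zero, zero_mul]) (hM n x),
        Finset.mul_sum, Finset.smul_sum]
      refine Finset.sum_congr rfl fun b _ => ?_
      rw [expSite, mul_left_comm, ← Complex.exp_add, Complex.real_smul, smul_eq_mul]
      push_cast
      rw [mul_assoc]
      congr 3
      ring
    have hb (b : ℤ) : BddMeasurable fun x => p n x y • pathSumWeight p ν g n x (b - g n x) :=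
      (hp n).bddMeasurable_smul (bddMeasurable_pathSumWeight_shift hp hg n (hg n) b) y
    simp_rw [partitionFun, transfer, hexpand, laplace]
    rw [integral_finsetSum _ fun b _ => ((hb b).ofReal.mul (.const _)).integrable (ν n)]
    refine Finset.sum_congr rfl fun b _ => ?_
    rw [integral_mul_const, integral_complex_ofReal, pathSumWeight, transfer]

theorem laplace_gibbsLaw (hp : ∀ n, EllipticDensity C (p n)) (hg : ∀ n, Measurable (g n))
    (hM : ∀ n x, |g n x| ≤ (M : ℤ)) (n : ℕ) (y : E) (z : ℂ) :
    laplace (sumRange M n) (gibbsLaw p ν g n y) z = gibbsAverage p ν (expSite g z) n y := by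
  rw [gibbsAverage, partitionFun_expSite hp hg hM, laplace, laplace, Finset.sum_div]
  refine Finset.sum_congr rfl fun k _ => ?_
  rw [gibbsLaw, Complex.ofReal_div, div_mul_eq_mul_div]

theorem differentiable_gibbsAverage_expSite (hp : ∀ n, EllipticDensity C (p n))
    (hg : ∀ n, Measurable (g n)) (hM : ∀ n x, |g n x| ≤ (M : ℤ)) (n : ℕ) (y : E) :
    Differentiable ℂ (fun z => gibbsAverage p ν (expSite g z) n y) := by
  simp_rw [← laplace_gibbsLaw hp hg hM]
  exact fun z => (hasDerivAt_sum_mul_exp _ _ z).differentiableAt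

theorem gibbsLaw_nonneg (hp : ∀ n, EllipticDensity C (p n)) (n : ℕ) (y : E) (a : ℤ) :
    0 ≤ gibbsLaw p ν g n y a :=
  div_nonneg (pathSumWeight_nonneg hp n y a) (partitionFun_one_pos hp n y).le

theorem sum_gibbsLaw (hp : ∀ n, EllipticDensity C (p n)) (hg : ∀ n, Measurable (g n))
    (hM : ∀ n x, |g n x| ≤ (M : ℤ)) (n : ℕ) (y : E) :
    ∑ k ∈ sumRange M n, gibbsLaw p ν g n y k = 1 := by
  have h := laplace_gibbsLaw hp hg hM n y 0 (ν := ν)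
  rw [expSite_zero, gibbsAverage_one hp] at h
  simp only [laplace, zero_mul, Complex.exp_zero, mul_one] at h
  exact_mod_cast h

end PathSum

section HolomorphicLog

/-- Telescoping the principal logarithms of the successive ratios. -/
theorem exists_log_telescope {U : Set ℂ} {L : ℕ → ℂ → ℂ} {b : ℕ → ℝ} (n : ℕ)
    (hd : ∀ j, DifferentiableOn ℂ (L j) U) (hne : ∀ j < n, ∀ z ∈ U, L j z ≠ 0)
    (hhalf : ∀ j < n, ∀ z ∈ U, ‖L (j + 1) z / L j z - 1‖ ≤ 1 / 2)
    (hb : ∀ j < n, ∀ z ∈ U, ‖L (j + 1) z / L j z - 1‖ ≤ b j) :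
    ∃ Λ : ℂ → ℂ, DifferentiableOn ℂ Λ U ∧ (∀ z, (∀ j, L j z = 1) → Λ z = 0) ∧
      ∀ z ∈ U, L n z = Complex.exp (Λ z) * L 0 z ∧ ‖Λ z‖ ≤ 3 / 2 * ∑ j ∈ range n, b j := by
  induction n with
  | zero => exact ⟨0, differentiableOn_const 0, fun _ _ => rfl, fun z _ => by simp⟩
  | succ n ih =>
    obtain ⟨Λ, hΛd, hΛ0, hΛ⟩ := ih (fun j hj => hne j (by omega)) (fun j hj => hhalf j (by omega))
      fun j hj => hb j (by omega)
    have hslit (z : ℂ) (hz : z ∈ U) : L (n + 1) z / L n z ∈ Complex.slitPlane := by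
      rw [← add_sub_cancel 1 (L (n + 1) z / L n z)]
      exact Complex.mem_slitPlane_of_norm_lt_one
        ((hhalf n n.lt_succ_self z hz).trans_lt (by norm_num))
    refine ⟨fun z => Λ z + Complex.log (L (n + 1) z / L n z), ?_, fun z hz => ?_,
      fun z hz => ⟨?_, ?_⟩⟩
    · exact hΛd.add (((hd _).div (hd n) (hne n n.lt_succ_self)).clog hslit)
    · simp only [hΛ0 z hz, hz, div_one, Complex.log_one, add_zero]
    · rw [Complex.exp_add, Complex.exp_log (Complex.slitPlane_ne_zero (hslit z hz)),
        mul_right_comm, ← (hΛ z hz).1, mul_div_cancel₀ _ (hne n n.lt_succ_self z hz)]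
    · have hlog := Complex.norm_log_one_add_half_le_self (hhalf n n.lt_succ_self z hz)
      rw [add_sub_cancel] at hlog
      rw [Finset.sum_range_succ, mul_add]
      exact (norm_add_le _ _).trans (add_le_add (hΛ z hz).2
        (hlog.trans (mul_le_mul_of_nonneg_left (hb n n.lt_succ_self z hz) (by norm_num))))

/-- The sequence equal to `a` before `j` and to `b` from `j` on. -/
def splice {α : Type*} (j : ℕ) (a b : ℕ → α) (i : ℕ) : α := if i < j then a i else b i

theorem splice_succ_of_ne {α : Type*} {j i : ℕ} (a b : ℕ → α) (h : i ≠ j) :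
    splice j a b i = splice (j + 1) a b i := by
  have : i < j + 1 ↔ i < j := by omega
  simp only [splice, this]

theorem splice_forall {α : Type*} {P : ℕ → α → Prop} {a b : ℕ → α} (ha : ∀ i, P i (a i))
    (hb : ∀ i, P i (b i)) (j i : ℕ) : P i (splice j a b i) := by
  unfold splice
  split_ifs
  exacts [ha i, hb i]

variable {E : Type*} [MeasurableSpace E] {C : ℝ} {p : ℕ → E → E → ℝ} {ν ν' : ℕ → Measure E}
  {g : ℕ → E → ℤ} {M : ℕ}

/-- Radius of the disc on which the site factors `expSite g z` are small perturbations of `1`. -/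
def discRadius (C : ℝ) (M : ℕ) : ℝ := (C ^ 2)⁻¹ / (128 * (M + 1))

theorem discRadius_pos (hC : 0 < C) (M : ℕ) : 0 < discRadius C M := by
  unfold discRadius; positivity

theorem smallPerturbation_expSite (hC : 1 ≤ C) (hg : ∀ n, Measurable (g n))
    (hM : ∀ n x, |g n x| ≤ (M : ℤ)) {z : ℂ} (hz : z ∈ Metric.ball (0 : ℂ) (discRadius C M))
    (n : ℕ) : SmallPerturbation C (expSite g z n) := by
  refine ⟨(measurable_of_countable fun k : ℤ => Complex.exp (z * k)).comp (hg n), fun x => ?_⟩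
  have hc1 := inv_sq_le_one hC
  have hgM : ‖((g n x : ℤ) : ℂ)‖ ≤ M + 1 := by
    rw [Complex.norm_intCast]
    have : |((g n x : ℤ) : ℝ)| ≤ M := by exact_mod_cast hM n x
    linarith
  have hzg : ‖z * (g n x : ℂ)‖ ≤ (C ^ 2)⁻¹ / 128 := by
    rw [norm_mul]
    calc _ ≤ discRadius C M * (M + 1) :=
          mul_le_mul (mem_ball_zero_iff.1 hz).le hgM (norm_nonneg _)
            (discRadius_pos (one_pos.trans_le hC) M).le
      _ = _ := by unfold discRadius; field_simp
  refine (Complex.norm_exp_sub_one_le (by linarith)).trans ?_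
  linarith

variable [∀ n, IsProbabilityMeasure (ν n)] [∀ n, IsProbabilityMeasure (ν' n)]

theorem integral_norm_expSite_sub_one_le (hC : 1 ≤ C) (hg : ∀ n, Measurable (g n))
    (hM : ∀ n x, |g n x| ≤ (M : ℤ)) {z : ℂ} (hz : z ∈ Metric.ball (0 : ℂ) (discRadius C M))
    (n : ℕ) : ∫ x, ‖expSite g z n x - 1‖ ∂ν n ≤ (ν n).real {x | g n x ≠ 0} := by
  have hms : MeasurableSet {x | g n x ≠ 0} := (hg n) (measurableSet_singleton 0).compl
  have hc1 := inv_sq_le_one hC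
  rw [← integral_indicator_one hms]
  refine integral_mono_of_nonneg (ae_of_all _ fun _ => norm_nonneg _)
    ((integrable_const (1 : ℝ)).indicator hms) (ae_of_all _ fun x => ?_)
  by_cases hx : g n x = 0
  · simp [expSite, hx]
  · rw [Set.indicator_of_mem (show x ∈ {x | g n x ≠ 0} from hx)]
    refine ((smallPerturbation_expSite hC hg hM hz n).norm_sub_one_le x).trans ?_
    rw [Pi.one_apply]; linarith

theorem exists_log_gibbsAverage (hp : ∀ n, EllipticDensity C (p n)) (hg : ∀ n, Measurable (g n))
    (hM : ∀ n x, |g n x| ≤ (M : ℤ)) (N : ℕ) (y : E) :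
    ∃ Λ : ℂ → ℂ, DifferentiableOn ℂ Λ (Metric.ball 0 (discRadius C M)) ∧ Λ 0 = 0 ∧
      ∀ z ∈ Metric.ball (0 : ℂ) (discRadius C M),
        gibbsAverage p ν (expSite g z) (N + 1) y = Complex.exp (Λ z) ∧
        ‖Λ z‖ ≤ 3 * C ^ 4 * ∑ i ∈ range (N + 1), (ν i).real {x | g i x ≠ 0} := by
  have hC := (hp 0).one_le
  have hsm (j : ℕ) := splice_forall (P := fun _ => Measurable) (b := (0 : ℕ → E → ℤ)) hg
    (fun _ => measurable_zero) j
  have hsM (j : ℕ) := splice_forall (P := fun _ (h : E → ℤ) => ∀ x, |h x| ≤ (M : ℤ)) hM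
    (b := (0 : ℕ → E → ℤ)) (fun i x => by simp) j
  have hsp (j : ℕ) {z : ℂ} (hz : z ∈ Metric.ball (0 : ℂ) (discRadius C M)) :=
    smallPerturbation_expSite hC (hsm j) (hsM j) hz
  have hstep (j : ℕ) (z : ℂ) (i : ℕ) (hi : i ≠ j) :
      expSite (splice j g 0) z i = expSite (splice (j + 1) g 0) z i := by
    ext x; rw [expSite, expSite, splice_succ_of_ne g 0 hi]
  obtain ⟨Λ, hΛd, hΛ0, hΛ⟩ := exists_log_telescope (N + 1)
    (L := fun j z => gibbsAverage p ν (expSite (splice j g 0) z) (N + 1) y)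
    (U := Metric.ball 0 (discRadius C M)) (b := fun j => 2 * C ^ 4 * (ν j).real {x | g j x ≠ 0})
    (fun j => (differentiable_gibbsAverage_expSite hp (hsm j) (hsM j) _ y).differentiableOn)
    (fun j hj z hz => (norm_gibbsAverage_div_sub_one_le_half hp (hsp j hz) (hsp (j + 1) hz)
      (Nat.lt_succ_iff.1 hj) (fun _ _ => rfl) (hstep j z) y (ν' := ν)).1)
    (fun j hj z hz => (norm_gibbsAverage_div_sub_one_le_half hp (hsp j hz) (hsp (j + 1) hz)
      (Nat.lt_succ_iff.1 hj) (fun _ _ => rfl) (hstep j z) y).2)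
    (fun j hj z hz => by
      refine (norm_gibbsAverage_div_sub_one_le_integral hp (hsp j hz) (hsp (j + 1) hz)
        (Nat.lt_succ_iff.1 hj) (hstep j z) y).trans ?_
      gcongr
      simpa [expSite, splice] using integral_norm_expSite_sub_one_le hC hg hM hz j)
  refine ⟨Λ, hΛd, hΛ0 0 fun j => by rw [expSite_zero, gibbsAverage_one hp], fun z hz => ⟨?_, ?_⟩⟩
  · have h := (hΛ z hz).1
    have h0 : expSite (splice 0 g 0) z = 1 := by ext i x; simp [expSite, splice]
    rw [h0, gibbsAverage_one hp, mul_one] at h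
    rw [← h]
    refine gibbsAverage_congr (fun _ _ => rfl) fun i hi => ?_
    ext x; rw [expSite, expSite, splice, if_pos hi]
  · refine (hΛ z hz).2.trans_eq ?_
    rw [← Finset.mul_sum]; ring

theorem exists_log_gibbsAverage_of_measure_change (hp : ∀ n, EllipticDensity C (p n))
    (hg : ∀ n, Measurable (g n)) (hM : ∀ n x, |g n x| ≤ (M : ℤ)) (N : ℕ) (y : E) (J : Finset ℕ)
    (hJ : ∀ i ∉ J, ν' i = ν i) :
    ∃ Δ : ℂ → ℂ, DifferentiableOn ℂ Δ (Metric.ball 0 (discRadius C M)) ∧ Δ 0 = 0 ∧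
      ∀ z ∈ Metric.ball (0 : ℂ) (discRadius C M),
        gibbsAverage p ν' (expSite g z) (N + 1) y =
          Complex.exp (Δ z) * gibbsAverage p ν (expSite g z) (N + 1) y ∧
        ‖Δ z‖ ≤ J.card := by
  have hC := (hp 0).one_le
  have hprob (j i : ℕ) : IsProbabilityMeasure (splice j ν' ν i) :=
    splice_forall (P := fun _ μ => IsProbabilityMeasure μ) inferInstance inferInstance j i
  have hsp {z : ℂ} (hz : z ∈ Metric.ball (0 : ℂ) (discRadius C M)) :=
    smallPerturbation_expSite hC hg hM hz
  have hstep (j : ℕ) {z : ℂ} (hz : z ∈ Metric.ball (0 : ℂ) (discRadius C M)) (hj : j < N + 1) :=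
    norm_gibbsAverage_div_sub_one_le_half hp (hsp hz) (hsp hz) (Nat.lt_succ_iff.1 hj)
      (fun i hi => splice_succ_of_ne ν' ν (i := i) hi) (fun _ _ => rfl) y
  obtain ⟨Δ, hΔd, hΔ0, hΔ⟩ := exists_log_telescope (N + 1)
    (L := fun j z => gibbsAverage p (splice j ν' ν) (expSite g z) (N + 1) y)
    (U := Metric.ball 0 (discRadius C M)) (b := fun j => if j ∈ J then 1 / 2 else 0)
    (fun j => (differentiable_gibbsAverage_expSite hp hg hM _ y).differentiableOn)
    (fun j hj z hz => (hstep j hz hj).1) (fun j hj z hz => (hstep j hz hj).2)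
    (fun j hj z hz => by
      split_ifs with hmem
      · exact (hstep j hz hj).2
      · have : splice (j + 1) ν' ν = splice j ν' ν := funext fun i => by
          rcases eq_or_ne i j with rfl | hi
          · simp [splice, hJ i hmem]
          · exact (splice_succ_of_ne ν' ν hi).symm
        rw [this, div_self (hstep j hz hj).1, sub_self, norm_zero])
  refine ⟨Δ, hΔd, hΔ0 0 fun j => by rw [expSite_zero, gibbsAverage_one hp], fun z hz => ⟨?_, ?_⟩⟩
  · refine Eq.trans (gibbsAverage_congr (fun i hi => ?_) fun _ _ => rfl) (hΔ z hz).1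
    rw [splice, if_pos hi]
  · refine (hΔ z hz).2.trans ?_
    rw [Finset.sum_ite_mem, Finset.sum_const, nsmul_eq_mul]
    have : ((range (N + 1) ∩ J).card : ℝ) ≤ J.card :=
      Nat.cast_le.2 (Finset.card_le_card Finset.inter_subset_right)
    linarith [(Nat.cast_nonneg J.card : (0 : ℝ) ≤ _)]

end HolomorphicLog

/-! ### Decay of Gibbs averages of dispersed factors -/

section Decay

variable {E : Type*} [MeasurableSpace E]

/-- A function into the unit disc which, whatever the unit complex number `w`, is at mean distance
at least `ζ` from `w⁻¹`, the distance being measured by `1 - (w * e x).re`. -/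
structure Dispersed (ζ : ℝ) (ν : Measure E) (e : E → ℂ) : Prop where
  measurable : Measurable e
  norm_le_one : ∀ x, ‖e x‖ ≤ 1
  nonneg : 0 ≤ ζ
  le_integral : ∀ w : ℂ, ‖w‖ = 1 → ζ ≤ ∫ x, (1 - (w * e x).re) ∂ν

theorem Dispersed.bddMeasurable {ζ : ℝ} {ν : Measure E} {e : E → ℂ} (he : Dispersed ζ ν e) :
    BddMeasurable e := ⟨he.measurable, 1, he.norm_le_one⟩

theorem re_mul_le_one {e w : ℂ} (he : ‖e‖ ≤ 1) (hw : ‖w‖ = 1) : (w * e).re ≤ 1 :=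
  (Complex.re_le_norm _).trans (by rwa [norm_mul, hw, one_mul])

theorem exists_norm_integral_mul_eq_sub {ν : Measure E} [IsFiniteMeasure ν] {h : E → ℝ}
    {e : E → ℂ} (hh : BddMeasurable h) (he : BddMeasurable e) :
    ∃ w : ℂ, ‖w‖ = 1 ∧
      ‖∫ x, (h x : ℂ) * e x ∂ν‖ = ∫ x, h x ∂ν - ∫ x, h x * (1 - (w * e x).re) ∂ν := by
  obtain ⟨w, hw, hwv⟩ := RCLike.exists_norm_eq_mul_self (∫ x, (h x : ℂ) * e x ∂ν)
  have hint : Integrable (fun x => (h x : ℂ) * (w * e x)) ν :=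
    (hh.ofReal.mul ((BddMeasurable.const w).mul he)).integrable ν
  have hre : ‖∫ x, (h x : ℂ) * e x ∂ν‖ = ∫ x, h x * (w * e x).re ∂ν := by
    rw [← RCLike.ofReal_re (K := ℂ) ‖_‖, hwv, ← integral_const_mul]
    simp_rw [mul_left_comm w]
    rw [← integral_re hint]
    simp only [RCLike.re_to_complex, Complex.re_ofReal_mul]
  have hint' : Integrable (fun x => h x * (w * e x).re) ν := by
    simpa only [RCLike.re_to_complex, Complex.re_ofReal_mul] using hint.re
  refine ⟨w, hw, ?_⟩
  simp only [mul_sub, mul_one]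
  rw [integral_sub (hh.integrable ν) hint', hre, sub_sub_cancel]

theorem Dispersed.norm_integral_mul_le {a b ζ : ℝ} {ν : Measure E} [IsProbabilityMeasure ν]
    {h : E → ℝ} {e : E → ℂ} (he : Dispersed ζ ν e) (hh : BddMeasurable h) (ha : 0 < a)
    (hlo : ∀ x, a ≤ h x) (hb : 0 < b) (hhi : ∀ x, h x ≤ b) :
    ‖∫ x, (h x : ℂ) * e x ∂ν‖ ≤ Real.exp (-(a / b * ζ)) * ∫ x, h x ∂ν := by
  obtain ⟨w, hw, hnorm⟩ := exists_norm_integral_mul_eq_sub (ν := ν) hh he.bddMeasurable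
  have hdef : BddMeasurable (fun x => (1 - (w * e x).re)) :=
    (BddMeasurable.const (1 : ℝ)).sub (F := fun _ => 1) ⟨Complex.measurable_re.comp
      (measurable_const.mul he.measurable), 1, fun x => (Complex.abs_re_le_norm _).trans
        (by rw [norm_mul, hw, one_mul]; exact he.norm_le_one x)⟩
  have hdefect : a * ζ ≤ ∫ x, h x * (1 - (w * e x).re) ∂ν := by
    calc a * ζ ≤ a * ∫ x, (1 - (w * e x).re) ∂ν := by gcongr; exact he.le_integral w hw
      _ = ∫ x, a * (1 - (w * e x).re) ∂ν := (integral_const_mul _ _).symm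
      _ ≤ _ := integral_mono ((hdef.integrable ν).const_mul a) ((hh.mul hdef).integrable ν)
        fun x => mul_le_mul_of_nonneg_right (hlo x)
          (sub_nonneg.2 (re_mul_le_one (he.norm_le_one x) hw))
  have hle : ∫ x, h x ∂ν ≤ b := by
    simpa using integral_mono (hh.integrable ν) (integrable_const b) hhi
  have h0 : 0 ≤ ∫ x, h x ∂ν := integral_nonneg fun x => ha.le.trans (hlo x)
  have hζ : 0 ≤ a / b * ζ := mul_nonneg (div_pos ha hb).le he.nonneg
  calc ‖∫ x, (h x : ℂ) * e x ∂ν‖ ≤ ∫ x, h x ∂ν - a * ζ := by rw [hnorm]; linarith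
    _ = ∫ x, h x ∂ν - a / b * ζ * b := by field_simp
    _ ≤ ∫ x, h x ∂ν - a / b * ζ * ∫ x, h x ∂ν := by gcongr
    _ = (-(a / b * ζ) + 1) * ∫ x, h x ∂ν := by ring
    _ ≤ _ := by gcongr; exact Real.add_one_le_exp _

variable {C : ℝ} {p : ℕ → E → E → ℝ} {ν : ℕ → Measure E} {e : ℕ → E → ℂ} {ζ : ℕ → ℝ}

/-- The decay accumulated along every other site: integrating out one site with both its neighbours
frozen gains a factor governed by its dispersion. -/
def parityDecay (ζ : ℕ → ℝ) : ℕ → ℝ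
  | 0 => 0
  | 1 => 0
  | n + 2 => parityDecay ζ n + ζ (n + 1)

theorem parityDecay_add_parityDecay_succ (ζ : ℕ → ℝ) (n : ℕ) :
    parityDecay ζ n + parityDecay ζ (n + 1) = ∑ i ∈ Finset.Icc 1 n, ζ i := by
  induction n with
  | zero => simp [parityDecay]
  | succ n ih =>
    rw [Finset.sum_Icc_succ_top (by omega), ← ih, parityDecay]; ring

variable [∀ n, IsProbabilityMeasure (ν n)]

theorem norm_partitionFun_succ_le (hp : ∀ n, EllipticDensity C (p n)) {n : ℕ} {β : ℝ}
    (he : ∀ x, ‖e n x‖ ≤ 1)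
    (hβ : ∀ x, ‖partitionFun p ν e n x‖ ≤ β * partitionFun p ν (1 : ℕ → E → ℝ) n x) (y : E) :
    ‖partitionFun p ν e (n + 1) y‖ ≤ β * partitionFun p ν (1 : ℕ → E → ℝ) (n + 1) y := by
  rw [partitionFun_one_succ, partitionFun, transfer, transfer, ← integral_const_mul]
  refine norm_integral_le_of_norm_le (((hp n).bddMeasurable_smul (bddMeasurable_partitionFun hp
    (fun _ => .const 1) n) y).integrable (ν n) |>.const_mul β) (ae_of_all _ fun x => ?_)
  rw [norm_smul, norm_mul, Real.norm_of_nonneg ((hp n).pos x y).le, smul_eq_mul,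
    mul_left_comm β]
  exact mul_le_mul_of_nonneg_left ((mul_le_of_le_one_left (norm_nonneg _) (he x)).trans (hβ x))
    ((hp n).pos x y).le

theorem partitionFun_add_two {𝕜 : Type*} [RCLike 𝕜] (hp : ∀ n, EllipticDensity C (p n))
    {e : ℕ → E → 𝕜} (he : ∀ n, BddMeasurable (e n)) (n : ℕ) (y : E) :
    partitionFun p ν e (n + 2) y =
      ∫ x, (∫ u, ((p n x u * p (n + 1) u y : ℝ) : 𝕜) * e (n + 1) u ∂ν (n + 1)) *
        (e n x * partitionFun p ν e n x) ∂ν n := by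
  have h := (hp n).integral_mul_transfer
    (((hp (n + 1)).bddMeasurable_left y).ofReal.mul (he (n + 1)))
    ((he n).mul (bddMeasurable_partitionFun hp he n (ν := ν))) (ν n) (ν (n + 1))
  rw [partitionFun, transfer]
  simp_rw [RCLike.real_smul_eq_coe_mul, ← mul_assoc]
  rw [partitionFun]
  refine h.trans (integral_congr_ae (ae_of_all _ fun x => ?_))
  simp only [transfer, RCLike.real_smul_eq_coe_mul, RCLike.ofReal_mul, mul_assoc]

theorem norm_partitionFun_add_two_le (hp : ∀ n, EllipticDensity C (p n))
    (he : ∀ n, Dispersed (ζ n) (ν n) (e n)) {n : ℕ} {β : ℝ}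
    (hβ : ∀ x, ‖partitionFun p ν e n x‖ ≤ β * partitionFun p ν (1 : ℕ → E → ℝ) n x) (y : E) :
    ‖partitionFun p ν e (n + 2) y‖ ≤ Real.exp (-((C ^ 4)⁻¹ * ζ (n + 1))) * β *
      partitionFun p ν (1 : ℕ → E → ℝ) (n + 2) y := by
  have hC0 := (hp 0).const_pos
  have hpair (x : E) : BddMeasurable (fun u => p n x u * p (n + 1) u y) :=
    ((hp n).flip.bddMeasurable_left x).mul ((hp (n + 1)).bddMeasurable_left y)
  have hpair0 (x : E) : 0 ≤ ∫ u, p n x u * p (n + 1) u y ∂ν (n + 1) :=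
    integral_nonneg fun u => mul_nonneg ((hp n).pos x u).le ((hp (n + 1)).pos u y).le
  have hsite (x : E) : ‖∫ u, ((p n x u * p (n + 1) u y : ℝ) : ℂ) * e (n + 1) u ∂ν (n + 1)‖ ≤
      Real.exp (-((C ^ 4)⁻¹ * ζ (n + 1))) * ∫ u, p n x u * p (n + 1) u y ∂ν (n + 1) := by
    refine ((he (n + 1)).norm_integral_mul_le (hpair x) (a := C⁻¹ * C⁻¹) (b := C * C)
      (by positivity)
      (fun u => mul_le_mul ((hp n).inv_le x u) ((hp (n + 1)).inv_le u y) (by positivity)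
        ((hp n).pos x u).le) (by positivity)
      (fun u => mul_le_mul ((hp n).le x u) ((hp (n + 1)).le u y)
        ((hp (n + 1)).pos u y).le hC0.le)).trans_eq ?_
    congr 4; field_simp
  have hone := partitionFun_add_two hp (ν := ν) (e := (1 : ℕ → E → ℝ)) (fun _ => .const 1) n y
  simp only [Pi.one_apply, mul_one, one_mul, RCLike.ofReal_real_eq_id, id_eq] at hone
  rw [partitionFun_add_two hp (fun n => (he n).bddMeasurable), hone, ← integral_const_mul]
  refine norm_integral_le_of_norm_le ?_ (ae_of_all _ fun x => ?_)
  · have hkern := (hp n).flip.bddMeasurable_transfer ((hp (n + 1)).bddMeasurable_left y) (ν (n + 1))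
    exact ((hkern.mul (bddMeasurable_partitionFun hp (fun _ => .const 1) n)).integrable
      (ν n)).const_mul _
  · rw [norm_mul, norm_mul]
    calc _ ≤ (Real.exp (-((C ^ 4)⁻¹ * ζ (n + 1))) * ∫ u, p n x u * p (n + 1) u y ∂ν (n + 1)) *
          (1 * (β * partitionFun p ν (1 : ℕ → E → ℝ) n x)) := by
          gcongr
          · exact mul_nonneg (Real.exp_pos _).le (hpair0 x)
          · exact hsite x
          · exact (he n).norm_le_one x
          · exact hβ x
      _ = _ := by ring

theorem norm_partitionFun_le_parityDecay (hp : ∀ n, EllipticDensity C (p n))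
    (he : ∀ n, Dispersed (ζ n) (ν n) (e n)) (n : ℕ) (y : E) :
    ‖partitionFun p ν e n y‖ ≤ Real.exp (-((C ^ 4)⁻¹ * parityDecay ζ n)) *
      partitionFun p ν (1 : ℕ → E → ℝ) n y := by
  induction n using Nat.twoStepInduction generalizing y with
  | zero => simp [partitionFun, parityDecay]
  | one =>
    refine norm_partitionFun_succ_le hp (he 0).norm_le_one (fun x => ?_) y
    simp [partitionFun, parityDecay]
  | more n ih _ =>
    refine (norm_partitionFun_add_two_le hp he ih y).trans_eq ?_
    rw [← Real.exp_add, parityDecay, mul_add, neg_add_rev]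

theorem norm_gibbsAverage_le_exp (hp : ∀ n, EllipticDensity C (p n))
    (he : ∀ n, Dispersed (ζ n) (ν n) (e n)) (N : ℕ) (y : E) :
    ‖gibbsAverage p ν e (N + 1) y‖ ≤
      Real.exp (-((C ^ 4)⁻¹ / 2 * ∑ i ∈ Finset.Icc 1 N, ζ i)) := by
  have hpos := partitionFun_one_pos hp (N + 1) y (ν := ν)
  have hc : 0 < (C ^ 4)⁻¹ := inv_pos.2 (pow_pos (hp 0).const_pos 4)
  rw [gibbsAverage, norm_div, Complex.norm_real, Real.norm_of_nonneg hpos.le, div_le_iff₀ hpos,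
    ← parityDecay_add_parityDecay_succ]
  rcases le_total (parityDecay ζ N) (parityDecay ζ (N + 1)) with h | h
  · refine (norm_partitionFun_le_parityDecay hp he (N + 1) y).trans
      (mul_le_mul_of_nonneg_right (Real.exp_le_exp.2 ?_) hpos.le)
    nlinarith
  · refine (norm_partitionFun_succ_le hp (he N).norm_le_one
      (norm_partitionFun_le_parityDecay hp he N) y).trans
      (mul_le_mul_of_nonneg_right (Real.exp_le_exp.2 ?_) hpos.le)
    nlinarith

end Decay

/-! ### Dispersion of characters of integer-valued functions -/

section Arithmetic

theorem one_sub_re_mul_conj_le {a b w : ℂ} (ha : ‖a‖ = 1) (hb : ‖b‖ = 1) (hw : ‖w‖ = 1) :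
    1 - (a * (starRingEnd ℂ) b).re ≤ 2 * (1 - (w * a).re) + 2 * (1 - (w * b).re) := by
  have hsq {z : ℂ} (hz : ‖z‖ = 1) : z.re ^ 2 + z.im ^ 2 = 1 := by
    rw [← one_pow 2, ← hz, ← Complex.normSq_eq_norm_sq, Complex.normSq_apply]; ring
  have ha2 := hsq ha
  have hb2 := hsq hb
  have hw2 := hsq hw
  simp only [Complex.mul_re, Complex.conj_re, Complex.conj_im]
  nlinarith [sq_nonneg (a.re + b.re - 2 * w.re), sq_nonneg (a.im + b.im + 2 * w.im)]

section Law

variable {E ι : Type*} [MeasurableSpace E] (ν : Measure E) [IsProbabilityMeasure ν]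

theorem le_measureReal_dist {φ : E → ι} {e : E → ℂ} (he : ∀ x, ‖e x‖ = 1) {c u : ℝ}
    (hsep : ∀ x x', φ x ≠ φ x' → c ≤ 1 - (e x * (starRingEnd ℂ) (e x')).re)
    (hu1 : u ≤ 1) (hu : ∀ j, u ≤ ν.real {x | φ x ≠ j}) {w : ℂ} (hw : ‖w‖ = 1) :
    u ≤ ν.real {x | c / 4 ≤ 1 - (w * e x).re} := by
  by_cases hall : ∀ x, c / 4 ≤ 1 - (w * e x).re
  · simpa only [hall, Set.ofPred_true, probReal_univ] using hu1
  · obtain ⟨x₀, hx₀⟩ := not_forall.1 hall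
    refine (hu (φ x₀)).trans (measureReal_mono fun x hx => ?_)
    by_contra hfar
    simp only [Set.mem_ofPred_eq, not_le] at hx₀ hfar
    linarith [hsep x x₀ hx, one_sub_re_mul_conj_le (he x) (he x₀) hw]

/-- Two values of `e` at mutual distance `c` cannot both be close to the same direction, so all
points outside one fibre of `φ` contribute. -/
theorem dispersed_of_separated {φ : E → ι} {e : E → ℂ} (hem : Measurable e) (he : ∀ x, ‖e x‖ = 1)
    {c u : ℝ} (hc : 0 ≤ c)
    (hsep : ∀ x x', φ x ≠ φ x' → c ≤ 1 - (e x * (starRingEnd ℂ) (e x')).re) (hu0 : 0 ≤ u)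
    (hu1 : u ≤ 1) (hu : ∀ j, u ≤ ν.real {x | φ x ≠ j}) : Dispersed (c / 4 * u) ν e := by
  refine ⟨hem, fun x => (he x).le, by positivity, fun w hw => ?_⟩
  have hre : Measurable fun x => (w * e x).re :=
    Complex.measurable_re.comp (measurable_const.mul hem)
  have hfar := measurableSet_le (measurable_const (a := c / 4)) (hre.const_sub 1)
  have hnn (x : E) : 0 ≤ 1 - (w * e x).re := sub_nonneg.2 (re_mul_le_one (he x).le hw)
  have hint : Integrable (fun x => 1 - (w * e x).re) ν := by
    refine (integrable_const 1).sub (Integrable.of_bound hre.aestronglyMeasurable 1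
      (ae_of_all _ fun x => (Complex.abs_re_le_norm _).trans ?_))
    rw [norm_mul, hw, he x, mul_one]
  calc c / 4 * u ≤ c / 4 * ν.real {x | c / 4 ≤ 1 - (w * e x).re} := by
        gcongr; exact le_measureReal_dist ν he hsep hu1 hu hw
    _ = ∫ x, {x | c / 4 ≤ 1 - (w * e x).re}.indicator (fun _ => c / 4) x ∂ν := by
        rw [integral_indicator_const _ hfar, smul_eq_mul, mul_comm]
    _ ≤ _ := integral_mono ((integrable_const _).indicator hfar) hint
        (Set.indicator_le' (fun _ hx => hx) fun x _ => hnn x)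

theorem dispersed_exp_of_separated {φ : E → ι} {g : E → ℤ} (hg : Measurable g) {t c u : ℝ}
    (hc : 0 ≤ c) (hsep : ∀ x x', φ x ≠ φ x' → c ≤ 1 - Real.cos (t * (g x - g x' : ℤ)))
    (hu0 : 0 ≤ u) (hu1 : u ≤ 1) (hu : ∀ j, u ≤ ν.real {x | φ x ≠ j}) :
    Dispersed (c / 4 * u) ν (fun x => Complex.exp (Complex.I * t * g x)) := by
  have hem : Measurable fun x => Complex.exp (Complex.I * t * g x) :=
    (measurable_of_countable fun k : ℤ => Complex.exp (Complex.I * t * k)).comp hg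
  refine dispersed_of_separated ν hem (fun x => ?_) hc
    (fun x x' hx => (hsep x x' hx).trans_eq ?_) hu0 hu1 hu
  · rw [mul_assoc, mul_comm, ← Complex.ofReal_intCast, ← Complex.ofReal_mul,
      Complex.norm_exp_ofReal_mul_I]
  · have : Complex.I * t * g x + (starRingEnd ℂ) (Complex.I * t * g x') =
        ((t * (g x - g x' : ℤ) : ℝ) : ℂ) * Complex.I := by
      simp only [map_mul, Complex.conj_I, Complex.conj_ofReal, map_intCast]; push_cast; ring
    rw [← Complex.exp_conj, ← Complex.exp_add, this, Complex.exp_ofReal_mul_I_re]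

end Law

theorem abs_sub_le_two_mul {K : ℕ} {a b : ℤ} (ha : |a| ≤ (K : ℤ)) (hb : |b| ≤ (K : ℤ)) :
    |a - b| ≤ 2 * (K : ℤ) := by
  linarith [abs_sub a b]

theorem dispersed_exp_of_small {E : Type*} [MeasurableSpace E] (ν : Measure E)
    [IsProbabilityMeasure ν] {g : E → ℤ} (hg : Measurable g) {K : ℕ} (hK : 1 ≤ K)
    (hgK : ∀ x, |g x| ≤ (K : ℤ)) {t : ℝ} (ht : |t| ≤ Real.pi / (2 * K)) {u : ℝ} (hu0 : 0 ≤ u)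
    (hu1 : u ≤ 1) (hu : ∀ a, u ≤ ν.real {x | g x ≠ a}) :
    Dispersed (t ^ 2 / (2 * Real.pi ^ 2) * u) ν
      (fun x => Complex.exp (Complex.I * t * g x)) := by
  have hsep (x x' : E) (hx : g x ≠ g x') :
      2 / Real.pi ^ 2 * t ^ 2 ≤ 1 - Real.cos (t * (g x - g x' : ℤ)) := by
    have hone : (1 : ℝ) ≤ |((g x - g x' : ℤ) : ℝ)| := by
      exact_mod_cast Int.one_le_abs (sub_ne_zero.2 hx)
    have hle : |((g x - g x' : ℤ) : ℝ)| ≤ 2 * K := by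
      exact_mod_cast abs_sub_le_two_mul (hgK x) (hgK x')
    have : (0 : ℝ) < K := by exact_mod_cast hK
    have hpi : |t * (g x - g x' : ℤ)| ≤ Real.pi := by
      rw [abs_mul]
      calc _ ≤ Real.pi / (2 * K) * (2 * K) := by gcongr
        _ = Real.pi := by field_simp
    have hsq : t ^ 2 ≤ (t * (g x - g x' : ℤ)) ^ 2 := by
      rw [mul_pow, ← sq_abs ((g x - g x' : ℤ) : ℝ)]
      exact le_mul_of_one_le_right (sq_nonneg t) (one_le_pow₀ hone)
    have := mul_le_mul_of_nonneg_left hsq (show 0 ≤ 2 / Real.pi ^ 2 by positivity)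
    linarith [Real.cos_le_one_sub_mul_cos_sq hpi]
  convert dispersed_exp_of_separated ν hg (by positivity) hsep hu0 hu1 hu using 1
  field_simp; ring

theorem exists_dvd_iff_cos_eq_one (t : ℝ) :
    ∃ m : ℕ, ∀ d : ℤ, (m : ℤ) ∣ d ↔ Real.cos (t * d) = 1 := by
  obtain ⟨a, ha⟩ := Int.subgroup_cyclic ((AddSubgroup.zmultiples (2 * Real.pi)).comap
    ((AddMonoidHom.mulLeft t).comp (Int.castAddHom ℝ)))
  refine ⟨a.natAbs, fun d => ?_⟩
  rw [Int.natAbs_dvd, ← Int.mem_zmultiples_iff, AddSubgroup.zmultiples_eq_closure, ← ha,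
    AddSubgroup.mem_comap, AddSubgroup.mem_zmultiples_iff, Real.cos_eq_one_iff]
  simp

theorem exists_modulus_cos_ne_one {K : ℕ} (hK : 1 ≤ K) {t : ℝ} (ht0 : t ≠ 0)
    (ht : |t| ≤ Real.pi) :
    ∃ m ∈ Finset.Icc 2 (2 * K), ∀ d : ℤ, |d| ≤ 2 * K → ¬ (m : ℤ) ∣ d → Real.cos (t * d) ≠ 1 := by
  obtain ⟨m, hm⟩ := exists_dvd_iff_cos_eq_one t
  by_cases hr : m ∈ Finset.Icc 2 (2 * K)
  · exact ⟨m, hr, fun d _ hnd hcos => hnd ((hm d).2 hcos)⟩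
  · have hm1 : m ≠ 1 := by
      rintro rfl
      have hcos := (hm 1).1 (by simp)
      obtain ⟨h1, h2⟩ := abs_le.1 ht
      rw [Int.cast_one, mul_one, Real.cos_eq_one_iff_of_lt_of_lt
        (by linarith [Real.pi_pos]) (by linarith [Real.pi_pos])] at hcos
      exact ht0 hcos
    refine ⟨2, Finset.mem_Icc.2 ⟨le_rfl, by omega⟩, fun d hd hnd hcos => hnd ?_⟩
    have hdvd := (hm d).2 hcos
    rcases Nat.eq_zero_or_pos m with rfl | hpos
    · rw [Nat.cast_zero, zero_dvd_iff] at hdvd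
      rw [hdvd]
      exact dvd_zero _
    · rw [Finset.mem_Icc] at hr
      rw [Int.eq_zero_of_abs_lt_dvd hdvd (by omega)]
      exact dvd_zero _

theorem exists_uniform_modulus {K : ℕ} (hK : 1 ≤ K) {η : ℝ} (hη : 0 < η) :
    ∃ c > 0, ∀ t : ℝ, η ≤ |t| → |t| ≤ Real.pi → ∃ m ∈ Finset.Icc 2 (2 * K),
      ∀ d : ℤ, |d| ≤ 2 * K → ¬ (m : ℤ) ∣ d → c ≤ 1 - Real.cos (t * d) := by
  set D : ℕ → Finset ℤ := fun m =>
    insert 1 {d ∈ Finset.Icc (-(2 * K : ℤ)) (2 * K) | ¬ (m : ℤ) ∣ d}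
  have hmD (m : ℕ) (d : ℤ) (hd : |d| ≤ 2 * K) (hnd : ¬ (m : ℤ) ∣ d) : d ∈ D m :=
    Finset.mem_insert_of_mem (Finset.mem_filter.2 ⟨Finset.mem_Icc.2 (abs_le.1 hd), hnd⟩)
  have hm0 : (Finset.Icc 2 (2 * K)).Nonempty := ⟨2, Finset.mem_Icc.2 ⟨le_rfl, by omega⟩⟩
  let gap (t : ℝ) : ℝ := (Finset.Icc 2 (2 * K)).sup' hm0 fun m =>
    (D m).inf' (Finset.insert_nonempty _ _) fun d => 1 - Real.cos (t * d)
  have hgap : Continuous gap := Continuous.finset_sup'_apply hm0 fun m _ =>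
    Continuous.finset_inf'_apply _ fun d _ => by fun_prop
  have hpos (t : ℝ) (h1 : η ≤ |t|) (h2 : |t| ≤ Real.pi) : 0 < gap t := by
    obtain ⟨m, hm, hcos⟩ := exists_modulus_cos_ne_one hK (abs_pos.1 (hη.trans_le h1)) h2
    refine (Finset.lt_sup'_iff hm0).2 ⟨m, hm, (Finset.lt_inf'_iff _).2 fun d hd => ?_⟩
    refine sub_pos.2 ((Real.cos_le_one _).lt_of_ne ?_)
    have hm2 := (Finset.mem_Icc.1 hm).1
    rcases Finset.mem_insert.1 hd with rfl | hd
    · refine hcos 1 (by rw [abs_one]; omega) fun hdvd => ?_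
      have := Int.le_of_dvd one_pos hdvd
      omega
    · rw [Finset.mem_filter, Finset.mem_Icc, ← abs_le] at hd
      exact hcos d hd.1 hd.2
  have hcompact : IsCompact {t : ℝ | η ≤ |t| ∧ |t| ≤ Real.pi} :=
    (isCompact_closedBall (0 : ℝ) Real.pi).of_isClosed_subset
      ((isClosed_le continuous_const continuous_abs).inter
        (isClosed_le continuous_abs continuous_const)) fun t ht => by simpa using ht.2
  obtain ⟨c, hc, hmin⟩ := hcompact.exists_forall_le' hgap.continuousOn (a := 0)
    fun t ht => hpos t ht.1 ht.2
  refine ⟨c, hc, fun t h1 h2 => ?_⟩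
  obtain ⟨m, hm, hle⟩ := (Finset.le_sup'_iff hm0).1 (hmin t ⟨h1, h2⟩)
  exact ⟨m, hm, fun d hd hnd => (Finset.le_inf'_iff _ _).1 hle d (hmD m d hd hnd)⟩

theorem secondLargest_nonneg {ι : Type*} [Nonempty ι] {p : ι → ℝ} (hp : ∀ i, 0 ≤ p i) :
    0 ≤ secondLargest p :=
  le_ciInf fun _ => Real.sSup_nonneg (by rintro _ ⟨i, -, rfl⟩; exact hp i)

theorem secondLargest_le {ι : Type*} {p : ι → ℝ} (hp : ∀ i, 0 ≤ p i) (j : ι) {b : ℝ}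
    (hb : 0 ≤ b) (h : ∀ i ≠ j, p i ≤ b) : secondLargest p ≤ b := by
  refine (ciInf_le ⟨0, ?_⟩ j).trans (Real.sSup_le ?_ hb)
  · rintro _ ⟨j, rfl⟩
    exact Real.sSup_nonneg (by rintro _ ⟨i, -, rfl⟩; exact hp i)
  · rintro _ ⟨i, hi, rfl⟩
    exact h i hi

section ResidueSpread

variable {E : Type*} [MeasurableSpace E]

/-- Second largest probability of a residue class modulo `m` for the law of `g` under `ν`; the
`qres` of the chain is the case where `ν` is the law of the state. -/
def residueSpread (ν : Measure E) (g : E → ℤ) (m : ℕ) : ℝ :=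
  secondLargest fun j : ZMod m => ν.real {x | (g x : ZMod m) = j}

theorem residueSpread_nonneg (ν : Measure E) (g : E → ℤ) (m : ℕ) : 0 ≤ residueSpread ν g m :=
  secondLargest_nonneg fun _ => measureReal_nonneg

variable (ν : Measure E) [IsProbabilityMeasure ν] (g : E → ℤ)

theorem residueSpread_le (m : ℕ) (j : ZMod m) :
    residueSpread ν g m ≤ ν.real {x | (g x : ZMod m) ≠ j} :=
  secondLargest_le (fun _ => measureReal_nonneg) j measureReal_nonneg fun i hi =>
    measureReal_mono fun x hx => by rw [Set.mem_ofPred_eq] at hx ⊢; rwa [hx]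

theorem residueSpread_le_one (m : ℕ) : residueSpread ν g m ≤ 1 :=
  (residueSpread_le ν g m 0).trans measureReal_le_one

variable {g}

theorem dispersed_exp_of_modulus (hg : Measurable g) {K m : ℕ} (hgK : ∀ x, |g x| ≤ (K : ℤ))
    {t c : ℝ} (hc : 0 ≤ c)
    (hd : ∀ d : ℤ, |d| ≤ 2 * K → ¬ (m : ℤ) ∣ d → c ≤ 1 - Real.cos (t * d)) :
    Dispersed (c / 4 * residueSpread ν g m) ν (fun x => Complex.exp (Complex.I * t * g x)) := by
  refine dispersed_exp_of_separated ν (φ := fun x => (g x : ZMod m)) hg hc (fun x x' hx => ?_)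
    (residueSpread_nonneg ν g m) (residueSpread_le_one ν g m) (residueSpread_le ν g m)
  exact hd _ (abs_sub_le_two_mul (hgK x) (hgK x')) fun hdvd =>
    hx ((ZMod.intCast_eq_intCast_iff_dvd_sub (g x') (g x) m).2 hdvd).symm

theorem exists_mode {K : ℕ} (hgK : ∀ x, |g x| ≤ (K : ℤ)) :
    ∃ b : ℤ, |b| ≤ K ∧ ∀ a, ν.real {x | g x ≠ b} ≤ ν.real {x | g x ≠ a} := by
  obtain ⟨b, hb, hmin⟩ := (Finset.Icc (-(K : ℤ)) K).exists_min_image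
    (fun a => ν.real {x | g x ≠ a}) ⟨0, by simp⟩
  refine ⟨b, abs_le.2 (Finset.mem_Icc.1 hb), fun a => ?_⟩
  by_cases ha : a ∈ Finset.Icc (-(K : ℤ)) K
  · exact hmin a ha
  · refine measureReal_mono fun x _ => ?_
    rintro rfl
    exact ha (Finset.mem_Icc.2 (abs_le.1 (hgK x)))

end ResidueSpread

end Arithmetic

/-! ### Cumulants of Gibbs laws -/

section LogLaplace

variable {A : Finset ℤ} {P P' : ℤ → ℝ} {B : ℂ} {δ M m : ℝ} {Λ Δ : ℂ → ℂ}

/-- The function `z ↦ z B + Λ z` is a holomorphic logarithm, on the disc of radius `δ`, of the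
Laplace transform of the law `P` on `A`. -/
structure LogLaplace (A : Finset ℤ) (P : ℤ → ℝ) (B : ℂ) (δ : ℝ) (Λ : ℂ → ℂ) : Prop where
  radius_pos : 0 < δ
  differentiableOn : DifferentiableOn ℂ Λ (Metric.ball 0 δ)
  map_zero : Λ 0 = 0
  laplace_eq : ∀ z ∈ Metric.ball (0 : ℂ) δ, laplace A P z = Complex.exp (z * B + Λ z)

namespace LogLaplace

theorem analyticAt (h : LogLaplace A P B δ Λ) : AnalyticAt ℂ Λ 0 :=
  h.differentiableOn.analyticAt (Metric.ball_mem_nhds _ h.radius_pos)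

theorem eventuallyEq (h : LogLaplace A P B δ Λ) :
    laplace A P =ᶠ[𝓝 0] fun z => Complex.exp (z * B + Λ z) :=
  Filter.eventually_of_mem (Metric.ball_mem_nhds _ h.radius_pos) h.laplace_eq

theorem sum_eq_one (h : LogLaplace A P B δ Λ) : ∑ k ∈ A, P k = 1 := by
  have h0 := h.laplace_eq 0 (Metric.mem_ball_self h.radius_pos)
  simp only [laplace, zero_mul, h.map_zero, add_zero, Complex.exp_zero, mul_one] at h0
  exact_mod_cast h0

theorem deriv_eq (h : LogLaplace A P B δ Λ) : deriv Λ 0 = latticeMean A P - B := by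
  have hlin : AnalyticAt ℂ (fun z : ℂ => z * B) 0 := by fun_prop
  rw [← deriv_log_laplace (hlin.add h.analyticAt) (by simp [h.map_zero]) h.eventuallyEq,
    deriv_add hlin.differentiableAt h.analyticAt.differentiableAt]
  simp

theorem iteratedDeriv_two_eq (h : LogLaplace A P B δ Λ) :
    iteratedDeriv 2 Λ 0 = latticeVar A P := by
  have hlin : AnalyticAt ℂ (fun z : ℂ => z * B) 0 := by fun_prop
  rw [← iteratedDeriv_two_log_laplace h.sum_eq_one (hlin.add h.analyticAt) (by simp [h.map_zero])
    h.eventuallyEq, iteratedDeriv_add hlin.contDiffAt h.analyticAt.contDiffAt]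
  simp [iteratedDeriv_succ]

theorem sum_taylorCoeff_eq (h : LogLaplace A P B δ Λ) (z : ℂ) :
    ∑ q ∈ range 3, (z - 0) ^ q • taylorCoeff Λ 0 q =
      (latticeMean A P - B) * z + latticeVar A P * z ^ 2 / 2 := by
  simp only [Finset.sum_range_succ, Finset.sum_range_zero, taylorCoeff, iteratedDeriv_zero,
    iteratedDeriv_one, h.map_zero, h.deriv_eq, h.iteratedDeriv_two_eq, smul_eq_mul, sub_zero]
  simp
  ring

theorem latticeVar_mul_sq_le (h : LogLaplace A P B δ Λ)
    (hM : ∀ z ∈ Metric.ball (0 : ℂ) δ, ‖Λ z‖ ≤ M) : latticeVar A P * δ ^ 2 ≤ 8 * M := by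
  have hδ := h.radius_pos
  have hcoeff := norm_taylorCoeff_le hδ h.differentiableOn hM 2
  rw [taylorCoeff, h.iteratedDeriv_two_eq, norm_smul, Complex.norm_real, norm_inv,
    le_div_iff₀ (by positivity)] at hcoeff
  norm_num at hcoeff
  nlinarith [mul_le_mul_of_nonneg_right (le_abs_self (latticeVar A P)) (sq_nonneg δ)]

end LogLaplace

/-- The quotient of `exp (z B + L z)` by the Laplace transform of the normal law with mean `a` and
variance `V`. -/
def gaussCorrection (B : ℂ) (L : ℂ → ℂ) (a V : ℝ) (z : ℂ) : ℂ :=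
  Complex.exp (z * B + L z - a * z - V * z ^ 2 / 2)

/-- Centering at the mean of the perturbed law removes the linear terms, while the variance of the
unperturbed law removes the quadratic term of `Λ`, but not that of the bounded function `Δ`. -/
theorem LogLaplace.norm_gaussCorrection_le (h : LogLaplace A P B δ Λ)
    (h' : LogLaplace A P' B δ (Λ + Δ)) (hM : ∀ z ∈ Metric.ball (0 : ℂ) δ, ‖Λ z‖ ≤ M)
    (hm : ∀ z ∈ Metric.ball (0 : ℂ) δ, ‖Δ z‖ ≤ m) {z : ℂ} (hz : ‖z‖ ≤ δ / 4) :
    ‖gaussCorrection B (Λ + Δ) (latticeMean A P') (latticeVar A P) z‖ ≤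
      Real.exp (2 * M * (‖z‖ / (δ / 2)) ^ 3 + m) := by
  have hδ := h.radius_pos
  have hΔ : DifferentiableOn ℂ Δ (Metric.ball 0 δ) :=
    (h'.differentiableOn.sub h.differentiableOn).congr fun z _ => by simp
  have hΔ0 : Δ 0 = 0 := by simpa [h.map_zero] using h'.map_zero
  have hΔ1 : deriv Δ 0 = latticeMean A P' - latticeMean A P := by
    have hadd := h'.deriv_eq
    rw [deriv_add h.analyticAt.differentiableAt
      (hΔ.differentiableAt (Metric.ball_mem_nhds _ hδ)), h.deriv_eq] at hadd
    linear_combination hadd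
  have hsumΔ : ∑ q ∈ range 2, (z - 0) ^ q • taylorCoeff Δ 0 q =
      (latticeMean A P' - latticeMean A P) * z := by
    simp [Finset.sum_range_succ, taylorCoeff, hΔ0, hΔ1, mul_comm]
  have hΛrem := norm_sub_sum_taylorCoeff_le hδ h.differentiableOn hM 3 (by rwa [sub_zero])
  have hΔrem := norm_sub_sum_taylorCoeff_le hδ hΔ hm 2 (by rwa [sub_zero])
  rw [h.sum_taylorCoeff_eq, sub_zero] at hΛrem
  rw [hsumΔ, sub_zero] at hΔrem
  have hsplit : z * B + (Λ + Δ) z - latticeMean A P' * z - latticeVar A P * z ^ 2 / 2 =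
      (Λ z - ((latticeMean A P - B) * z + latticeVar A P * z ^ 2 / 2)) +
        (Δ z - (latticeMean A P' - latticeMean A P) * z) := by
    simp only [Pi.add_apply]; ring
  have hm0 : 0 ≤ m := (norm_nonneg _).trans (hm 0 (Metric.mem_ball_self hδ))
  have hhalf : ‖z‖ / (δ / 2) ≤ 1 / 2 := by rw [div_le_iff₀ (by positivity)]; linarith
  have hquarter : (‖z‖ / (δ / 2)) ^ 2 ≤ (1 / 2) ^ 2 := by gcongr
  rw [gaussCorrection, Complex.norm_exp, hsplit]
  refine Real.exp_le_exp.2 ((Complex.re_le_norm _).trans ?_)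
  refine (norm_add_le _ _).trans (add_le_add hΛrem (hΔrem.trans ?_))
  nlinarith

theorem LogLaplace.laplace_eq_gaussCorrection (h : LogLaplace A P B δ Λ) {t : ℝ} (ht : |t| < δ)
    (a : ℝ) {σ V : ℝ} (hσ : σ ^ 2 = V) :
    laplace A P (Complex.I * t) = Complex.exp (Complex.I * t * a) *
      Complex.exp (-(((σ * t : ℝ) : ℂ) ^ 2 / 2)) *
        gaussCorrection B Λ a V (Complex.I * t) := by
  rw [h.laplace_eq _ (by simpa using ht), gaussCorrection, ← Complex.exp_add, ← Complex.exp_add,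
    ← hσ]
  congr 1
  push_cast
  rw [mul_pow Complex.I, Complex.I_sq]
  ring

end LogLaplace

section GibbsCumulants

variable {E : Type*} [MeasurableSpace E] {C : ℝ} {p : ℕ → E → E → ℝ} {ν ν' : ℕ → Measure E}
  {f : ℕ → E → ℤ} {K : ℕ} {b : ℕ → ℤ} {N : ℕ} {y : E}

/-- The mean of `gibbsLaw` for a functional bounded by `K`. -/
def gibbsMean (p : ℕ → E → E → ℝ) (ν : ℕ → Measure E) (f : ℕ → E → ℤ) (K n : ℕ) (y : E) : ℝ :=
  latticeMean (sumRange K n) (gibbsLaw p ν f n y)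

/-- The variance of `gibbsLaw` for a functional bounded by `K`. -/
def gibbsVar (p : ℕ → E → E → ℝ) (ν : ℕ → Measure E) (f : ℕ → E → ℤ) (K n : ℕ) (y : E) : ℝ :=
  latticeVar (sumRange K n) (gibbsLaw p ν f n y)

theorem dispersed_zero (μ : Measure E) {e : E → ℂ} (hem : Measurable e)
    (he : ∀ x, ‖e x‖ ≤ 1) : Dispersed 0 μ e :=
  ⟨hem, he, le_rfl, fun _ hw =>
    integral_nonneg fun x => sub_nonneg.2 (re_mul_le_one (he x) hw)⟩

theorem sum_sub_card_le_sum_ite (s J : Finset ℕ) {v : ℕ → ℝ} (hv : ∀ i, v i ≤ 1) :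
    ∑ i ∈ s, v i - J.card ≤ ∑ i ∈ s, if i ∈ J then 0 else v i := by
  have hcard : ∑ i ∈ s, (if i ∈ J then (1 : ℝ) else 0) ≤ J.card := by
    rw [Finset.sum_ite_mem, Finset.sum_const, nsmul_one]
    exact_mod_cast Finset.card_le_card Finset.inter_subset_right
  have hsum : ∑ i ∈ s, v i ≤ ∑ i ∈ s, ((if i ∈ J then 0 else v i) + if i ∈ J then (1 : ℝ) else 0) :=
    Finset.sum_le_sum fun i _ => by split_ifs <;> simp [hv i]
  rw [Finset.sum_add_distrib] at hsum
  linarith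

variable [∀ n, IsProbabilityMeasure (ν' n)]

/-- Changing the reference measure at the sites of `J` costs at most `|J|` of the dispersion. -/
theorem norm_laplace_gibbsLaw_le_exp (hp : ∀ n, EllipticDensity C (p n))
    (hf : ∀ n, Measurable (f n)) (hfK : ∀ n x, |f n x| ≤ (K : ℤ)) {J : Finset ℕ}
    (hJ : ∀ i ∉ J, ν' i = ν i) {t s : ℝ} (hs : 0 ≤ s) {v : ℕ → ℝ} (hv : ∀ i, v i ≤ 1)
    (hd : ∀ i, Dispersed (s * v i) (ν i) fun x => Complex.exp (Complex.I * t * f i x))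
    (N : ℕ) (y : E) :
    ‖laplace (sumRange K (N + 1)) (gibbsLaw p ν' f (N + 1) y) (Complex.I * t)‖ ≤
      Real.exp (-((C ^ 4)⁻¹ / 2 * (s * (∑ i ∈ Finset.Icc 1 N, v i - J.card)))) := by
  have hC := (hp 0).const_pos
  have hd' (i : ℕ) : Dispersed (s * if i ∈ J then 0 else v i) (ν' i)
      (expSite f (Complex.I * t) i) := by
    split_ifs with hi
    · rw [mul_zero]
      exact dispersed_zero _ (hd i).measurable (hd i).norm_le_one
    · rw [hJ i hi]
      exact hd i
  rw [laplace_gibbsLaw hp hf hfK]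
  refine (norm_gibbsAverage_le_exp hp hd' N y).trans (Real.exp_le_exp.2 (neg_le_neg ?_))
  rw [← Finset.mul_sum]
  gcongr
  exact sum_sub_card_le_sum_ite _ J hv

variable [∀ n, IsProbabilityMeasure (ν n)]

/-- Rate of the Gaussian decay of characteristic functions at low frequencies, per unit of the total
probability of deviating from the modes. -/
def gaussRate (C : ℝ) : ℝ := (4 * Real.pi ^ 2 * C ^ 4)⁻¹

theorem gaussRate_pos (hC : 0 < C) : 0 < gaussRate C := by
  unfold gaussRate; positivity

theorem norm_laplace_gibbsLaw_le_gaussRate (hp : ∀ n, EllipticDensity C (p n))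
    (hf : ∀ n, Measurable (f n)) (hK : 1 ≤ K) (hfK : ∀ n x, |f n x| ≤ (K : ℤ)) {J : Finset ℕ}
    (hJ : ∀ i ∉ J, ν' i = ν i)
    (hb : ∀ i a, (ν i).real {x | f i x ≠ b i} ≤ (ν i).real {x | f i x ≠ a}) {t : ℝ}
    (ht : |t| ≤ Real.pi / (2 * K)) (N : ℕ) (y : E) :
    ‖laplace (sumRange K (N + 1)) (gibbsLaw p ν' f (N + 1) y) (Complex.I * t)‖ ≤
      Real.exp (-(gaussRate C * t ^ 2 *
        (∑ i ∈ Finset.Icc 1 N, (ν i).real {x | f i x ≠ b i} - J.card))) := by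
  refine (norm_laplace_gibbsLaw_le_exp hp hf hfK hJ (by positivity) (fun _ => measureReal_le_one)
    (fun i => dispersed_exp_of_small (ν i) (hf i) hK (hfK i) ht measureReal_nonneg
      measureReal_le_one (hb i)) N y).trans_eq ?_
  have hC := (hp 0).const_pos
  rw [gaussRate]
  congr 2
  field_simp
  ring

/-- The characteristic function at `t = V ^ (-1/2)` is at least `1/2`, whereas dispersion at the
scale of `t` bounds it by an exponential in the left-hand side divided by `V`. -/
theorem gaussRate_mul_sum_le_gibbsVar (hp : ∀ n, EllipticDensity C (p n))
    (hf : ∀ n, Measurable (f n)) (hK : 1 ≤ K) (hfK : ∀ n x, |f n x| ≤ (K : ℤ))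
    (hb : ∀ i a, (ν i).real {x | f i x ≠ b i} ≤ (ν i).real {x | f i x ≠ a})
    (hV : (K : ℝ) ^ 2 ≤ gibbsVar p ν f K (N + 1) y) :
    gaussRate C * ∑ i ∈ Finset.Icc 1 N, (ν i).real {x | f i x ≠ b i} ≤
      gibbsVar p ν f K (N + 1) y := by
  set V := gibbsVar p ν f K (N + 1) y with hVdef
  have hK1 : (1 : ℝ) ≤ K := by exact_mod_cast hK
  have hV0 : 0 < V := by nlinarith
  set t : ℝ := (√V)⁻¹ with ht
  have ht2 : t ^ 2 = V⁻¹ := by rw [ht, inv_pow, Real.sq_sqrt hV0.le]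
  have htπ : |t| ≤ Real.pi / (2 * K) := by
    rw [abs_of_nonneg (by positivity), ht]
    calc (√V)⁻¹ ≤ (K : ℝ)⁻¹ := by gcongr; exact Real.le_sqrt_of_sq_le hV
      _ = 2 / (2 * K) := by field_simp
      _ ≤ _ := by gcongr; linarith [Real.pi_gt_three]
  have hupper :=
    norm_laplace_gibbsLaw_le_gaussRate hp hf hK hfK (J := ∅) (fun _ _ => rfl) hb htπ N y
  have hlower := one_sub_le_norm_laplace (gibbsLaw_nonneg hp (N + 1) y)
    (sum_gibbsLaw hp hf hfK (N + 1) y (ν := ν)) t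
  have hhalf : 1 - t ^ 2 / 2 * V = 1 / 2 := by rw [ht2]; field_simp; norm_num
  rw [← gibbsVar, ← hVdef, hhalf] at hlower
  have hexp : Real.exp (-1) ≤ 1 / 2 := by
    rw [Real.exp_neg, one_div]
    exact inv_anti₀ two_pos (by linarith [Real.add_one_le_exp 1])
  have hle := Real.exp_le_exp.1 (hexp.trans (hlower.trans hupper))
  rwa [ht2, Finset.card_empty, Nat.cast_zero, sub_zero, neg_le_neg_iff, mul_right_comm,
    ← div_eq_mul_inv, div_le_one hV0] at hle

theorem norm_laplace_gibbsLaw_le_of_modulus (hp : ∀ n, EllipticDensity C (p n))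
    (hf : ∀ n, Measurable (f n)) (hfK : ∀ n x, |f n x| ≤ (K : ℤ)) {J : Finset ℕ}
    (hJ : ∀ i ∉ J, ν' i = ν i) {t c : ℝ} (hc : 0 ≤ c) {m : ℕ}
    (hd : ∀ d : ℤ, |d| ≤ 2 * K → ¬ (m : ℤ) ∣ d → c ≤ 1 - Real.cos (t * d)) (N : ℕ) (y : E) :
    ‖laplace (sumRange K (N + 1)) (gibbsLaw p ν' f (N + 1) y) (Complex.I * t)‖ ≤
      Real.exp (-((C ^ 4)⁻¹ * c / 8 *
        (∑ i ∈ Finset.Icc 1 N, residueSpread (ν i) (f i) m - J.card))) := by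
  refine (norm_laplace_gibbsLaw_le_exp hp hf hfK hJ (s := c / 4) (by positivity)
    (fun i => residueSpread_le_one (ν i) (f i) m)
    (fun i => dispersed_exp_of_modulus (ν i) (hf i) (hfK i) hc hd) N y).trans_eq ?_
  congr 2
  ring

theorem exists_logLaplace_gibbsLaw (hp : ∀ n, EllipticDensity C (p n))
    (hf : ∀ n, Measurable (f n)) (hfK : ∀ n x, |f n x| ≤ (K : ℤ)) (hb : ∀ i, |b i| ≤ (K : ℤ))
    (N : ℕ) (y : E) :
    ∃ Λ : ℂ → ℂ, LogLaplace (sumRange K (N + 1)) (gibbsLaw p ν f (N + 1) y)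
        ((∑ i ∈ range (N + 1), b i : ℤ) : ℂ) (discRadius C (2 * K)) Λ ∧
      ∀ z ∈ Metric.ball (0 : ℂ) (discRadius C (2 * K)),
        ‖Λ z‖ ≤ 3 * C ^ 4 * ∑ i ∈ range (N + 1), (ν i).real {x | f i x ≠ b i} := by
  obtain ⟨Λ, hΛd, hΛ0, hΛ⟩ := exists_log_gibbsAverage (ν := ν) hp (fun n => (hf n).sub_const (b n))
    (M := 2 * K) (fun n x => by push_cast; exact abs_sub_le_two_mul (hfK n x) (hb n)) N y
  refine ⟨Λ, ⟨discRadius_pos (hp 0).const_pos _, hΛd, hΛ0, fun z hz => ?_⟩, fun z hz => ?_⟩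
  · rw [laplace_gibbsLaw hp hf hfK, gibbsAverage_expSite_shift b, (hΛ z hz).1, Complex.exp_add]
  · simpa only [sub_ne_zero] using (hΛ z hz).2

theorem LogLaplace.exists_gibbsLaw_measure_change {B : ℂ} {Λ : ℂ → ℂ}
    (h : LogLaplace (sumRange K (N + 1)) (gibbsLaw p ν f (N + 1) y) B (discRadius C (2 * K)) Λ)
    (hp : ∀ n, EllipticDensity C (p n)) (hf : ∀ n, Measurable (f n))
    (hfK : ∀ n x, |f n x| ≤ (K : ℤ)) (J : Finset ℕ) (hJ : ∀ i ∉ J, ν' i = ν i) :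
    ∃ Δ : ℂ → ℂ, LogLaplace (sumRange K (N + 1)) (gibbsLaw p ν' f (N + 1) y) B
        (discRadius C (2 * K)) (Λ + Δ) ∧
      ∀ z ∈ Metric.ball (0 : ℂ) (discRadius C (2 * K)), ‖Δ z‖ ≤ J.card := by
  obtain ⟨Δ, hΔd, hΔ0, hΔ⟩ := exists_log_gibbsAverage_of_measure_change hp hf (M := 2 * K)
    (fun n x => (hfK n x).trans (by push_cast; omega)) N y J hJ
  refine ⟨Δ, ⟨h.radius_pos, h.differentiableOn.add hΔd, by simp [h.map_zero, hΔ0], fun z hz => ?_⟩,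
    fun z hz => (hΔ z hz).2⟩
  rw [laplace_gibbsLaw hp hf hfK, (hΔ z hz).1, ← laplace_gibbsLaw hp hf hfK, h.laplace_eq z hz,
    ← Complex.exp_add, Pi.add_apply]
  congr 1
  ring

end GibbsCumulants

/-! ### Edgeworth expansion of Gibbs laws -/

section GibbsEdgeworth

/-- The lattice law `P` with centre `a` and scale `σ` has an order-`r` Edgeworth approximation by a
single polynomial of degree at most `D` and coefficients at most `M` (which collects all powers of
`σ⁻¹`), with error at most `B σ^{-(r+1)}`. -/
def EdgeworthApprox (P : ℤ → ℝ) (a σ : ℝ) (r D : ℕ) (M B : ℝ) : Prop :=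
  ∃ Q : Polynomial ℝ, Q.natDegree ≤ D ∧ (∀ i, |Q.coeff i| ≤ M) ∧
    ∀ k : ℤ, |P k - σ⁻¹ * Q.eval ((k - a) / σ) * gaussDensity ((k - a) / σ)| ≤ B * σ⁻¹ ^ (r + 1)

/-- Bound for the coefficients of the Edgeworth polynomial of order `r` when the correction factor
to the Gaussian is bounded by `M`. -/
def edgeworthCoeffBound (r : ℕ) (M : ℝ) : ℝ :=
  M * 2 ^ (3 * r) * ∑ q ∈ range (3 * r), ∑ j ∈ range (3 * r), |(realHermite q).coeff j|

/-- Bound for the error of the Edgeworth approximation of order `r`, in units of `σ^{-(r+1)}`; the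
arguments `M B c` are those of `CharControl`, and `C` is the size of the characteristic function at
high frequencies. -/
def edgeworthErrorBound (r : ℕ) (M B c C : ℝ) : ℝ :=
  (2 * Real.pi)⁻¹ * ((2 * M + (3 * r : ℕ) * M + B) * 64 ^ r *
    ∫ s : ℝ, |s| ^ (3 * r) * Real.exp (-(c * s ^ 2))) + C

theorem CharControl.edgeworthApprox {A : Finset ℤ} {P : ℤ → ℝ} {H : ℂ → ℂ}
    {a σ ρ M η c B C : ℝ} {r : ℕ} (h : CharControl A P H a σ ρ M η c B (C * σ⁻¹ ^ (r + 1)))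
    (hρ : ρ ^ 3 * σ ^ 2 = 1) (hσ : 1 ≤ σ) :
    EdgeworthApprox P a σ r (3 * r) (edgeworthCoeffBound r M)
      (edgeworthErrorBound r M B c C) := by
  have hρ0 := h.radius_pos
  have hρσ : 1 ≤ ρ * σ := by
    refine le_of_pow_le_pow_left₀ three_ne_zero (by positivity) ?_
    rw [one_pow, mul_pow]
    linear_combination hσ - σ * hρ
  exact ⟨edgeworthPoly H σ (3 * r), natDegree_edgeworthPoly_le, h.abs_coeff_le hρσ (3 * r),
    h.abs_sub_edgeworthPoly_le_of_radius hρ⟩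

theorem LogLaplace.charControl {A : Finset ℤ} {P P' : ℤ → ℝ} {B : ℂ} {Λ Δ : ℂ → ℂ}
    {δ κ m ρ η c D ε : ℝ} (h : LogLaplace A P B δ Λ) (h' : LogLaplace A P' B δ (Λ + Δ))
    (hκ : 0 ≤ κ) (hΛ : ∀ z ∈ Metric.ball (0 : ℂ) δ, ‖Λ z‖ ≤ κ * latticeVar A P)
    (hΔ : ∀ z ∈ Metric.ball (0 : ℂ) δ, ‖Δ z‖ ≤ m) (hV : 0 < latticeVar A P) (hρ : 0 < ρ)
    (hρV : ρ ^ 3 * latticeVar A P = 1) (hρη : ρ ≤ η) (hρδ : ρ ≤ δ / 4) (hη : η ≤ Real.pi)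
    (hc : 0 < c) (hc2 : c ≤ 1 / 2) (hP' : ∀ k ∉ A, P' k = 0)
    (hsmall : ∀ t : ℝ, |t| ≤ η →
      ‖laplace A P' (Complex.I * t)‖ ≤ D * Real.exp (-(c * (√(latticeVar A P) * t) ^ 2)))
    (hlarge : ∀ t : ℝ, η ≤ |t| → |t| ≤ Real.pi → ‖laplace A P' (Complex.I * t)‖ ≤ ε) :
    CharControl A P' (gaussCorrection B (Λ + Δ) (latticeMean A P') (latticeVar A P))
      (latticeMean A P') (√(latticeVar A P)) ρ (Real.exp (16 * κ / δ ^ 3 + m)) η c D ε where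
  scale_pos := Real.sqrt_pos.2 hV
  radius_pos := hρ
  radius_le := hρη
  le_pi := hη
  rate_pos := hc
  rate_le := hc2
  eq_zero := hP'
  differentiableOn := by
    have hsub : Metric.ball (0 : ℂ) ρ ⊆ Metric.ball 0 δ :=
      Metric.ball_subset_ball (by linarith [h.radius_pos])
    have hd := h'.differentiableOn.mono hsub
    unfold gaussCorrection
    fun_prop
  norm_le z hz := by
    have hδ := h.radius_pos
    have hzρ : ‖z‖ ≤ ρ := (mem_ball_zero_iff.1 hz).le
    refine (h.norm_gaussCorrection_le h' hΛ hΔ (hzρ.trans hρδ)).trans (Real.exp_le_exp.2 ?_)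
    gcongr ?_ + m
    calc 2 * (κ * latticeVar A P) * (‖z‖ / (δ / 2)) ^ 3
        ≤ 2 * (κ * latticeVar A P) * (ρ / (δ / 2)) ^ 3 := by gcongr
      _ = 16 * κ / δ ^ 3 * (ρ ^ 3 * latticeVar A P) := by field_simp; ring
      _ = _ := by rw [hρV, mul_one]
  laplace_eq t ht := h'.laplace_eq_gaussCorrection (by linarith [h.radius_pos])
    (latticeMean A P') (Real.sq_sqrt hV.le)
  norm_laplace_le_gauss := hsmall
  norm_laplace_le := hlarge

theorem inv_sqrt_pow_eq_exp {V : ℝ} (hV : 0 < V) (n : ℕ) :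
    (√V)⁻¹ ^ n = Real.exp (-(n / 2 * Real.log V)) := by
  rw [← Real.exp_log (inv_pos.2 (Real.sqrt_pos.2 hV)), ← Real.exp_nat_mul, Real.log_inv,
    Real.log_sqrt hV.le]
  congr 1; ring

theorem exists_radius {d : ℝ} (hd : 0 < d) {V : ℝ} (hV : (d ^ 3)⁻¹ ≤ V) :
    ∃ ρ > 0, ρ ≤ d ∧ ρ ^ 3 * V = 1 := by
  have hV0 : 0 < V := (inv_pos.2 (pow_pos hd 3)).trans_le hV
  have hcube : (V⁻¹ ^ (3⁻¹ : ℝ)) ^ 3 = V⁻¹ :=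
    Real.rpow_inv_natCast_pow (inv_nonneg.2 hV0.le) three_ne_zero
  refine ⟨V⁻¹ ^ (3⁻¹ : ℝ), by positivity, ?_, ?_⟩
  · refine le_of_pow_le_pow_left₀ three_ne_zero hd.le ?_
    rw [hcube]
    exact inv_le_of_inv_le₀ (by positivity) hV
  · rw [hcube, inv_mul_cancel₀ hV0.ne']

/-- Rate of the Gaussian decay of characteristic functions at low frequencies, per unit of
variance. -/
def varianceRate (C : ℝ) (K : ℕ) : ℝ :=
  min (1 / 2) (gaussRate C * discRadius C (2 * K) ^ 2 / (24 * C ^ 4))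

theorem varianceRate_pos {C : ℝ} (hC : 0 < C) (K : ℕ) : 0 < varianceRate C K := by
  have := gaussRate_pos hC
  have := discRadius_pos hC (2 * K)
  exact lt_min one_half_pos (by positivity)

theorem varianceRate_mul_le {C : ℝ} (hC : 0 < C) {K : ℕ} {U V : ℝ} (hV : 0 ≤ V)
    (hVU : V * discRadius C (2 * K) ^ 2 ≤ 8 * (3 * C ^ 4 * U)) :
    varianceRate C K * V ≤ gaussRate C * U := by
  have hg := gaussRate_pos hC
  calc varianceRate C K * V
      ≤ gaussRate C * discRadius C (2 * K) ^ 2 / (24 * C ^ 4) * V := by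
        gcongr
        exact min_le_right _ _
    _ = gaussRate C / (24 * C ^ 4) * (V * discRadius C (2 * K) ^ 2) := by ring
    _ ≤ gaussRate C / (24 * C ^ 4) * (8 * (3 * C ^ 4 * U)) := by gcongr
    _ = gaussRate C * U := by field_simp; norm_num

/-- Bound for the correction factor to the Gaussian characteristic function of a Gibbs law with `ℓ`
modified site measures. -/
def correctionBound (C : ℝ) (K ℓ : ℕ) : ℝ :=
  Real.exp (16 * (3 * C ^ 4 / gaussRate C) / discRadius C (2 * K) ^ 3 + ℓ)

variable {E : Type*} [MeasurableSpace E] {C : ℝ} {p : ℕ → E → E → ℝ} {ν ν' : ℕ → Measure E}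
  {f : ℕ → E → ℤ} {K N ℓ : ℕ} {y : E} {J : Finset ℕ} [∀ n, IsProbabilityMeasure (ν' n)]
  [∀ n, IsProbabilityMeasure (ν n)]

theorem norm_laplace_gibbsLaw_le_varianceRate (hp : ∀ n, EllipticDensity C (p n))
    (hf : ∀ n, Measurable (f n)) (hK : 1 ≤ K) (hfK : ∀ n x, |f n x| ≤ (K : ℤ))
    (hJℓ : J.card ≤ ℓ) (hJ : ∀ i ∉ J, ν' i = ν i) {b : ℕ → ℤ}
    (hb : ∀ i a, (ν i).real {x | f i x ≠ b i} ≤ (ν i).real {x | f i x ≠ a}) {V : ℝ} (hV : 0 ≤ V)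
    (hVU : varianceRate C K * V ≤
      gaussRate C * ∑ i ∈ Finset.Icc 1 N, (ν i).real {x | f i x ≠ b i}) {t : ℝ}
    (ht : |t| ≤ Real.pi / (2 * K)) :
    ‖laplace (sumRange K (N + 1)) (gibbsLaw p ν' f (N + 1) y) (Complex.I * t)‖ ≤
      Real.exp (gaussRate C * (Real.pi / (2 * K)) ^ 2 * ℓ) *
        Real.exp (-(varianceRate C K * (√V * t) ^ 2)) := by
  have hg := gaussRate_pos (hp 0).const_pos
  have hℓ : (J.card : ℝ) ≤ ℓ := by exact_mod_cast hJℓ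
  have ht2 : t ^ 2 ≤ (Real.pi / (2 * K)) ^ 2 := by rw [← sq_abs]; gcongr
  refine (norm_laplace_gibbsLaw_le_gaussRate hp hf hK hfK hJ hb ht N y).trans ?_
  rw [← Real.exp_add, mul_pow, Real.sq_sqrt hV]
  refine Real.exp_le_exp.2 ?_
  set U := ∑ i ∈ Finset.Icc 1 N, (ν i).real {x | f i x ≠ b i}
  calc -(gaussRate C * t ^ 2 * (U - J.card))
      = gaussRate C * t ^ 2 * J.card - t ^ 2 * (gaussRate C * U) := by ring
    _ ≤ gaussRate C * (Real.pi / (2 * K)) ^ 2 * ℓ - t ^ 2 * (varianceRate C K * V) := by gcongr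
    _ = _ := by ring

theorem exists_charControl_gibbsLaw (hp : ∀ n, EllipticDensity C (p n))
    (hf : ∀ n, Measurable (f n)) (hK : 1 ≤ K) (hfK : ∀ n x, |f n x| ≤ (K : ℤ))
    (hf0 : ∀ x, f 0 x = 0) (hV : (K : ℝ) ^ 2 ≤ gibbsVar p ν f K (N + 1) y)
    (hJℓ : J.card ≤ ℓ) (hJ : ∀ i ∉ J, ν' i = ν i) {ρ ε : ℝ} (hρ : 0 < ρ)
    (hρV : ρ ^ 3 * gibbsVar p ν f K (N + 1) y = 1) (hρη : ρ ≤ Real.pi / (2 * K))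
    (hρδ : ρ ≤ discRadius C (2 * K) / 4)
    (hlarge : ∀ t : ℝ, Real.pi / (2 * K) ≤ |t| → |t| ≤ Real.pi →
      ‖laplace (sumRange K (N + 1)) (gibbsLaw p ν' f (N + 1) y) (Complex.I * t)‖ ≤ ε) :
    ∃ H, CharControl (sumRange K (N + 1)) (gibbsLaw p ν' f (N + 1) y) H
      (gibbsMean p ν' f K (N + 1) y) (√(gibbsVar p ν f K (N + 1) y)) ρ (correctionBound C K ℓ)
      (Real.pi / (2 * K)) (varianceRate C K)
      (Real.exp (gaussRate C * (Real.pi / (2 * K)) ^ 2 * ℓ)) ε := by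
  have hC := (hp 0).const_pos
  have hg := gaussRate_pos hC
  have hK1 : (1 : ℝ) ≤ K := by exact_mod_cast hK
  have hℓ : (J.card : ℝ) ≤ ℓ := by exact_mod_cast hJℓ
  choose b hbK hb using fun i => exists_mode (ν i) (hfK i)
  have hV0 : 0 < gibbsVar p ν f K (N + 1) y := hV.trans_lt' (by positivity)
  obtain ⟨Λ, hΛ, hΛle⟩ := exists_logLaplace_gibbsLaw (ν := ν) hp hf hfK hbK N y
  obtain ⟨Δ, hΔ, hΔle⟩ := hΛ.exists_gibbsLaw_measure_change hp hf hfK J hJ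
  set V := gibbsVar p ν f K (N + 1) y with hVdef
  set U := ∑ i ∈ Finset.Icc 1 N, (ν i).real {x | f i x ≠ b i} with hU
  have hzero : (ν 0).real {x | f 0 x ≠ b 0} = 0 :=
    le_antisymm ((hb 0 0).trans_eq (by simp [hf0])) measureReal_nonneg
  have hUV : gaussRate C * U ≤ V := gaussRate_mul_sum_le_gibbsVar hp hf hK hfK hb hV
  rw [Finset.range_eq_Ico, Finset.sum_eq_sum_Ico_succ_bot (by lia : 0 < N + 1), hzero, zero_add,
    zero_add, Finset.Ico_add_one_right_eq_Icc, ← hU] at hΛle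
  refine ⟨_, hΛ.charControl hΔ (by positivity) (fun z hz => (hΛle z hz).trans ?_)
    (fun z hz => (hΔle z hz).trans hℓ) hV0 hρ hρV hρη hρδ
    (div_le_self Real.pi_pos.le (by linarith)) (varianceRate_pos hC K) (min_le_left _ _)
    (fun k hk => gibbsLaw_eq_zero hfK _ _ hk) (fun t ht => ?_) hlarge⟩
  · change _ ≤ 3 * C ^ 4 / gaussRate C * V
    rw [div_mul_eq_mul_div, le_div_iff₀ hg]
    nlinarith [pow_pos hC 4]
  · refine norm_laplace_gibbsLaw_le_varianceRate hp hf hK hfK hJℓ hJ hb hV0.le ?_ ht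
    exact varianceRate_mul_le hC hV0.le (hΛ.latticeVar_mul_sq_le hΛle)

theorem norm_laplace_gibbsLaw_le_pow (hp : ∀ n, EllipticDensity C (p n))
    (hf : ∀ n, Measurable (f n)) (hfK : ∀ n x, |f n x| ≤ (K : ℤ)) (hJℓ : J.card ≤ ℓ)
    (hJ : ∀ i ∉ J, ν' i = ν i) {c : ℝ} (hc : 0 < c) {V : ℝ} (hV : 0 < V) {r m : ℕ}
    (hspread : 4 * C ^ 4 / c * (r + 1) * Real.log V ≤
      ∑ i ∈ Finset.Icc 1 N, residueSpread (ν i) (f i) m) {t : ℝ}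
    (hd : ∀ d : ℤ, |d| ≤ 2 * K → ¬ (m : ℤ) ∣ d → c ≤ 1 - Real.cos (t * d)) :
    ‖laplace (sumRange K (N + 1)) (gibbsLaw p ν' f (N + 1) y) (Complex.I * t)‖ ≤
      Real.exp ((C ^ 4)⁻¹ * c / 8 * ℓ) * (√V)⁻¹ ^ (r + 1) := by
  have hC := (hp 0).const_pos
  have hℓ : (J.card : ℝ) ≤ ℓ := by exact_mod_cast hJℓ
  refine (norm_laplace_gibbsLaw_le_of_modulus hp hf hfK hJ hc.le hd N y).trans ?_
  rw [inv_sqrt_pow_eq_exp hV, ← Real.exp_add]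
  refine Real.exp_le_exp.2 ?_
  calc -((C ^ 4)⁻¹ * c / 8 * (∑ i ∈ Finset.Icc 1 N, residueSpread (ν i) (f i) m - J.card))
      ≤ -((C ^ 4)⁻¹ * c / 8 * (4 * C ^ 4 / c * (r + 1) * Real.log V - ℓ)) := by gcongr
    _ = _ := by push_cast; field_simp; ring

theorem exists_gibbsLaw_edgeworthApprox (r : ℕ) {K : ℕ} (hK : 1 ≤ K) {C : ℝ} (hC : 0 < C) :
    ∃ R > 0, ∀ ℓ : ℕ, ∃ M B V₀ : ℝ, ∀ (E : Type*) [MeasurableSpace E] (p : ℕ → E → E → ℝ)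
      (ν ν' : ℕ → Measure E) [∀ n, IsProbabilityMeasure (ν n)] [∀ n, IsProbabilityMeasure (ν' n)]
      (f : ℕ → E → ℤ) (N : ℕ) (y : E) (J : Finset ℕ),
      (∀ n, EllipticDensity C (p n)) → (∀ n, Measurable (f n)) → (∀ n x, |f n x| ≤ (K : ℤ)) →
      (∀ x, f 0 x = 0) → V₀ ≤ gibbsVar p ν f K (N + 1) y →
      (∀ m ∈ Finset.Icc 2 (2 * K), R * Real.log (gibbsVar p ν f K (N + 1) y) ≤
        ∑ i ∈ Finset.Icc 1 N, residueSpread (ν i) (f i) m) →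
      J.card ≤ ℓ → (∀ i ∉ J, ν' i = ν i) →
      EdgeworthApprox (gibbsLaw p ν' f (N + 1) y) (gibbsMean p ν' f K (N + 1) y)
        (√(gibbsVar p ν f K (N + 1) y)) r (3 * r) M B := by
  have hδ := discRadius_pos hC (2 * K)
  have hη : 0 < Real.pi / (2 * K) := by positivity
  obtain ⟨c, hc, hmod⟩ := exists_uniform_modulus hK hη
  obtain ⟨d, hd, hdη, hdδ⟩ : ∃ d > 0, d ≤ Real.pi / (2 * K) ∧ d ≤ discRadius C (2 * K) / 4 :=
    ⟨_, lt_min hη (by positivity), min_le_left _ _, min_le_right _ _⟩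
  refine ⟨4 * C ^ 4 / c * (r + 1), by positivity, fun ℓ =>
    ⟨edgeworthCoeffBound r (correctionBound C K ℓ),
      edgeworthErrorBound r (correctionBound C K ℓ)
        (Real.exp (gaussRate C * (Real.pi / (2 * K)) ^ 2 * ℓ)) (varianceRate C K)
        (Real.exp ((C ^ 4)⁻¹ * c / 8 * ℓ)), max (max 1 (K ^ 2)) (d ^ 3)⁻¹, ?_⟩⟩
  intro E _ p ν ν' _ _ f N y J hp hf hfK hf0 hV₀ hspread hJℓ hJ
  set V := gibbsVar p ν f K (N + 1) y
  obtain ⟨⟨hV1, hVK⟩, hVd⟩ : (1 ≤ V ∧ (K : ℝ) ^ 2 ≤ V) ∧ (d ^ 3)⁻¹ ≤ V := by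
    simpa only [max_le_iff] using hV₀
  have hV0 : 0 < V := one_pos.trans_le hV1
  obtain ⟨ρ, hρ, hρd, hρV⟩ := exists_radius hd hVd
  obtain ⟨H, hH⟩ := exists_charControl_gibbsLaw hp hf hK hfK hf0 hVK hJℓ hJ hρ hρV
    (hρd.trans hdη) (hρd.trans hdδ) fun t ht htπ => by
      obtain ⟨m, hm, hmt⟩ := hmod t ht htπ
      exact norm_laplace_gibbsLaw_le_pow hp hf hfK hJℓ hJ hc hV0 (hspread m hm) hmt
  exact hH.edgeworthApprox (by rwa [Real.sq_sqrt hV0.le]) (Real.one_le_sqrt.2 hV1)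

end GibbsEdgeworth

/-! ### Transition densities of uniformly elliptic chains -/

section Density

section SetSemiring

variable {α : Type*} {mα : MeasurableSpace α} {μ ν : Measure α} {𝒜 : Set (Set α)} {c : ℝ≥0∞}

theorem measure_le_mul_of_mem_supClosure (h𝒜 : IsSetSemiring 𝒜)
    (hmeas : ∀ s ∈ 𝒜, MeasurableSet s) (h : ∀ s ∈ 𝒜, μ s ≤ c * ν s) {t : Set α}
    (ht : t ∈ supClosure 𝒜) : μ t ≤ c * ν t := by
  obtain ⟨P, hP⟩ := h𝒜.mem_supClosure_iff.1 ht
  have ht_eq : t = ⋃ u ∈ P.parts, id u := by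
    conv_lhs => rw [← P.sup_parts, Finset.sup_id_set_eq_sUnion, Set.sUnion_eq_biUnion]
    rfl
  have hd : Set.PairwiseDisjoint (P.parts : Set (Set α)) id := P.disjoint
  rw [ht_eq, measure_biUnion_finset hd fun u hu => hmeas u (hP hu),
    measure_biUnion_finset hd fun u hu => hmeas u (hP hu), Finset.mul_sum]
  exact Finset.sum_le_sum fun u hu => h u (hP hu)

theorem measure_le_add_symmDiff (μ : Measure α) (s t : Set α) :
    μ s ≤ μ t + μ (symmDiff s t) := by
  refine (measure_mono fun x hx => ?_).trans (measure_union_le _ _)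
  by_cases hxt : x ∈ t
  · exact .inl hxt
  · exact .inr (.inl ⟨hx, hxt⟩)

theorem measure_le_smul_of_isSetSemiring [IsFiniteMeasure μ] [IsFiniteMeasure ν]
    (h𝒜 : IsSetSemiring 𝒜) (huniv : Set.univ ∈ 𝒜) (hgen : mα = MeasurableSpace.generateFrom 𝒜)
    (hc : c ≠ ⊤) (h : ∀ s ∈ 𝒜, μ s ≤ c * ν s) : μ ≤ c • ν := by
  have hmeas (s) (hs : s ∈ 𝒜) : MeasurableSet s :=
    hgen ▸ MeasurableSpace.measurableSet_generateFrom hs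
  refine Measure.le_iff.2 fun s hs => ?_
  rw [Measure.smul_apply, smul_eq_mul]
  refine ENNReal.le_of_forall_pos_le_add fun ε hε _ => ?_
  have hpos : 0 < (ε : ℝ≥0∞) / (1 + c) :=
    ENNReal.div_pos (by simpa using hε.ne') (by simp [hc])
  obtain ⟨t, ht, hts⟩ := exists_measure_symmDiff_lt_of_generateFrom_isSetSemiring
    (μ := μ + ν) h𝒜
    ⟨{Set.univ}, Set.countable_singleton _, Set.singleton_subset_iff.2 huniv, by simp⟩
    hgen hs hpos
  rw [Measure.add_apply] at hts
  have hμ : μ s ≤ μ t + ε / (1 + c) := (measure_le_add_symmDiff μ s t).trans <| by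
    rw [symmDiff_comm]; gcongr; exact le_self_add.trans hts.le
  have hν : ν t ≤ ν s + ε / (1 + c) := (measure_le_add_symmDiff ν t s).trans <| by
    gcongr; exact le_add_self.trans hts.le
  calc μ s ≤ c * ν t + ε / (1 + c) :=
        hμ.trans (by gcongr; exact measure_le_mul_of_mem_supClosure h𝒜 hmeas h ht)
    _ ≤ c * (ν s + ε / (1 + c)) + ε / (1 + c) := by gcongr
    _ = c * ν s + (1 + c) * (ε / (1 + c)) := by ring
    _ = c * ν s + ε := by rw [ENNReal.mul_div_cancel (by simp) (by simp [hc])]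

end SetSemiring

theorem isSetSemiring_rectangles (α β : Type*) [MeasurableSpace α] [MeasurableSpace β] :
    IsSetSemiring (Set.image2 (· ×ˢ ·) {s : Set α | MeasurableSet s}
      {t : Set β | MeasurableSet t}) where
  empty_mem := ⟨∅, .empty, ∅, .empty, by simp⟩
  inter_mem := by
    rintro _ ⟨a, ha, b, hb, rfl⟩ _ ⟨a', ha', b', hb', rfl⟩
    exact ⟨a ∩ a', MeasurableSet.inter ha ha', b ∩ b', MeasurableSet.inter hb hb',
      Set.prod_inter_prod.symm⟩
  sdiff_eq_sUnion' := by
    classical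
    rintro _ ⟨a, ha, b, hb, rfl⟩ _ ⟨a', ha', b', hb', rfl⟩
    refine ⟨{(a \ a') ×ˢ b, (a ∩ a') ×ˢ (b \ b')}, fun s hs => ?_, ?_, ?_⟩
    · simp only [coe_insert, coe_singleton, Set.mem_insert_iff, Set.mem_singleton_iff] at hs
      rcases hs with rfl | rfl
      · exact ⟨a \ a', MeasurableSet.diff ha ha', b, hb, rfl⟩
      · exact ⟨a ∩ a', MeasurableSet.inter ha ha', b \ b', MeasurableSet.diff hb hb', rfl⟩
    · rw [coe_insert, coe_singleton]
      refine Set.pairwiseDisjoint_insert.2 ⟨Set.pairwiseDisjoint_singleton _ _, ?_⟩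
      rintro _ rfl -
      exact Set.disjoint_left.2 fun _ h h' => h.1.2 h'.1.2
    · ext ⟨x, y⟩
      simp only [coe_insert, coe_singleton, Set.sUnion_insert, Set.sUnion_singleton,
        Set.mem_union, Set.mem_prod, Set.mem_sdiff, Set.mem_inter_iff]
      tauto

theorem measure_le_smul_of_rectangles {α β : Type*} [MeasurableSpace α] [MeasurableSpace β]
    {ν π : Measure (α × β)} [IsFiniteMeasure ν] [IsFiniteMeasure π] {c : ℝ≥0∞} (hc : c ≠ ⊤)
    (h : ∀ A B, MeasurableSet A → MeasurableSet B → ν (A ×ˢ B) ≤ c * π (A ×ˢ B)) :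
    ν ≤ c • π :=
  measure_le_smul_of_isSetSemiring (isSetSemiring_rectangles α β)
    ⟨Set.univ, .univ, Set.univ, .univ, Set.univ_prod_univ⟩ generateFrom_prod.symm hc <| by
      rintro _ ⟨A, hA, B, hB, rfl⟩
      exact h A B hA hB

theorem exists_bounded_density {α : Type*} [MeasurableSpace α] {ν π : Measure α}
    [IsFiniteMeasure ν] [IsFiniteMeasure π] {C : ℝ} (hC : 1 ≤ C)
    (hνπ : ν ≤ ENNReal.ofReal C • π) (hπν : π ≤ ENNReal.ofReal C • ν) :
    ∃ p : α → ℝ, Measurable p ∧ (∀ x, C⁻¹ ≤ p x ∧ p x ≤ C) ∧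
      ν = π.withDensity fun x => ENNReal.ofReal (p x) := by
  have hC0 : 0 < C := by linarith
  have hd := Measure.withDensity_rnDeriv_eq ν π (Measure.absolutelyContinuous_of_le_smul hνπ)
  have hm := Measure.measurable_rnDeriv ν π
  have hle : ∀ᵐ x ∂π, ν.rnDeriv π x ≤ ENNReal.ofReal C := by
    refine ae_le_of_forall_setLIntegral_le_of_sigmaFinite hm fun s hs _ => ?_
    rw [← withDensity_apply _ hs, hd, setLIntegral_const]
    exact Measure.le_iff.1 hνπ s hs
  have hge : ∀ᵐ x ∂π, 1 ≤ ENNReal.ofReal C * ν.rnDeriv π x := by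
    refine ae_le_of_forall_setLIntegral_le_of_sigmaFinite measurable_const fun s hs _ => ?_
    rw [lintegral_const_mul _ hm, setLIntegral_const, one_mul, ← withDensity_apply _ hs, hd]
    exact Measure.le_iff.1 hπν s hs
  refine ⟨fun x => max C⁻¹ (min C (ν.rnDeriv π x).toReal),
    measurable_const.max (measurable_const.min hm.ennreal_toReal), fun x => ⟨le_max_left _ _,
      max_le ((inv_le_one_of_one_le₀ hC).trans hC) (min_le_left _ _)⟩, ?_⟩
  rw [← hd]
  refine withDensity_congr_ae ?_
  rw [hd]
  filter_upwards [hle, hge] with x hx hx'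
  have hfin : ν.rnDeriv π x ≠ ⊤ := ne_top_of_le_ne_top ENNReal.ofReal_ne_top hx
  have hinv : C⁻¹ ≤ (ν.rnDeriv π x).toReal := by
    rw [inv_le_iff_one_le_mul₀ hC0, mul_comm]
    have := ENNReal.toReal_mono (ENNReal.mul_ne_top ENNReal.ofReal_ne_top hfin) hx'
    rwa [ENNReal.toReal_one, ENNReal.toReal_mul, ENNReal.toReal_ofReal hC0.le] at this
  rw [min_eq_right (ENNReal.toReal_le_of_le_ofReal hC0.le hx), max_eq_right hinv,
    ENNReal.ofReal_toReal hfin]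

variable {Ω E : Type*} [MeasurableSpace E] {X : ℕ → Ω → E}

/-- The σ-algebra of the states up to time `n`. -/
abbrev pastOf (X : ℕ → Ω → E) (n : ℕ) : MeasurableSpace Ω :=
  ⨆ i : Fin (n + 1), MeasurableSpace.comap (X i) inferInstance

theorem measurable_pastOf {n i : ℕ} (hi : i ≤ n) : Measurable[pastOf X n] (X i) :=
  (comap_measurable (X i)).mono
    (le_iSup (fun i : Fin (n + 1) => MeasurableSpace.comap (X i) inferInstance)
      ⟨i, Nat.lt_succ_of_le hi⟩) le_rfl

variable [MeasurableSpace Ω] {μ : Measure Ω} {κ : ℕ → Kernel E E} {C : ℝ}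

theorem pastOf_le (hX : ∀ n, Measurable (X n)) (n : ℕ) :
    pastOf X n ≤ (inferInstance : MeasurableSpace Ω) :=
  iSup_le fun i => (hX i).comap_le

/-- The process `X` is, under the probability measure `μ`, a Markov chain whose transition
probability at time `n` has the `C`-elliptic density `p n` with respect to the law of `X (n + 1)`.
In contrast to `UEChain`, the transition kernels are dominated simultaneously on all sets. -/
structure IsEllipticChain (μ : Measure Ω) (X : ℕ → Ω → E) (C : ℝ) (p : ℕ → E → E → ℝ) :
    Prop where
  isProbabilityMeasure : IsProbabilityMeasure μ
  measurable : ∀ n, Measurable (X n)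
  elliptic : ∀ n, EllipticDensity C (p n)
  measure_inter : ∀ n, ∀ s, MeasurableSet[pastOf X n] s → ∀ A, MeasurableSet A →
    μ (s ∩ X (n + 1) ⁻¹' A) =
      ∫⁻ ω in s, ∫⁻ y in A, ENNReal.ofReal (p n (X n ω) y) ∂μ.map (X (n + 1)) ∂μ

theorem UEChain.measure_inter (h : UEChain μ X κ C) (n : ℕ) {s : Set Ω}
    (hs : MeasurableSet[pastOf X n] s) {A : Set E} (hA : MeasurableSet A) :
    μ (s ∩ X (n + 1) ⁻¹' A) = ∫⁻ ω in s, κ n (X n ω) A ∂μ := by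
  obtain ⟨hμ, hX, hκ, hM, -⟩ := h
  have hle := pastOf_le hX n
  have hAm := hX (n + 1) hA
  have hκ_lt : ∫⁻ ω in s, κ n (X n ω) A ∂μ < ⊤ :=
    (lintegral_mono fun _ => prob_le_one).trans_lt (by simp [measure_lt_top])
  have hint := setIntegral_condExp hle (μ := μ)
    ((integrable_const (1 : ℝ)).indicator hAm) hs
  have hcond : μ[(X (n + 1) ⁻¹' A).indicator (fun _ => (1 : ℝ)) | pastOf X n] =ᵐ[μ]
      fun ω => (κ n (X n ω) A).toReal := hM n A hA
  rw [setIntegral_congr_ae (hle s hs) (hcond.mono fun ω hω _ => hω),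
    integral_indicator hAm, Measure.restrict_restrict hAm, setIntegral_const, smul_eq_mul,
    mul_one, integral_toReal (f := fun ω => κ n (X n ω) A)
      (((κ n).measurable_coe hA).comp (hX n)).aemeasurable
      (.of_forall fun ω => measure_lt_top _ _), measureReal_def, Set.inter_comm] at hint
  exact ((ENNReal.toReal_eq_toReal_iff' hκ_lt.ne (measure_ne_top _ _)).1 hint).symm

theorem UEChain.map_prod_apply (h : UEChain μ X κ C) (n : ℕ) {A B : Set E}
    (hA : MeasurableSet A) (hB : MeasurableSet B) :
    μ.map (fun ω => (X n ω, X (n + 1) ω)) (A ×ˢ B) = ∫⁻ ω in X n ⁻¹' A, κ n (X n ω) B ∂μ := by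
  rw [Measure.map_apply ((h.2.1 n).prodMk (h.2.1 (n + 1))) (hA.prod hB),
    ← h.measure_inter n (measurable_pastOf le_rfl hA) hB]
  rfl

theorem UEChain.exists_density (h : UEChain μ X κ C) (hC : 1 ≤ C) (n : ℕ) :
    ∃ p : E → E → ℝ, EllipticDensity C p ∧
      μ.map (fun ω => (X n ω, X (n + 1) ω)) = ((μ.map (X n)).prod (μ.map (X (n + 1)))).withDensity
        fun z => ENNReal.ofReal (p z.1 z.2) := by
  have hmap {A B : Set E} (hA : MeasurableSet A) (hB : MeasurableSet B) := h.map_prod_apply n hA hB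
  obtain ⟨hμ, hX, -, -, hell⟩ := h
  have := Measure.isProbabilityMeasure_map (hX n).aemeasurable (μ := μ)
  have := Measure.isProbabilityMeasure_map (hX (n + 1)).aemeasurable (μ := μ)
  have := Measure.isProbabilityMeasure_map ((hX n).prodMk (hX (n + 1))).aemeasurable (μ := μ)
  obtain ⟨p, hpm, hpb, hp⟩ := exists_bounded_density
    (ν := μ.map fun ω => (X n ω, X (n + 1) ω))
    (π := (μ.map (X n)).prod (μ.map (X (n + 1)))) hC
    (measure_le_smul_of_rectangles ENNReal.ofReal_ne_top fun A B hA hB => by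
      rw [hmap hA hB, Measure.prod_prod, Measure.map_apply (hX n) hA]
      calc ∫⁻ ω in X n ⁻¹' A, κ n (X n ω) B ∂μ
          ≤ ∫⁻ _ in X n ⁻¹' A, ENNReal.ofReal C * μ.map (X (n + 1)) B ∂μ :=
            lintegral_mono_ae (ae_restrict_of_ae ((hell n B hB).mono fun _ hω => hω.1))
        _ = _ := by rw [setLIntegral_const]; ring)
    (measure_le_smul_of_rectangles ENNReal.ofReal_ne_top fun A B hA hB => by
      rw [hmap hA hB, Measure.prod_prod, Measure.map_apply (hX n) hA,
        ← lintegral_const_mul (f := fun ω => κ n (X n ω) B) _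
          (((κ n).measurable_coe hB).comp (hX n))]
      calc μ (X n ⁻¹' A) * μ.map (X (n + 1)) B
          = ∫⁻ _ in X n ⁻¹' A, μ.map (X (n + 1)) B ∂μ := by rw [setLIntegral_const]; ring
        _ ≤ _ := lintegral_mono_ae (ae_restrict_of_ae ((hell n B hB).mono fun _ hω => hω.2)))
  exact ⟨fun x y => p (x, y),
    ⟨hC, hpm, fun x y => (hpb (x, y)).1, fun x y => (hpb (x, y)).2⟩, hp⟩

theorem UEChain.kernel_ae_eq (h : UEChain μ X κ C) {n : ℕ} {p : E → E → ℝ}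
    (hpm : Measurable (Function.uncurry p))
    (hp : μ.map (fun ω => (X n ω, X (n + 1) ω)) =
      ((μ.map (X n)).prod (μ.map (X (n + 1)))).withDensity fun z => ENNReal.ofReal (p z.1 z.2))
    {A : Set E} (hA : MeasurableSet A) :
    ∀ᵐ ω ∂μ, κ n (X n ω) A = ∫⁻ y in A, ENNReal.ofReal (p (X n ω) y) ∂μ.map (X (n + 1)) := by
  have hmap {B : Set E} (hB : MeasurableSet B) := h.map_prod_apply n hB hA
  obtain ⟨hμ, hX, -⟩ := h
  have hpm' : Measurable fun z : E × E => ENNReal.ofReal (p z.1 z.2) := hpm.ennreal_ofReal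
  have hκm : Measurable fun x => κ n x A := (κ n).measurable_coe hA
  refine ae_of_ae_map (p := fun x => κ n x A = ∫⁻ y in A, ENNReal.ofReal (p x y) ∂μ.map (X (n + 1)))
    (hX n).aemeasurable ?_
  have := Measure.isProbabilityMeasure_map (hX n).aemeasurable (μ := μ)
  refine ae_eq_of_forall_setLIntegral_eq_of_sigmaFinite hκm hpm'.lintegral_prod_right'
    fun B hB _ => ?_
  rw [setLIntegral_map hB hκm (hX n), ← hmap hB, hp, withDensity_apply _ (hB.prod hA),
    ← Measure.prod_restrict, lintegral_prod _ hpm'.aemeasurable]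

theorem UEChain.exists_isEllipticChain (h : UEChain μ X κ C) (hC : 1 ≤ C) :
    ∃ p, IsEllipticChain μ X C p := by
  choose p hp hpX using h.exists_density hC
  exact ⟨p, h.1, h.2.1, hp, fun n _ hs _ hA => (h.measure_inter n hs hA).trans
    (lintegral_congr_ae (ae_restrict_of_ae (h.kernel_ae_eq (hp n).measurable (hpX n) hA)))⟩

theorem EllipticDensity.measurable_ofReal {k : E → E → ℝ} (hk : EllipticDensity C k)
    {α : Type*} [MeasurableSpace α] {u v : α → E} (hu : Measurable u) (hv : Measurable v) :
    Measurable fun a => ENNReal.ofReal (k (u a) (v a)) :=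
  (hk.measurable.comp (hu.prodMk hv)).ennreal_ofReal

namespace IsEllipticChain

variable {p : ℕ → E → E → ℝ} {F : Type*} [MeasurableSpace F] {n : ℕ} {Y : Ω → F} {q : F → E}

theorem isProbabilityMeasure_map (h : IsEllipticChain μ X C p) (n : ℕ) :
    IsProbabilityMeasure (μ.map (X n)) :=
  have := h.isProbabilityMeasure
  Measure.isProbabilityMeasure_map (h.measurable n).aemeasurable

theorem map_prodMk_next (h : IsEllipticChain μ X C p) (hY : Measurable[pastOf X n] Y)
    (hq : Measurable q) (hqY : ∀ ω, q (Y ω) = X n ω) :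
    μ.map (fun ω => (Y ω, X (n + 1) ω)) = ((μ.map Y).prod (μ.map (X (n + 1)))).withDensity
      fun z => ENNReal.ofReal (p n (q z.1) z.2) := by
  have := h.isProbabilityMeasure
  have := h.isProbabilityMeasure_map (n + 1)
  have hY' : Measurable Y := hY.mono (pastOf_le h.measurable n) le_rfl
  have := Measure.isProbabilityMeasure_map hY'.aemeasurable (μ := μ)
  have hYX := hY'.prodMk (h.measurable (n + 1))
  have := Measure.isProbabilityMeasure_map hYX.aemeasurable (μ := μ)
  have hd : Measurable fun z : F × E => ENNReal.ofReal (p n (q z.1) z.2) :=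
    (h.elliptic n).measurable_ofReal (hq.comp measurable_fst) measurable_snd
  refine Measure.ext_prod fun {B A} hB hA => ?_
  rw [Measure.map_apply hYX (hB.prod hA), withDensity_apply _ (hB.prod hA),
    ← Measure.prod_restrict, lintegral_prod _ hd.aemeasurable,
    setLIntegral_map hB hd.lintegral_prod_right' hY']
  simp only [hqY]
  exact h.measure_inter n _ (hY hB) A hA

theorem lintegral_next (h : IsEllipticChain μ X C p) (hY : Measurable[pastOf X n] Y)
    (hq : Measurable q) (hqY : ∀ ω, q (Y ω) = X n ω) {G : F × E → ℝ≥0∞} (hG : Measurable G) :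
    ∫⁻ ω, G (Y ω, X (n + 1) ω) ∂μ =
      ∫⁻ ω, ∫⁻ y, ENNReal.ofReal (p n (X n ω) y) * G (Y ω, y) ∂μ.map (X (n + 1)) ∂μ := by
  have := h.isProbabilityMeasure_map (n + 1)
  have hY' : Measurable Y := hY.mono (pastOf_le h.measurable n) le_rfl
  have hd : Measurable fun z : F × E => ENNReal.ofReal (p n (q z.1) z.2) :=
    (h.elliptic n).measurable_ofReal (hq.comp measurable_fst) measurable_snd
  calc ∫⁻ ω, G (Y ω, X (n + 1) ω) ∂μ = ∫⁻ z, G z ∂μ.map (fun ω => (Y ω, X (n + 1) ω)) :=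
        (lintegral_map hG (hY'.prodMk (h.measurable (n + 1)))).symm
    _ = ∫⁻ x, ∫⁻ y, ENNReal.ofReal (p n (q x) y) * G (x, y) ∂μ.map (X (n + 1)) ∂μ.map Y := by
        rw [h.map_prodMk_next hY hq hqY, lintegral_withDensity_eq_lintegral_mul _ hd hG,
          lintegral_prod _ (hd.mul hG).aemeasurable]
        rfl
    _ = ∫⁻ ω, ∫⁻ y, ENNReal.ofReal (p n (X n ω) y) * G (Y ω, y) ∂μ.map (X (n + 1)) ∂μ := by
        refine (lintegral_map (Measurable.lintegral_prod_right' (hd.mul hG)) hY').trans ?_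
        simp only [hqY, Pi.mul_apply]

end IsEllipticChain

end Density

/-! ### The law of a path and its conditioning on finitely many states -/

section Marginal

variable {δ : Type*} [DecidableEq δ] {π : δ → Type*} [∀ i, MeasurableSpace (π i)]
  {m : ∀ i, Measure (π i)} {s t : Finset δ} {g w F G : (∀ i, π i) → ℝ≥0∞}

theorem lmarginal_eq_of_forall_eq {x : ∀ i, π i}
    (h : ∀ z : ∀ i, π i, (∀ i ∉ s, z i = x i) → F z = G z) :
    lmarginal m s F x = lmarginal m s G x :=
  lintegral_congr fun _ => h _ fun _ hi => by simp [Function.updateFinset, hi]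

theorem lmarginal_mul_of_dependsOn (hF : Measurable F) (hg : DependsOn g (↑s)ᶜ) (x : ∀ i, π i) :
    lmarginal m s (fun z => g z * F z) x = g x * lmarginal m s F x :=
  (lmarginal_eq_of_forall_eq (G := fun z => g x * F z) fun _ hz => by rw [hg hz]).trans
    (lintegral_const_mul (g x) (hF.comp measurable_updateFinset))

/-- Bayes' formula: under the density `w`, the conditional expectation of `F` given the coordinates
in `s` is the quotient of the two marginals. -/
theorem lmarginal_union_mul_div [∀ i, SigmaFinite (m i)] (hst : Disjoint s t) (hw : Measurable w)
    (hF : Measurable F) (hg : Measurable g) (hgt : DependsOn g (↑t)ᶜ)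
    (h₀ : ∀ z, lmarginal m t w z ≠ 0) (h_top : ∀ z, lmarginal m t w z ≠ ⊤) :
    lmarginal m (s ∪ t) (fun z => w z *
        (g z * (lmarginal m t (fun z => F z * w z) z / lmarginal m t w z))) =
      lmarginal m (s ∪ t) fun z => w z * (g z * F z) := by
  set A := lmarginal m t fun z => F z * w z with hA
  set B := lmarginal m t w with hB
  have hAm : Measurable A := (hF.mul hw).lmarginal m
  have hBm : Measurable B := hw.lmarginal m
  have hdep : DependsOn (fun z => g z * (A z / B z)) (↑t)ᶜ := fun x z hxz => by
    dsimp only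
    rw [hgt hxz, hA, hB, lmarginal_congr m _ hxz, lmarginal_congr m w hxz]
  rw [lmarginal_union m (fun z => w z * (g z * (A z / B z))) (hw.mul (hg.mul (hAm.div hBm))) hst,
    lmarginal_union m (fun z => w z * (g z * F z)) (hw.mul (hg.mul hF)) hst]
  congr 1; ext z
  calc lmarginal m t (fun z => w z * (g z * (A z / B z))) z
      = g z * (A z / B z) * B z := by
        simp only [mul_comm (w _)]
        exact lmarginal_mul_of_dependsOn hw hdep z
    _ = g z * A z := by rw [mul_assoc, ENNReal.div_mul_cancel (h₀ z) (h_top z)]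
    _ = lmarginal m t (fun z => w z * (g z * F z)) z := by
        simp only [mul_comm (w _), mul_assoc]
        exact (lmarginal_mul_of_dependsOn (hF.mul hw) hgt z).symm

end Marginal

section PathWeight

variable {E : Type*}

/-- The density of the law of a path of length `n + 1`, for transition densities `p`. -/
def pathWeight (p : ℕ → E → E → ℝ) (n : ℕ) (x : ℕ → E) : ℝ≥0∞ :=
  ∏ i ∈ range n, ENNReal.ofReal (p i (x i) (x (i + 1)))

/-- The event that the additive functional `∑ i < n, f i (x i)` of a path takes the value `a`. -/
def sumEvent (f : ℕ → E → ℤ) (n : ℕ) (a : ℤ) : Set (ℕ → E) := {x | ∑ i ∈ range n, f i (x i) = a}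

theorem indicator_sumEvent_pathWeight_succ (p : ℕ → E → E → ℝ) (f : ℕ → E → ℤ) (n : ℕ) (a : ℤ)
    (z : ℕ → E) :
    (sumEvent f (n + 1) a).indicator (pathWeight p (n + 1)) z =
      ENNReal.ofReal (p n (z n) (z (n + 1))) *
        (sumEvent f n (a - f n (z n))).indicator (pathWeight p n) z := by
  simp only [Set.indicator_apply, sumEvent, Set.mem_ofPred_eq, sum_range_succ, eq_sub_iff_add_eq,
    pathWeight, prod_range_succ]
  split_ifs
  · exact mul_comm _ _
  · exact (mul_zero _).symm

theorem pathWeight_succ_update (p : ℕ → E → E → ℝ) (n : ℕ) (z : ℕ → E) (y : E) :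
    pathWeight p (n + 1) (Function.update z (n + 1) y) =
      pathWeight p n z * ENNReal.ofReal (p n (z n) y) := by
  rw [pathWeight, prod_range_succ, pathWeight, Function.update_self,
    Function.update_of_ne n.succ_ne_self.symm]
  refine congrArg (· * _) (prod_congr rfl fun i hi => ?_)
  have := mem_range.1 hi
  rw [Function.update_of_ne (by omega), Function.update_of_ne (by omega)]

variable [MeasurableSpace E]

/-- The reference measures `m`, with the sites of `J` frozen at the values of `x`. -/
def pinned (m : ℕ → Measure E) (J : Finset ℕ) (x : ℕ → E) (i : ℕ) : Measure E :=
  if i ∈ J then .dirac (x i) else m i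

variable {C : ℝ} {p : ℕ → E → E → ℝ} {m : ℕ → Measure E} {f : ℕ → E → ℤ}

instance [∀ i, IsProbabilityMeasure (m i)] (J : Finset ℕ) (x : ℕ → E) (i : ℕ) :
    IsProbabilityMeasure (pinned m J x i) := by
  unfold pinned; split_ifs <;> infer_instance

theorem pinned_congr (m : ℕ → Measure E) {J : Finset ℕ} {x z : ℕ → E} (h : ∀ i ∈ J, x i = z i) :
    pinned m J x = pinned m J z := by
  ext1 i
  exact ite_congr rfl (fun hi => by rw [h i hi]) fun _ => rfl

theorem measurable_pathWeight (hp : ∀ n, EllipticDensity C (p n)) (n : ℕ) :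
    Measurable (pathWeight p n) :=
  Finset.measurable_fun_prod _ fun i _ =>
    (hp i).measurable_ofReal (measurable_pi_apply i) (measurable_pi_apply (i + 1))

theorem measurableSet_sumEvent (hf : ∀ n, Measurable (f n)) (n : ℕ) (a : ℤ) :
    MeasurableSet (sumEvent f n a) :=
  measurableSet_eq_fun
    (Finset.measurable_fun_sum _ fun i _ => (hf i).comp (measurable_pi_apply i)) measurable_const

theorem measurable_indicator_pathWeight (hp : ∀ n, EllipticDensity C (p n))
    (hf : ∀ n, Measurable (f n)) (n : ℕ) (a : ℤ) :
    Measurable ((sumEvent f n a).indicator (pathWeight p n)) :=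
  (measurable_pathWeight hp n).indicator (measurableSet_sumEvent hf n a)

theorem lmarginal_indicator_pathWeight_succ (hp : ∀ n, EllipticDensity C (p n))
    (hf : ∀ n, Measurable (f n)) {s : Finset ℕ} {n : ℕ} (hs : s ⊆ range n) (a : ℤ) (z : ℕ → E) :
    lmarginal m s ((sumEvent f (n + 1) a).indicator (pathWeight p (n + 1))) z =
      ENNReal.ofReal (p n (z n) (z (n + 1))) *
        lmarginal m s ((sumEvent f n (a - f n (z n))).indicator (pathWeight p n)) z := by
  have hns (i : ℕ) (hi : n ≤ i) : i ∉ s := fun his => (mem_range.1 (hs his)).not_ge hi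
  rw [← lmarginal_mul_of_dependsOn (g := fun z => ENNReal.ofReal (p n (z n) (z (n + 1))))
    (measurable_indicator_pathWeight hp hf n _)]
  · refine lmarginal_eq_of_forall_eq fun w hw => ?_
    rw [indicator_sumEvent_pathWeight_succ, hw n (hns n le_rfl)]
  · intro x y hxy
    simp only [hxy n (hns n le_rfl), hxy (n + 1) (hns (n + 1) n.le_succ)]

theorem EllipticDensity.ofReal_transfer {k : E → E → ℝ} (hk : EllipticDensity C k)
    (ν : Measure E) [IsFiniteMeasure ν] {G : E → ℝ} (hG : BddMeasurable G) (hG₀ : ∀ x, 0 ≤ G x)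
    (y : E) : ENNReal.ofReal (transfer ν k G y) = ∫⁻ x, ENNReal.ofReal (k x y * G x) ∂ν :=
  ofReal_integral_eq_lintegral_ofReal ((hk.bddMeasurable_smul hG y).integrable ν)
    (ae_of_all _ fun x => mul_nonneg (hk.pos x y).le (hG₀ x))

variable [∀ n, IsProbabilityMeasure (m n)]

theorem lmarginal_indicator_pathWeight (hp : ∀ n, EllipticDensity C (p n))
    (hf : ∀ n, Measurable (f n)) (J : Finset ℕ) (n : ℕ) (a : ℤ) (x : ℕ → E) :
    lmarginal m (range n \ J) ((sumEvent f n a).indicator (pathWeight p n)) x =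
      ENNReal.ofReal (pathSumWeight p (pinned m J x) f n (x n) a) := by
  induction n generalizing a x with
  | zero =>
    simp only [range_zero, empty_sdiff, lmarginal_empty, pathSumWeight, sumEvent, sum_empty,
      pathWeight, prod_empty, Set.indicator_apply, Set.mem_ofPred_eq, eq_comm (a := (0 : ℤ))]
    split_ifs <;> simp
  | succ n ih =>
    have hstep (z : ℕ → E) : lmarginal m (range n \ J)
        ((sumEvent f (n + 1) a).indicator (pathWeight p (n + 1))) z =
        ENNReal.ofReal (p n (z n) (z (n + 1)) *
          pathSumWeight p (pinned m J z) f n (z n) (a - f n (z n))) := by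
      rw [lmarginal_indicator_pathWeight_succ hp hf sdiff_subset, ih,
        ENNReal.ofReal_mul ((hp n).pos _ _).le]
    have hb := bddMeasurable_pathSumWeight_shift (ν := pinned m J x) hp hf n (hf n) a
    have htransfer := (hp n).ofReal_transfer (pinned m J x n) hb
      (fun y => pathSumWeight_nonneg hp n y _) (x (n + 1))
    rw [pathSumWeight, htransfer, range_add_one]
    by_cases hn : n ∈ J
    · rw [insert_sdiff_of_mem _ hn, hstep x, pinned, if_pos hn, lintegral_dirac']
      exact ((hp n).bddMeasurable_smul hb _).1.ennreal_ofReal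
    · have hpin (y : E) : pinned m J (Function.update x n y) = pinned m J x :=
        pinned_congr m fun i hi => Function.update_of_ne (ne_of_mem_of_not_mem hi hn) _ _
      rw [insert_sdiff_of_notMem _ hn,
        lmarginal_insert _ (measurable_indicator_pathWeight hp hf _ _) (by simp)]
      simp only [hstep, hpin, Function.update_self, Function.update_of_ne n.succ_ne_self]
      rw [pinned, if_neg hn]

theorem pathSumWeight_zero_functional (ν : ℕ → Measure E) (n : ℕ) (y : E) :
    pathSumWeight p ν 0 n y 0 = partitionFun p ν (1 : ℕ → E → ℝ) n y := by
  induction n generalizing y with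
  | zero => rw [pathSumWeight, if_pos rfl]; rfl
  | succ n ih =>
    simp only [pathSumWeight, partitionFun_one_succ, Pi.zero_apply, sub_zero]
    exact congrArg (fun G => transfer (ν n) (p n) G y) (funext ih)

theorem lmarginal_pathWeight (hp : ∀ n, EllipticDensity C (p n)) (J : Finset ℕ) (n : ℕ)
    (x : ℕ → E) : lmarginal m (range n \ J) (pathWeight p n) x =
      ENNReal.ofReal (partitionFun p (pinned m J x) (1 : ℕ → E → ℝ) n (x n)) := by
  rw [← pathSumWeight_zero_functional,
    ← lmarginal_indicator_pathWeight (f := 0) hp fun _ => measurable_const]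
  simp [sumEvent]

theorem lmarginal_indicator_div_lmarginal (hp : ∀ n, EllipticDensity C (p n))
    (hf : ∀ n, Measurable (f n)) (J : Finset ℕ) (n : ℕ) (a : ℤ) (x : ℕ → E) :
    lmarginal m (range n \ J) ((sumEvent f n a).indicator (pathWeight p n)) x /
        lmarginal m (range n \ J) (pathWeight p n) x =
      ENNReal.ofReal (gibbsLaw p (pinned m J x) f n (x n) a) := by
  rw [lmarginal_indicator_pathWeight hp hf, lmarginal_pathWeight hp, gibbsLaw,
    ENNReal.ofReal_div_of_pos (partitionFun_one_pos hp n _)]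

end PathWeight

section FrozenPath

theorem piecewise_range_succ {E : Type*} (u x : ℕ → E) (n : ℕ) :
    (range (n + 1)).piecewise u x = Function.update ((range n).piecewise u x) n (u n) := by
  ext i
  simp only [Finset.piecewise, Function.update_apply, mem_range]
  split_ifs <;> first | rfl | (subst_vars; rfl) | omega

variable {Ω E : Type*} [MeasurableSpace E] {X : ℕ → Ω → E}

theorem measurable_piecewise_path {mΩ : MeasurableSpace Ω} {J : Finset ℕ}
    (hX : ∀ i ∈ J, Measurable (X i)) (x : ℕ → E) :
    Measurable fun ω => J.piecewise (X · ω) x := by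
  refine measurable_pi_lambda _ fun i => ?_
  by_cases hi : i ∈ J
  · simpa only [piecewise_eq_of_mem _ _ _ hi] using hX i hi
  · simpa only [piecewise_eq_of_notMem _ _ _ hi] using measurable_const

variable [MeasurableSpace Ω] {μ : Measure Ω} {C : ℝ} {p : ℕ → E → E → ℝ}

theorem IsEllipticChain.lintegral_path (h : IsEllipticChain μ X C p) (N : ℕ) (x : ℕ → E)
    {F : (ℕ → E) → ℝ≥0∞} (hF : Measurable F) :
    ∫⁻ ω, F ((range (N + 1)).piecewise (X · ω) x) ∂μ =
      lmarginal (fun n => μ.map (X n)) (range (N + 1)) (fun z => pathWeight p N z * F z) x := by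
  have := h.isProbabilityMeasure_map
  induction N generalizing F with
  | zero =>
    simp only [piecewise_range_succ, zero_add, range_one, lmarginal_singleton, pathWeight,
      range_zero, prod_empty, one_mul]
    exact (lintegral_map (f := fun y => F (Function.update x 0 y))
      (hF.comp (measurable_update x)) (h.measurable 0)).symm
  | succ N ih =>
    have hY : Measurable[pastOf X N] fun ω => (range (N + 1)).piecewise (X · ω) x :=
      measurable_piecewise_path
        (fun i hi => measurable_pastOf (Nat.lt_succ_iff.1 (mem_range.1 hi))) x
    have hp : Measurable fun z : (ℕ → E) × E => ENNReal.ofReal (p N (z.1 N) z.2) :=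
      (h.elliptic N).measurable_ofReal ((measurable_pi_apply N).comp measurable_fst) measurable_snd
    have hG : Measurable fun z : (ℕ → E) × E => F (Function.update z.1 (N + 1) z.2) :=
      hF.comp measurable_update'
    have hX (ω : Ω) : (range (N + 1)).piecewise (X · ω) x N = X N ω :=
      piecewise_eq_of_mem _ _ _ (self_mem_range_succ N)
    calc ∫⁻ ω, F ((range (N + 1 + 1)).piecewise (X · ω) x) ∂μ
        = ∫⁻ ω, F (Function.update ((range (N + 1)).piecewise (X · ω) x) (N + 1)
            (X (N + 1) ω)) ∂μ := by
          simp only [piecewise_range_succ _ _ (N + 1)]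
      _ = ∫⁻ ω, ∫⁻ y, ENNReal.ofReal (p N ((range (N + 1)).piecewise (X · ω) x N) y) *
            F (Function.update ((range (N + 1)).piecewise (X · ω) x) (N + 1) y)
              ∂μ.map (X (N + 1)) ∂μ := by
          simp only [hX]
          exact h.lintegral_next hY (measurable_pi_apply N) hX hG
      _ = lmarginal (fun n => μ.map (X n)) (range (N + 1)) (fun z => pathWeight p N z *
            ∫⁻ y, ENNReal.ofReal (p N (z N) y) * F (Function.update z (N + 1) y)
              ∂μ.map (X (N + 1))) x := ih (hp.mul hG).lintegral_prod_right'
      _ = _ := by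
          rw [range_add_one (n := N + 1),
            lmarginal_insert' (fun z => pathWeight p (N + 1) z * F z)
              ((measurable_pathWeight h.elliptic _).mul hF) notMem_range_self]
          refine congrArg (fun G => lmarginal _ _ G x) (funext fun z => ?_)
          simp only [pathWeight_succ_update, mul_assoc]
          exact (lintegral_const_mul _ ((hp.mul hG).comp measurable_prodMk_left)).symm

end FrozenPath

section Conditional

/-- The densities `p` before time `N`, and the constant density `1` afterwards: the state at time
`N + 1`, which serves as the end point of a Gibbs law, becomes independent of the past. -/
def truncDensity {E : Type*} (p : ℕ → E → E → ℝ) (N n : ℕ) : E → E → ℝ :=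
  if n < N then p n else fun _ _ => 1

theorem pathWeight_truncDensity {E : Type*} (p : ℕ → E → E → ℝ) (N : ℕ) :
    pathWeight (truncDensity p N) (N + 1) = pathWeight p N := by
  ext x
  rw [pathWeight, prod_range_succ, pathWeight]
  simp only [truncDensity, lt_irrefl, if_false, ENNReal.ofReal_one, mul_one]
  exact prod_congr rfl fun i hi => by rw [if_pos (mem_range.1 hi)]

theorem image_univ_subset_range_succ {ℓ N : ℕ} {j : Fin ℓ → ℕ} (hj : ∀ i, j i ≤ N) :
    univ.image j ⊆ range (N + 1) :=
  image_subset_iff.2 fun a _ => mem_range.2 (Nat.lt_succ_of_le (hj a))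

theorem sigmaOf_eq_comap {Ω E : Type*} [MeasurableSpace E] (X : ℕ → Ω → E) {ℓ : ℕ}
    (j : Fin ℓ → ℕ) (x : ℕ → E) :
    sigmaOf X j =
      MeasurableSpace.comap (fun ω => (univ.image j).piecewise (X · ω) x) inferInstance := by
  refine le_antisymm (iSup_le fun a => ?_) ?_
  · have hXj : X (j a) = (fun z : ℕ → E => z (j a)) ∘
        fun ω => (univ.image j).piecewise (X · ω) x := by
      ext ω
      exact (piecewise_eq_of_mem (univ.image j) (X · ω) x (mem_image_of_mem j (mem_univ a))).symm
    rw [hXj, ← MeasurableSpace.comap_comp]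
    exact MeasurableSpace.comap_mono (measurable_pi_apply (j a)).comap_le
  · refine Measurable.comap_le (measurable_piecewise_path (fun i hi => ?_) x)
    obtain ⟨a, -, rfl⟩ := mem_image.1 hi
    exact (comap_measurable (X (j a))).mono
      (le_iSup (fun i => MeasurableSpace.comap (X (j i)) inferInstance) a) le_rfl

variable {Ω E : Type*} [MeasurableSpace Ω] [MeasurableSpace E] {μ : Measure Ω} {X : ℕ → Ω → E}
  {C : ℝ} {p : ℕ → E → E → ℝ} {f : ℕ → E → ℤ} {J : Finset ℕ} {N : ℕ}

theorem ellipticDensity_truncDensity (hp : ∀ n, EllipticDensity C (p n)) (N n : ℕ) :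
    EllipticDensity C (truncDensity p N n) := by
  have hC := (hp 0).one_le
  unfold truncDensity; split_ifs
  · exact hp n
  · exact ⟨hC, measurable_const, fun _ _ => inv_le_one_of_one_le₀ hC, fun _ _ => hC⟩

/-- The conditional law of `∑ i ≤ N, f i (X i)` given the states at the sites of `J`: the Gibbs law
of the chain in which these sites are frozen. It does not depend on the choice of `y`. -/
def frozenLaw (μ : Measure Ω) (X : ℕ → Ω → E) (p : ℕ → E → E → ℝ) (f : ℕ → E → ℤ) (J : Finset ℕ)
    (N : ℕ) (y : E) (ω : Ω) : ℤ → ℝ :=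
  gibbsLaw (truncDensity p N) (pinned (fun n => μ.map (X n)) J (X · ω)) f (N + 1) y

namespace IsEllipticChain

theorem measurableSet_sum_eq (h : IsEllipticChain μ X C p) (hf : ∀ n, Measurable (f n)) (N : ℕ)
    (k : ℤ) : MeasurableSet {ω | ∑ i ∈ range (N + 1), f i (X i ω) = k} :=
  measurableSet_eq_fun
    (Finset.measurable_fun_sum _ fun i _ => (hf i).comp (h.measurable i)) measurable_const

theorem frozenLaw_nonneg (h : IsEllipticChain μ X C p) (y : E) (ω : Ω) (k : ℤ) :
    0 ≤ frozenLaw μ X p f J N y ω k :=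
  have := h.isProbabilityMeasure_map
  gibbsLaw_nonneg (ellipticDensity_truncDensity h.elliptic N) (N + 1) y k

theorem lmarginal_div_eq_frozenLaw (h : IsEllipticChain μ X C p) (hf : ∀ n, Measurable (f n))
    {z : ℕ → E} {ω : Ω} (hz : ∀ i ∈ J, z i = X i ω) (k : ℤ) :
    lmarginal (fun n => μ.map (X n)) (range (N + 1) \ J)
        ((sumEvent f (N + 1) k).indicator (pathWeight p N)) z /
      lmarginal (fun n => μ.map (X n)) (range (N + 1) \ J) (pathWeight p N) z =
    ENNReal.ofReal (frozenLaw μ X p f J N (z (N + 1)) ω k) := by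
  have := h.isProbabilityMeasure_map
  rw [frozenLaw, ← pinned_congr _ hz, ← pathWeight_truncDensity]
  exact lmarginal_indicator_div_lmarginal (ellipticDensity_truncDensity h.elliptic N) hf J _ k z

theorem lintegral_mul_frozenLaw (h : IsEllipticChain μ X C p) (hf : ∀ n, Measurable (f n))
    (hJ : J ⊆ range (N + 1)) (y : E) (k : ℤ) {g : (ℕ → E) → ℝ≥0∞} (hg : Measurable g)
    (hgJ : DependsOn g J) :
    ∫⁻ ω, g ((range (N + 1)).piecewise (X · ω) fun _ => y) *
        ENNReal.ofReal (frozenLaw μ X p f J N y ω k) ∂μ =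
      ∫⁻ ω, g ((range (N + 1)).piecewise (X · ω) fun _ => y) *
        (sumEvent f (N + 1) k).indicator 1 ((range (N + 1)).piecewise (X · ω) fun _ => y) ∂μ := by
  have := h.isProbabilityMeasure_map
  have hp := ellipticDensity_truncDensity h.elliptic N
  set m : ℕ → Measure E := fun n => μ.map (X n)
  set T := range (N + 1) \ J
  have hw := measurable_pathWeight h.elliptic N
  have hF : Measurable ((sumEvent f (N + 1) k).indicator (1 : (ℕ → E) → ℝ≥0∞)) :=
    measurable_const.indicator (measurableSet_sumEvent hf _ k)
  have hFw : (fun z => (sumEvent f (N + 1) k).indicator 1 z * pathWeight p N z) =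
      (sumEvent f (N + 1) k).indicator (pathWeight p N) := by
    ext z; by_cases hz : z ∈ sumEvent f (N + 1) k <;> simp [hz]
  have hmarg (z : ℕ → E) : lmarginal m T (pathWeight p N) z = ENNReal.ofReal
      (partitionFun (truncDensity p N) (pinned m J z) (1 : ℕ → E → ℝ) (N + 1) (z (N + 1))) := by
    rw [← pathWeight_truncDensity, lmarginal_pathWeight hp]
  have hBayes := lmarginal_union_mul_div (m := m) (disjoint_sdiff : Disjoint J T) hw hF hg
    (hgJ.mono fun i hi hiT => (mem_sdiff.1 (mem_coe.1 hiT)).2 hi)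
    (fun z => by rw [hmarg]; exact (ENNReal.ofReal_pos.2 (partitionFun_one_pos hp _ _)).ne')
    (fun z => by rw [hmarg]; exact ENNReal.ofReal_ne_top)
  simp only [union_sdiff_of_subset hJ, hFw] at hBayes
  calc _ = ∫⁻ ω, (fun z => g z *
          (lmarginal m T ((sumEvent f (N + 1) k).indicator (pathWeight p N)) z /
            lmarginal m T (pathWeight p N) z))
          ((range (N + 1)).piecewise (X · ω) fun _ => y) ∂μ := by
        refine lintegral_congr fun ω => congrArg (g _ * ·) ?_
        rw [h.lmarginal_div_eq_frozenLaw hf fun i hi => piecewise_eq_of_mem _ _ _ (hJ hi),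
          piecewise_eq_of_notMem _ _ _ notMem_range_self]
    _ = lmarginal m (range (N + 1)) (fun z => pathWeight p N z * (g z *
          (lmarginal m T ((sumEvent f (N + 1) k).indicator (pathWeight p N)) z /
            lmarginal m T (pathWeight p N) z))) fun _ => y := h.lintegral_path N _ <| hg.mul <|
        (Measurable.lmarginal m (hw.indicator (measurableSet_sumEvent hf _ k))).div
          (hw.lmarginal m)
    _ = lmarginal m (range (N + 1)) (fun z => pathWeight p N z *
          (g z * (sumEvent f (N + 1) k).indicator 1 z)) fun _ => y := congrFun hBayes _
    _ = _ := (h.lintegral_path N _ (hg.mul hF)).symm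

variable {ℓ : ℕ} {j : Fin ℓ → ℕ}

theorem measurable_frozenLaw (h : IsEllipticChain μ X C p) (hf : ∀ n, Measurable (f n))
    (hj : ∀ i, j i ≤ N) (y : E) (k : ℤ) :
    Measurable[sigmaOf X j] fun ω => frozenLaw μ X p f (univ.image j) N y ω k := by
  have := h.isProbabilityMeasure_map
  have hN : N + 1 ∉ univ.image j := fun hN =>
    notMem_range_self (image_univ_subset_range_succ hj hN)
  have hw := measurable_pathWeight h.elliptic N
  have hG := ((Measurable.lmarginal (s := range (N + 1) \ univ.image j)
    (fun n => μ.map (X n)) (hw.indicator (measurableSet_sumEvent hf (N + 1) k))).div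
      (Measurable.lmarginal (s := range (N + 1) \ univ.image j)
        (fun n => μ.map (X n)) hw)).ennreal_toReal
  rw [sigmaOf_eq_comap X j fun _ => y]
  convert hG.comp (comap_measurable _) using 1
  ext ω
  simp only [Function.comp_apply, Pi.div_apply]
  rw [h.lmarginal_div_eq_frozenLaw hf fun i hi => piecewise_eq_of_mem _ _ _ hi,
    piecewise_eq_of_notMem _ _ _ hN, ENNReal.toReal_ofReal (h.frozenLaw_nonneg y ω k)]

theorem setLIntegral_frozenLaw (h : IsEllipticChain μ X C p) (hf : ∀ n, Measurable (f n))
    (hj : ∀ i, j i ≤ N) (y : E) (k : ℤ) {s : Set Ω} (hs : MeasurableSet[sigmaOf X j] s) :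
    ∫⁻ ω in s, ENNReal.ofReal (frozenLaw μ X p f (univ.image j) N y ω k) ∂μ =
      μ (s ∩ {ω | ∑ i ∈ range (N + 1), f i (X i ω) = k}) := by
  have hJ := image_univ_subset_range_succ hj
  set J := univ.image j
  have hsΩ : MeasurableSet s := (iSup_le fun i => (h.measurable (j i)).comap_le) s hs
  have hA := h.measurableSet_sum_eq hf N k
  rw [sigmaOf_eq_comap X j fun _ => y] at hs
  obtain ⟨B, hB, rfl⟩ := hs
  have hret : Measurable fun z : ℕ → E => J.piecewise z fun _ => y :=
    measurable_piecewise_path (fun i _ => measurable_pi_apply i) _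
  have hdep : DependsOn (fun z : ℕ → E => B.indicator (1 : (ℕ → E) → ℝ≥0∞)
      (J.piecewise z fun _ => y)) J := fun _ _ hxz =>
    congrArg (B.indicator 1) (Finset.piecewise_congr _ hxz fun _ _ => rfl)
  have hsum (ω : Ω) : (sumEvent f (N + 1) k).indicator (1 : (ℕ → E) → ℝ≥0∞)
      ((range (N + 1)).piecewise (X · ω) fun _ => y) =
        {ω | ∑ i ∈ range (N + 1), f i (X i ω) = k}.indicator 1 ω := by
    simp only [Set.indicator_apply, sumEvent, Set.mem_ofPred_eq, Pi.one_apply]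
    rw [sum_congr rfl fun i hi => congrArg (f i) (piecewise_eq_of_mem _ _ _ hi)]
  have hmul := h.lintegral_mul_frozenLaw hf hJ y k ((measurable_one.indicator hB).comp hret) hdep
  simp only [Function.comp_apply, piecewise_piecewise_of_subset_left hJ, hsum] at hmul
  rw [← lintegral_indicator_one (hsΩ.inter hA), ← lintegral_indicator hsΩ,
    Set.inter_indicator_one]
  classical
  refine Eq.trans (lintegral_congr fun ω => ?_) (hmul.trans (lintegral_congr fun ω => ?_))
  · simp only [Set.indicator_apply, Set.mem_preimage, Pi.one_apply, ite_mul, one_mul, zero_mul, J]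
  · rfl

theorem condProb_sum_ae_eq (h : IsEllipticChain μ X C p) (hf : ∀ n, Measurable (f n))
    (hj : ∀ i, j i ≤ N) (y : E) (k : ℤ) :
    condProb μ (sigmaOf X j) {ω | ∑ i ∈ range (N + 1), f i (X i ω) = k} =ᵐ[μ]
      fun ω => frozenLaw μ X p f (univ.image j) N y ω k := by
  have := h.isProbabilityMeasure
  have hσ : sigmaOf X j ≤ (inferInstance : MeasurableSpace Ω) :=
    iSup_le fun i => (h.measurable (j i)).comap_le
  have hA := h.measurableSet_sum_eq hf N k
  have hlaw := h.measurable_frozenLaw hf hj y k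
  have hlaw' := (hlaw.mono hσ le_rfl).aestronglyMeasurable (μ := μ)
  have hlaw_nonneg := ae_of_all μ (h.frozenLaw_nonneg (f := f) (J := univ.image j) (N := N) y · k)
  have hint : Integrable (fun ω => frozenLaw μ X p f (univ.image j) N y ω k) μ := by
    refine ⟨hlaw', (hasFiniteIntegral_iff_ofReal hlaw_nonneg).2 ?_⟩
    rw [← setLIntegral_univ, h.setLIntegral_frozenLaw hf hj y k .univ]
    exact measure_lt_top _ _
  refine (ae_eq_condExp_of_forall_setIntegral_eq hσ ((integrable_const _).indicator hA)
    (fun s _ _ => hint.integrableOn) (fun s hs _ => ?_)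
    hlaw.stronglyMeasurable.aestronglyMeasurable).symm
  rw [integral_eq_lintegral_of_nonneg_ae (ae_restrict_of_ae hlaw_nonneg) hlaw'.restrict,
    h.setLIntegral_frozenLaw hf hj y k hs, integral_indicator hA, Measure.restrict_restrict hA,
    setIntegral_const, smul_eq_mul, mul_one, Set.inter_comm]
  rfl

end IsEllipticChain

end Conditional

/-! ### Expansions of conditional laws of partial sums -/

section FiniteSupport

variable {Ω : Type*} {W : Ω → ℤ} {T : Finset ℤ}

theorem comp_eq_sum_indicator (hT : ∀ ω, W ω ∈ T) (g : ℤ → ℝ) (ω : Ω) :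
    g (W ω) = ∑ k ∈ T, g k * {ω | W ω = k}.indicator (fun _ => (1 : ℝ)) ω := by
  classical
  simp only [Set.indicator_apply, Set.mem_ofPred_eq, mul_ite, mul_one, mul_zero]
  rw [sum_ite_eq, if_pos (hT ω)]

variable {m : MeasurableSpace Ω} [mΩ : MeasurableSpace Ω] {μ : Measure Ω}

theorem condProb_bot [IsProbabilityMeasure μ] {s : Set Ω} (hs : MeasurableSet s) :
    condProb μ ⊥ s = fun _ => μ.real s := by
  rw [condProb, condExp_bot]
  exact funext fun _ => integral_indicator_one hs

theorem integral_comp_eq_sum [IsProbabilityMeasure μ] (hW : Measurable W) (hT : ∀ ω, W ω ∈ T)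
    (g : ℤ → ℝ) : ∫ ω, g (W ω) ∂μ = ∑ k ∈ T, μ.real {ω | W ω = k} * g k := by
  have hWk : ∀ k, MeasurableSet {ω | W ω = k} := fun k => hW (measurableSet_singleton k)
  simp only [comp_eq_sum_indicator hT g]
  rw [integral_finsetSum _ fun k _ => ((integrable_const _).indicator (hWk k)).const_mul _]
  refine sum_congr rfl fun k _ => ?_
  rw [integral_const_mul, integral_indicator (hWk k), setIntegral_const, smul_eq_mul, mul_one,
    mul_comm]

theorem variance_eq_latticeVar [IsProbabilityMeasure μ] (hW : Measurable W) (hT : ∀ ω, W ω ∈ T) :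
    variance (fun ω => (W ω : ℝ)) μ = latticeVar T fun k => μ.real {ω | W ω = k} := by
  have hmean : ∫ ω, (W ω : ℝ) ∂μ = latticeMean T fun k => μ.real {ω | W ω = k} :=
    integral_comp_eq_sum hW hT fun k => (k : ℝ)
  rw [variance_eq_integral (X := fun ω => (W ω : ℝ)) (measurable_from_top.comp hW).aemeasurable,
    hmean]
  exact integral_comp_eq_sum hW hT fun k => ((k : ℝ) - _) ^ 2

theorem condExp_ae_eq_latticeMean [IsProbabilityMeasure μ] (hW : Measurable W) (hT : ∀ ω, W ω ∈ T) :
    μ[fun ω => (W ω : ℝ) | m] =ᵐ[μ]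
      fun ω => latticeMean T fun k => condProb μ m {ω | W ω = k} ω := by
  have hWk : ∀ k, MeasurableSet {ω | W ω = k} := fun k => hW (measurableSet_singleton k)
  have hsum : (fun ω => (W ω : ℝ)) =
      ∑ k ∈ T, (k : ℝ) • {ω | W ω = k}.indicator (fun _ => (1 : ℝ)) := by
    ext ω
    rw [Finset.sum_apply]
    exact comp_eq_sum_indicator hT (fun k => (k : ℝ)) ω
  have hsmul : ∀ᵐ ω ∂μ, ∀ k : ℤ,
      (μ[(k : ℝ) • {ω | W ω = k}.indicator (fun _ => (1 : ℝ)) | m]) ω =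
        (k : ℝ) * condProb μ m {ω | W ω = k} ω :=
    ae_all_iff.2 fun k => condExp_smul _ _ m
  rw [hsum]
  refine (condExp_finsetSum
    (fun k _ => ((integrable_const _).indicator (hWk k)).smul _) m).trans ?_
  filter_upwards [hsmul] with ω hω
  rw [Finset.sum_apply]
  exact sum_congr rfl fun k _ => by rw [hω, mul_comm]

end FiniteSupport

section Clip

variable {E : Type*}

/-- The functional `f n` truncated to values in `[-K, K]`, and set to zero at time `0`, which
`S_N` leaves out. The bound on `f n (X n)` holds only along paths, whereas Gibbs laws need it on the
whole state space. -/
def clip (f : ℕ → E → ℤ) (K n : ℕ) (x : E) : ℤ :=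
  if n = 0 then 0 else max (-(K : ℤ)) (min K (f n x))

theorem clip_zero (f : ℕ → E → ℤ) (K : ℕ) (x : E) : clip f K 0 x = 0 := if_pos rfl

theorem abs_clip_le (f : ℕ → E → ℤ) (K n : ℕ) (x : E) : |clip f K n x| ≤ (K : ℤ) := by
  unfold clip; split_ifs
  · simp
  · rw [abs_le]; omega

theorem clip_of_abs_le {f : ℕ → E → ℤ} {K n : ℕ} {x : E} (hn : n ≠ 0) (h : |f n x| ≤ (K : ℤ)) :
    clip f K n x = f n x := by
  rw [abs_le] at h
  rw [clip, if_neg hn]; omega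

theorem measurable_clip [MeasurableSpace E] {f : ℕ → E → ℤ} (hf : ∀ n, Measurable (f n))
    (K n : ℕ) : Measurable (clip f K n) := by
  unfold clip; split_ifs
  · exact measurable_const
  · exact measurable_const.max (measurable_const.min (hf n))

end Clip

section PartialSums

variable {Ω E : Type*} {X : ℕ → Ω → E} {f : ℕ → E → ℤ} {K : ℕ}

theorem S_eq_sum_clip (hfK : ∀ n ω, |f n (X n ω)| ≤ (K : ℤ)) (N : ℕ) (ω : Ω) :
    S X f N ω = ∑ i ∈ range (N + 1), clip f K i (X i ω) := by
  rw [range_eq_Ico, sum_eq_sum_Ico_succ_bot N.succ_pos, S, clip_zero, zero_add]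
  exact sum_congr rfl fun i hi =>
    (clip_of_abs_le (Nat.one_le_iff_ne_zero.1 (Finset.mem_Icc.1 hi).1) (hfK i ω)).symm

theorem S_mem_sumRange (hfK : ∀ n ω, |f n (X n ω)| ≤ (K : ℤ)) (N : ℕ) (ω : Ω) :
    S X f N ω ∈ sumRange K (N + 1) := by
  rw [sumRange, Finset.mem_Icc, ← abs_le, S_eq_sum_clip hfK]
  refine (abs_sum_le_sum_abs _ _).trans ?_
  refine (sum_le_card_nsmul _ _ _ fun i _ => abs_clip_le f K i _).trans ?_
  simp

variable [MeasurableSpace Ω] [MeasurableSpace E] {μ : Measure Ω} {C : ℝ} {p : ℕ → E → E → ℝ}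

theorem measurable_S (hX : ∀ n, Measurable (X n)) (hf : ∀ n, Measurable (f n)) (N : ℕ) :
    Measurable (S X f N) :=
  Finset.measurable_fun_sum _ fun i _ => (hf i).comp (hX i)

theorem residueSpread_map_clip (hX : ∀ n, Measurable (X n)) (hf : ∀ n, Measurable (f n))
    (hfK : ∀ n ω, |f n (X n ω)| ≤ (K : ℤ)) {n : ℕ} (hn : n ≠ 0) (m : ℕ) :
    residueSpread (μ.map (X n)) (clip f K n) m = qres μ X f n m := by
  refine congrArg secondLargest (funext fun j => ?_)
  have hres : MeasurableSet {x | (clip f K n x : ZMod m) = j} :=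
    measurable_clip hf K n (MeasurableSet.of_discrete (s := {a : ℤ | (a : ZMod m) = j}))
  rw [map_measureReal_apply (hX n) hres, measureReal_def]
  simp only [Set.preimage_ofPred_eq, clip_of_abs_le hn (hfK n _)]

theorem MN_le_sum_residueSpread (hX : ∀ n, Measurable (X n)) (hf : ∀ n, Measurable (f n))
    (hfK : ∀ n ω, |f n (X n ω)| ≤ (K : ℤ)) {m : ℕ} (N : ℕ) (hm : m ∈ Set.Icc 2 (2 * K)) :
    MN μ X f K N ≤ ∑ n ∈ Finset.Icc 1 N, residueSpread (μ.map (X n)) (clip f K n) m := by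
  refine (csInf_le ⟨0, ?_⟩ (Set.mem_image_of_mem _ hm)).trans_eq (sum_congr rfl fun n hn => ?_)
  · rintro _ ⟨m, -, rfl⟩
    exact sum_nonneg fun n _ => secondLargest_nonneg fun _ => ENNReal.toReal_nonneg
  · have hn0 := Nat.one_le_iff_ne_zero.1 (Finset.mem_Icc.1 hn).1
    exact (residueSpread_map_clip hX hf hfK hn0 m).symm

namespace IsEllipticChain

theorem condProb_S_ae_eq (h : IsEllipticChain μ X C p) (hf : ∀ n, Measurable (f n))
    (hfK : ∀ n ω, |f n (X n ω)| ≤ (K : ℤ)) {N ℓ : ℕ} {j : Fin ℓ → ℕ} (hj : ∀ i, j i ≤ N) (y : E) :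
    ∀ᵐ ω ∂μ, (fun k => condProb μ (sigmaOf X j) {ω | S X f N ω = k} ω) =
      frozenLaw μ X p (clip f K) (univ.image j) N y ω := by
  simp only [S_eq_sum_clip hfK, funext_iff]
  exact ae_all_iff.2 fun k => h.condProb_sum_ae_eq (measurable_clip hf K) hj y k

theorem gibbsVar_eq (h : IsEllipticChain μ X C p) (hf : ∀ n, Measurable (f n))
    (hfK : ∀ n ω, |f n (X n ω)| ≤ (K : ℤ)) (N : ℕ) (y : E) :
    gibbsVar (truncDensity p N) (fun n => μ.map (X n)) (clip f K) K (N + 1) y = VN μ X f N := by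
  have := h.isProbabilityMeasure
  have hS := measurable_S h.measurable hf N
  have hSk : ∀ k : ℤ, MeasurableSet {ω | S X f N ω = k} := fun k => hS (measurableSet_singleton k)
  obtain ⟨ω, hω⟩ := (h.condProb_S_ae_eq (j := Fin.elim0) hf hfK (fun i => i.elim0) y).exists
  have hlaw : (fun k => μ.real {ω | S X f N ω = k}) =
      gibbsLaw (truncDensity p N) (fun n => μ.map (X n)) (clip f K) (N + 1) y := by
    refine Eq.trans (funext fun k => ?_) hω
    rw [sigmaOf, iSup_of_empty, condProb_bot (hSk k)]
  rw [VN, variance_eq_latticeVar hS (S_mem_sumRange hfK N), hlaw, gibbsVar]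

end IsEllipticChain

end PartialSums

theorem exists_condProb_edgeworthApprox (r : ℕ) {K : ℕ} (hK : 1 ≤ K) {C : ℝ} (hC : 1 ≤ C) :
    ∃ R > 0, ∀ ℓ : ℕ, ∃ M B V₀ : ℝ, ∀ (Ω : Type*) (E : Type*) [MeasurableSpace Ω]
      [MeasurableSpace E] (μ : Measure Ω) (X : ℕ → Ω → E) (κ : ℕ → Kernel E E) (f : ℕ → E → ℤ),
      UEChain μ X κ C → (∀ n, Measurable (f n)) → (∀ n ω, |f n (X n ω)| ≤ (K : ℤ)) →
      ∀ N, V₀ ≤ VN μ X f N → R * Real.log (VN μ X f N) ≤ MN μ X f K N →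
      ∀ j : Fin ℓ → ℕ, (∀ i, j i ≤ N) → ∀ᵐ ω ∂μ,
        EdgeworthApprox (fun k => condProb μ (sigmaOf X j) {ω' | S X f N ω' = k} ω)
          ((μ[fun ω' => (S X f N ω' : ℝ) | sigmaOf X j]) ω) (sigN μ X f N) r (3 * r) M B := by
  obtain ⟨R, hR, hgibbs⟩ := exists_gibbsLaw_edgeworthApprox r hK (zero_lt_one.trans_le hC)
  refine ⟨R, hR, fun ℓ => ?_⟩
  obtain ⟨M, B, V₀, hgibbs⟩ := hgibbs ℓ
  refine ⟨M, B, V₀, fun Ω E _ _ μ X κ f hUE hf hfK N hV hM j hj => ?_⟩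
  obtain ⟨p, h⟩ := hUE.exists_isEllipticChain hC
  have := h.isProbabilityMeasure
  have := h.isProbabilityMeasure_map
  obtain ⟨ω₀⟩ : Nonempty Ω := μ.nonempty_of_neZero
  have hvar := h.gibbsVar_eq hf hfK N (X 0 ω₀)
  filter_upwards [h.condProb_S_ae_eq hf hfK hj (X 0 ω₀),
    condExp_ae_eq_latticeMean (m := sigmaOf X j) (measurable_S h.measurable hf N)
      (S_mem_sumRange hfK N)] with ω hlaw hmean
  rw [hmean, hlaw, sigN, ← hvar]
  refine hgibbs E (truncDensity p N) (fun n => μ.map (X n))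
    (pinned (fun n => μ.map (X n)) (univ.image j) (X · ω)) (clip f K) N (X 0 ω₀)
    (univ.image j) (ellipticDensity_truncDensity h.elliptic N) (measurable_clip hf K)
    (abs_clip_le f K) (clip_zero f K) (hV.trans_eq hvar.symm) (fun m hm => ?_)
    (card_image_le.trans_eq (card_fin ℓ)) fun i hi => if_neg hi
  rw [hvar]
  exact hM.trans (MN_le_sum_residueSpread h.measurable hf hfK N (by simpa using hm))

section Expansions

theorem sum_Icc_ite_one {r : ℕ} (hr : 1 ≤ r) (Q : Polynomial ℝ) (s u g : ℝ) :
    ∑ b ∈ Finset.Icc 1 r, s ^ b * (if b = 1 then Q else 0).eval u * g = s * Q.eval u * g := by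
  rw [sum_eq_single_of_mem 1 (Finset.mem_Icc.2 ⟨le_rfl, hr⟩), if_pos rfl, pow_one]
  intro b _ hb
  rw [if_neg hb, Polynomial.eval_zero, mul_zero, zero_mul]

/-- A single polynomial, with coefficients depending on `σ`, carries all orders, so that the
polynomials with index `b ≠ 1` may be taken to be zero. -/
theorem exists_edgeworth_polynomials {ι : Type*} {r : ℕ} (hr : 1 ≤ r) (P : ι → ℤ → ℝ)
    (a σ : ι → ℝ) (D : ℕ) (M B : ℝ) :
    ∃ Q : ℕ → ι → Polynomial ℝ, (∀ b i, (Q b i).natDegree ≤ D) ∧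
      (∀ b i n, |(Q b i).coeff n| ≤ |M|) ∧
      ∀ i, EdgeworthApprox (P i) (a i) (σ i) r D M B → ∀ k : ℤ,
        |P i k - ∑ b ∈ Finset.Icc 1 r, (σ i)⁻¹ ^ b * (Q b i).eval ((k - a i) / σ i) *
          gaussDensity ((k - a i) / σ i)| ≤ B * (σ i)⁻¹ ^ (r + 1) := by
  have hQ : ∀ i, ∃ Q : Polynomial ℝ, Q.natDegree ≤ D ∧ (∀ n, |Q.coeff n| ≤ |M|) ∧
      (EdgeworthApprox (P i) (a i) (σ i) r D M B → ∀ k : ℤ,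
        |P i k - (σ i)⁻¹ * Q.eval ((k - a i) / σ i) * gaussDensity ((k - a i) / σ i)| ≤
          B * (σ i)⁻¹ ^ (r + 1)) := fun i => by
    by_cases h : EdgeworthApprox (P i) (a i) (σ i) r D M B
    · obtain ⟨Q, hD, hM, hB⟩ := h
      exact ⟨Q, hD, fun n => (hM n).trans (le_abs_self M), fun _ => hB⟩
    · exact ⟨0, by simp, by simp, fun h' => absurd h' h⟩
  choose Q hD hM hB using hQ
  refine ⟨fun b i => if b = 1 then Q i else 0, fun b i => ?_, fun b i n => ?_, fun i hi k => ?_⟩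
  · dsimp only; split_ifs <;> simp [hD]
  · dsimp only; split_ifs <;> simp [hM]
  · rw [sum_Icc_ite_one hr]
    exact hB i hi k

theorem eventually_mul_inv_pow_le {σ : ℕ → ℝ} (hσ : Tendsto σ atTop atTop) (c : ℝ) (r : ℕ) {ε : ℝ}
    (hε : 0 < ε) : ∀ᶠ N in atTop, c * (σ N)⁻¹ ^ (r + 1) ≤ ε * (σ N)⁻¹ ^ r := by
  have hlim : Tendsto (fun N => c * (σ N)⁻¹) atTop (𝓝 0) := by
    simpa using hσ.inv_tendsto_atTop.const_mul c
  filter_upwards [hlim.eventually_le_const hε, hσ.eventually_ge_atTop 0] with N hcN hN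
  rw [pow_succ', ← mul_assoc]
  exact mul_le_mul_of_nonneg_right hcN (pow_nonneg (inv_nonneg.2 hN) r)

variable {Ω E : Type*} [MeasurableSpace Ω] {μ : Measure Ω} {X : ℕ → Ω → E} {f : ℕ → E → ℤ}
  {r D : ℕ} {M B : ℝ}

theorem tendsto_sigN (hV : Tendsto (fun N => VN μ X f N) atTop atTop) :
    Tendsto (fun N => sigN μ X f N) atTop atTop := Real.tendsto_sqrt_atTop.comp hV

theorem edgeworth_of_edgeworthApprox (hr : 1 ≤ r)
    (hV : Tendsto (fun N => VN μ X f N) atTop atTop)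
    (H : ∀ᶠ N in atTop, EdgeworthApprox (fun k => μ.real {ω | S X f N ω = k})
      (meanS μ X f N) (sigN μ X f N) r D M B) : Edgeworth μ X f r := by
  obtain ⟨Q, hD, hM, hQ⟩ := exists_edgeworth_polynomials hr
    (fun N k => μ.real {ω | S X f N ω = k}) (meanS μ X f) (sigN μ X f) D M B
  refine ⟨D, |M|, Q, hD, hM, fun ε hε => eventually_atTop.1 ?_⟩
  filter_upwards [H, eventually_mul_inv_pow_le (tendsto_sigN hV) B r hε] with N hN hB k
  exact (hQ N hN k).trans hB

variable [MeasurableSpace E]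

theorem condStableEdgeworth_of_edgeworthApprox (hr : 1 ≤ r)
    (hV : Tendsto (fun N => VN μ X f N) atTop atTop)
    (H : ∀ ℓ : ℕ, ∃ (D : ℕ) (M B : ℝ), ∀ᶠ N in atTop, ∀ j : Fin ℓ → ℕ, (∀ i, j i ≤ N) →
      ∀ᵐ ω ∂μ, EdgeworthApprox (fun k => condProb μ (sigmaOf X j) {ω' | S X f N ω' = k} ω)
        ((μ[fun ω' => (S X f N ω' : ℝ) | sigmaOf X j]) ω) (sigN μ X f N) r D M B) :
    CondStableEdgeworth μ X f r := by
  intro ℓ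
  obtain ⟨D, M, B, hℓ⟩ := H ℓ
  refine ⟨D, |M|, fun ε hε => eventually_atTop.1 ?_⟩
  filter_upwards [hℓ, eventually_mul_inv_pow_le (tendsto_sigN hV) B r hε] with N hN hB j hj
  obtain ⟨Q, hD, hM, hQ⟩ := exists_edgeworth_polynomials hr
    (fun ω k => condProb μ (sigmaOf X j) {ω' | S X f N ω' = k} ω)
    (μ[fun ω' => (S X f N ω' : ℝ) | sigmaOf X j]) (fun _ => sigN μ X f N) D M B
  refine ⟨Q, hD, hM, ?_⟩
  filter_upwards [hN j fun i => (Finset.mem_Icc.1 (hj i)).2] with ω hω k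
  exact (hQ ω hω k).trans hB

theorem edgeworthApprox_of_condProb [IsProbabilityMeasure μ] (hX : ∀ n, Measurable (X n))
    (hf : ∀ n, Measurable (f n)) {N : ℕ} {j : Fin 0 → ℕ} {σ : ℝ}
    (h : ∀ᵐ ω ∂μ, EdgeworthApprox (fun k => condProb μ (sigmaOf X j) {ω' | S X f N ω' = k} ω)
      ((μ[fun ω' => (S X f N ω' : ℝ) | sigmaOf X j]) ω) σ r D M B) :
    EdgeworthApprox (fun k => μ.real {ω | S X f N ω = k}) (meanS μ X f N) σ r D M B := by
  have hS : ∀ k : ℤ, MeasurableSet {ω | S X f N ω = k} := fun k =>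
    measurable_S hX hf N (measurableSet_singleton k)
  obtain ⟨ω, hω⟩ := h.exists
  simpa only [meanS, sigmaOf, iSup_of_empty, condProb_bot (hS _), condExp_bot] using hω

end Expansions

end EdgeworthMC

namespace EdgeworthMC

/-- Theorem 1.2 of the paper, quantitative Prokhorov theorem.
For each `r` there is a constant `R = R(r,K,C)` such that the conditionally stable
Edgeworth expansion of order `r` holds whenever `M_N ≥ R ln V_N` for all `N`.
In particular `S_N` obeys Edgeworth expansions of all orders if `M_N/ln V_N → ∞`. -/
theorem conditionally_stable_edgeworth_of_MN_large :
    ∀ (r K : ℕ), 1 ≤ r → 1 ≤ K → ∀ C : ℝ, 1 < C →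
      ∃ R : ℝ, 0 < R ∧
        ∀ (Ω E : Type) [MeasurableSpace Ω] [MeasurableSpace E]
          (μ : Measure Ω) (X : ℕ → Ω → E) (κ : ℕ → Kernel E E) (f : ℕ → E → ℤ),
          UEChain μ X κ C →
          (∀ n, Measurable (f n)) →
          (∀ n ω, |f n (X n ω)| ≤ (K : ℤ)) →
          Tendsto (fun N => VN μ X f N) atTop atTop →
          ((∀ N, 1 ≤ N → R * Real.log (VN μ X f N) ≤ MN μ X f K N) →
              CondStableEdgeworth μ X f r) ∧
          (Tendsto (fun N => MN μ X f K N / Real.log (VN μ X f N)) atTop atTop →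
              ∀ r' : ℕ, 1 ≤ r' → Edgeworth μ X f r') := by
  intro r K hr hK C hC
  obtain ⟨R, hR, hcond⟩ := exists_condProb_edgeworthApprox r hK hC.le
  refine ⟨R, hR, fun Ω E _ _ μ X κ f h hf hfK hV => ⟨fun hM => ?_, fun hM r' hr' => ?_⟩⟩
  · refine condStableEdgeworth_of_edgeworthApprox hr hV fun ℓ => ?_
    obtain ⟨M, B, V₀, hℓ⟩ := hcond ℓ
    refine ⟨3 * r, M, B, ?_⟩
    filter_upwards [hV.eventually_ge_atTop V₀, eventually_ge_atTop 1] with N hVN hN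
    exact hℓ Ω E μ X κ f h hf hfK N hVN (hM N hN)
  · have := h.1
    obtain ⟨R', -, hcond'⟩ := exists_condProb_edgeworthApprox r' hK hC.le
    obtain ⟨M, B, V₀, h₀⟩ := hcond' 0
    refine edgeworth_of_edgeworthApprox (D := 3 * r') (M := M) (B := B) hr' hV ?_
    filter_upwards [hV.eventually_ge_atTop V₀, hV.eventually_gt_atTop 1,
      hM.eventually_ge_atTop R'] with N hVN hVN1 hMN
    exact edgeworthApprox_of_condProb h.2.1 hf (h₀ Ω E μ X κ f h hf hfK N hVN
      ((le_div_iff₀ (Real.log_pos hVN1)).1 hMN) Fin.elim0 fun i => i.elim0)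

end EdgeworthMC
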